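/- arXiv:1706.03145 — 7 statements merged into one kernel-verified Lean document; each statement's English description precedes it below -/
import Mathlib

section
/- There exists a unique twice continuously differentiable function φ : ℝ → ℝ satisfying −(α/2)φ''(x) + γ'(φ(x)) = 0 for all x ∈ ℝ, lim_{x→−∞} φ(x) = 0, lim_{x→+∞} φ(x) = 1, and φ(0) = 1/2. Moreover φ is strictly increasing, five times continuously differentiable, satisfies φ'(x) = √((4/α)γ(φ(x))) for every x ∈ ℝ, and the pair v := (φ/2, −φ/2) belongs to S₀ and is a global minimizer: E_PN[v] ≤ E_PN[u] for every u ∈ S₀. -/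
/-!
The equation `φ'' = (2/α) γ'(φ)` is Newton's equation, with conserved quantity
`φ'² - (4/α) γ(φ)`. For a profile tending to `1` at `+∞` this quantity is `0`
(`SolvesPN.first_integral`). A critical point of such a profile would therefore lie at an integer
value, and uniqueness for the initial value problem (`SolvesPN.unique`; `γ'` is globally Lipschitz,
being `C¹` and periodic) would make the profile constant. So `φ' > 0` (`SolvesPN.deriv_pos`) and
`φ' = √((4/α) γ(φ))`. In particular `φ(0) = 1/2` determines `φ'(0)`, and uniqueness of the profile
is again uniqueness for the initial value problem.

Existence is by quadrature (`exists_profile`): `φ` is the inverse of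
`T(s) = ∫_{1/2}^s dt / √((4/α) γ(t))` on `(0,1)`, which is onto `ℝ` since `γ` vanishes at least
quadratically at `0` and `1`. Differentiating the first-order equation gives the second-order one,
and bootstrapping the latter gives five derivatives.

For minimality, put `w = u⁺ - u⁻`. The energy density is at least
`(α/4) w'² + γ(w) ≥ √(α γ(w)) |w'|`, whose integral is at least `∫₀¹ √(α γ)` by the chain rule for
a `C¹` function of an absolutely continuous one (`integral_comp_mul`, `energy_lower_S0`). For
`u = (φ/2, -φ/2)` all these inequalities are equalities (`energy_profile`).
-/

noncomputable section
open MeasureTheory Filter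
open scoped ENNReal

/-- A locally `H¹` function on `ℝ`: an absolutely continuous function whose
(weak) derivative `dFun` is locally square integrable. -/
structure LocH1 where
  toFun : ℝ → ℝ
  dFun : ℝ → ℝ
  locInt : LocallyIntegrable dFun volume
  locSq : LocallyIntegrable (fun x => dFun x ^ 2) volume
  ftc : ∀ x : ℝ, toFun x = toFun 0 + ∫ t in (0:ℝ)..x, dFun t

/-- The admissible class `S₀`. -/
def S0 : Set (LocH1 × LocH1) :=
  {u | Tendsto (fun x => u.1.toFun x - u.2.toFun x) atBot (nhds 0) ∧
       Tendsto (fun x => u.1.toFun x - u.2.toFun x) atTop (nhds 1) ∧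
       u.1.toFun 0 = 1/4 ∧ u.2.toFun 0 = -(1/4)}

/-- The Peierls–Nabarro energy, valued in `[0,∞]`. -/
def EPN (α : ℝ) (γ : ℝ → ℝ) (u : LocH1 × LocH1) : ℝ≥0∞ :=
  ∫⁻ x, ENNReal.ofReal (α/2 * u.1.dFun x ^ 2 + α/2 * u.2.dFun x ^ 2 +
    γ (u.1.toFun x - u.2.toFun x))

open Set Topology

/-! ### The profile equation and its regularity -/

/-- The profile equation `φ'' = (2/α) γ'(φ)`. Both derivatives are required to exist through
`HasDerivAt`, so that no junk value of `deriv` is involved; no continuity of `φ''` is asked for, it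
follows from the equation. -/
def SolvesPN (α : ℝ) (γ φ : ℝ → ℝ) : Prop :=
  (∀ x, HasDerivAt φ (deriv φ x) x) ∧ ∀ x, HasDerivAt (deriv φ) (2 / α * deriv γ (φ x)) x

lemma solvesPN_of_contDiff {α : ℝ} (hα : 0 < α) {γ φ : ℝ → ℝ} (hφ : ContDiff ℝ 2 φ)
    (hode : ∀ x : ℝ, -(α/2) * iteratedDeriv 2 φ x + deriv γ (φ x) = 0) : SolvesPN α γ φ := by
  have h1 : ContDiff ℝ 1 (deriv φ) := by
    have : ContDiff ℝ (1 + 1) φ := by simpa [one_add_one_eq_two] using hφ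
    exact (contDiff_succ_iff_deriv.1 this).2.2
  refine ⟨fun x => (hφ.differentiable (by norm_num) x).hasDerivAt, fun x => ?_⟩
  have h2 := (h1.differentiable (by norm_num) x).hasDerivAt
  have h3 := hode x
  rw [iteratedDeriv_succ, iteratedDeriv_one] at h3
  convert! h2 using 1
  field_simp
  linarith

lemma SolvesPN.contDiff {α : ℝ} {γ φ : ℝ → ℝ} (hγ : ContDiff ℝ 4 γ) (h : SolvesPN α γ φ) :
    ContDiff ℝ 5 φ := by
  have hγ' : ContDiff ℝ 3 (deriv γ) := by
    have : ContDiff ℝ (3 + 1) γ := by convert hγ using 1; norm_num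
    exact (contDiff_succ_iff_deriv.1 this).2.2
  -- The equation gains two derivatives as long as `γ' ∘ φ` is as smooth as `φ`.
  have up : ∀ n : ℕ, n ≤ 3 → ContDiff ℝ n φ → ContDiff ℝ ((n + 2 : ℕ)) φ := by
    intro n hn hφ
    have e : deriv (deriv φ) = fun x => 2 / α * deriv γ (φ x) := funext fun x => (h.2 x).deriv
    have h2 : ContDiff ℝ n (deriv (deriv φ)) := by
      rw [e]
      exact contDiff_const.mul ((hγ'.of_le (by exact_mod_cast hn)).comp hφ)
    have h3 : ContDiff ℝ (n + 1) (deriv φ) :=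
      contDiff_succ_iff_deriv.2 ⟨fun x => (h.2 x).differentiableAt, by simp, h2⟩
    have h4 : ContDiff ℝ ((n + 1) + 1) φ :=
      contDiff_succ_iff_deriv.2 ⟨fun x => (h.1 x).differentiableAt, by simp, h3⟩
    convert h4 using 1
    push_cast
    rw [add_assoc, one_add_one_eq_two]
  have c1 : ContDiff ℝ ((1 : ℕ)) φ := by
    rw [Nat.cast_one, contDiff_one_iff_deriv]
    exact ⟨fun x => (h.1 x).differentiableAt,
      continuous_iff_continuousAt.2 fun x => (h.2 x).continuousAt⟩
  exact up 3 le_rfl (up 1 (by norm_num) c1)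

/-! ### Bounds on the potential -/

lemma bounded_of_periodic {f : ℝ → ℝ} (hf : Continuous f) (hp : ∀ x, f (x + 1) = f x) :
    ∃ M : ℝ, 0 ≤ M ∧ ∀ x, |f x| ≤ M := by
  obtain ⟨M, hM⟩ := (isCompact_Icc (a := (0:ℝ)) (b := 1)).exists_bound_of_continuousOn
    hf.continuousOn
  have hM' : ∀ x, |f x| ≤ M := by
    intro x
    obtain ⟨y, hy, e⟩ := Function.Periodic.exists_mem_Ico₀ (f := f) (c := 1) hp one_pos x
    rw [e]
    exact hM y (Ico_subset_Icc_self hy)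
  exact ⟨M, (abs_nonneg _).trans (hM' 0), hM'⟩

lemma deriv_add_one {f : ℝ → ℝ} (hp : ∀ x, f (x + 1) = f x) (x : ℝ) :
    deriv f (x + 1) = deriv f x := by
  rw [← deriv_comp_add_const f 1 x]
  exact congrArg (fun g => deriv g x) (funext hp)

/-- `γ'` is globally Lipschitz, its derivative being continuous and periodic. -/
lemma exists_lipschitz_deriv {γ : ℝ → ℝ} (hγ : ContDiff ℝ 4 γ) (hp : ∀ x, γ (x + 1) = γ x) :
    ∃ K : NNReal, LipschitzWith K (deriv γ) := by
  have hγ' : ContDiff ℝ 1 (deriv γ) := by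
    have : ContDiff ℝ (1 + 1) γ := hγ.of_le (by norm_num)
    exact (contDiff_succ_iff_deriv.1 this).2.2
  obtain ⟨M, hM0, hM⟩ := bounded_of_periodic (hγ'.continuous_deriv (by norm_num))
    (deriv_add_one (deriv_add_one hp))
  refine ⟨⟨M, hM0⟩, lipschitzWith_of_nnnorm_deriv_le (hγ'.differentiable (by norm_num)) fun x => ?_⟩
  exact hM x

/-- A zero of the nonnegative `γ` is a minimum, hence a critical point. -/
lemma deriv_eq_zero_of_zero {γ : ℝ → ℝ} (hγnn : ∀ ξ : ℝ, 0 ≤ γ ξ) {s : ℝ} (hs : γ s = 0) :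
    deriv γ s = 0 := by
  have : IsLocalMin γ s := Eventually.of_forall fun x => by rw [hs]; exact hγnn x
  exact this.deriv_eq_zero

/-- At a zero `s₀` the potential vanishes to second order. -/
lemma le_quadratic {γ : ℝ → ℝ} (hd : Differentiable ℝ γ) (hγnn : ∀ ξ : ℝ, 0 ≤ γ ξ) {K : NNReal}
    (hK : LipschitzWith K (deriv γ)) {s₀ : ℝ} (hs₀ : γ s₀ = 0) (s : ℝ) :
    γ s ≤ K * (s - s₀) ^ 2 := by
  have h1 : ∀ x ∈ uIcc s₀ s, ‖deriv γ x‖ ≤ K * |s - s₀| := by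
    intro x hx
    have := hK.dist_le_mul x s₀
    rw [deriv_eq_zero_of_zero hγnn hs₀, dist_zero_right, Real.dist_eq] at this
    exact this.trans (mul_le_mul_of_nonneg_left (abs_sub_left_of_mem_uIcc hx) K.2)
  have h2 := (convex_uIcc s₀ s).norm_image_sub_le_of_norm_deriv_le (fun x _ => hd x) h1
    left_mem_uIcc right_mem_uIcc
  rw [hs₀, sub_zero, Real.norm_eq_abs, Real.norm_eq_abs, mul_assoc, abs_mul_abs_self] at h2
  nlinarith [le_abs_self (γ s)]

/-! ### Uniqueness, first integral and monotonicity -/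

/-- Uniqueness for the initial value problem, seen as a first-order system for `(φ, φ')` with
globally Lipschitz right-hand side. -/
lemma SolvesPN.unique {α : ℝ} {γ φ ψ : ℝ → ℝ} {K : NNReal} (hK : LipschitzWith K (deriv γ))
    (hφ : SolvesPN α γ φ) (hψ : SolvesPN α γ ψ) {x₀ : ℝ} (h0 : φ x₀ = ψ x₀)
    (h1 : deriv φ x₀ = deriv ψ x₀) : φ = ψ := by
  have hv : LipschitzWith (max 1 (‖2 / α‖₊ * K * 1))
      (fun p : ℝ × ℝ => (p.2, 2 / α * deriv γ p.1)) := by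
    refine LipschitzWith.prodMk LipschitzWith.prod_snd ?_
    have : LipschitzWith (‖2 / α‖₊ * K) fun s => 2 / α * deriv γ s :=
      LipschitzWith.of_dist_le_mul fun x y => by
        have := hK.dist_le_mul x y
        rw [Real.dist_eq] at this ⊢
        rw [← mul_sub, abs_mul, NNReal.coe_mul, mul_assoc]
        exact mul_le_mul_of_nonneg_left this (abs_nonneg _)
    exact this.comp LipschitzWith.prod_fst
  have key := ODE_solution_unique_univ (v := fun _ p => (p.2, 2 / α * deriv γ p.1))
    (s := fun _ => univ) (f := fun x => (φ x, deriv φ x)) (g := fun x => (ψ x, deriv ψ x))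
    (t₀ := x₀) (fun _ => hv.lipschitzOnWith)
    (fun t => ⟨(hφ.1 t).prodMk (hφ.2 t), mem_univ _⟩)
    (fun t => ⟨(hψ.1 t).prodMk (hψ.2 t), mem_univ _⟩) (by simp [h0, h1])
  exact funext fun x => congrArg Prod.fst (congrFun key x)

/-- Conservation of energy: `φ'² - (4/α) γ(φ)` is constant, and the constant is `0` because
`φ → 1` at `+∞` forces `φ'` to be small along a sequence going to `+∞`. -/
lemma SolvesPN.first_integral {α : ℝ} {γ φ : ℝ → ℝ} (hd : Differentiable ℝ γ) (h1 : γ 1 = 0)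
    (h : SolvesPN α γ φ) (ht : Tendsto φ atTop (𝓝 1)) (x : ℝ) :
    deriv φ x ^ 2 = 4 / α * γ (φ x) := by
  set E : ℝ → ℝ := fun x => deriv φ x ^ 2 - 4 / α * γ (φ x) with hE
  have hE' : ∀ x, HasDerivAt E 0 x := by
    intro x
    have a := ((h.2 x).pow 2).sub (((hd (φ x)).hasDerivAt.comp x (h.1 x)).const_mul (4 / α))
    convert! a using 1
    simp
    ring
  have hc : ∀ y, E y = E x := fun y =>
    is_const_of_deriv_eq_zero (fun z => (hE' z).differentiableAt) (fun z => (hE' z).deriv) y x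
  have hmvt : ∀ n : ℕ, ∃ c ∈ Ioo (n : ℝ) (n + 1), deriv φ c = φ (n + 1) - φ n := by
    intro n
    obtain ⟨c, hc, e⟩ := exists_deriv_eq_slope φ (show (n : ℝ) < n + 1 by linarith)
      (fun z _ => (h.1 z).continuousAt.continuousWithinAt)
      (fun z _ => (h.1 z).differentiableAt.differentiableWithinAt)
    exact ⟨c, hc, by rw [e]; ring⟩
  choose c hcm hce using hmvt
  have hcn : Tendsto c atTop atTop :=
    tendsto_atTop_mono (fun n => (hcm n).1.le) tendsto_natCast_atTop_atTop
  have l1 : Tendsto (fun n => deriv φ (c n)) atTop (𝓝 0) := by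
    have a : Tendsto (fun n : ℕ => φ ((n : ℝ) + 1) - φ n) atTop (𝓝 (1 - 1)) :=
      (ht.comp (tendsto_atTop_add_const_right _ 1 tendsto_natCast_atTop_atTop)).sub
        (ht.comp tendsto_natCast_atTop_atTop)
    simpa [hce] using a
  have l2 : Tendsto (fun n => E (c n)) atTop (𝓝 (0 ^ 2 - 4 / α * γ 1)) :=
    (l1.pow 2).sub ((((hd 1).continuousAt.tendsto.comp ht).comp hcn).const_mul _)
  have l3 : Tendsto (fun n => E (c n)) atTop (𝓝 (E x)) := by
    simp only [hc]; exact tendsto_const_nhds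
  have := tendsto_nhds_unique l3 l2
  rw [h1] at this
  simp only [hE] at this
  linarith

/-- A layer profile has no critical point; as it goes from `1/2` to `1` it must increase. -/
lemma SolvesPN.deriv_pos {α : ℝ} {γ φ : ℝ → ℝ} (hα : 0 < α) (hd : Differentiable ℝ γ)
    (hγnn : ∀ ξ : ℝ, 0 ≤ γ ξ) (hγzero : ∀ ξ : ℝ, γ ξ = 0 ↔ ∃ n : ℤ, ξ = (n : ℝ))
    {K : NNReal} (hK : LipschitzWith K (deriv γ)) (h : SolvesPN α γ φ)
    (ht : Tendsto φ atTop (𝓝 1)) (h0 : φ 0 = 1 / 2) (x : ℝ) : 0 < deriv φ x := by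
  have hfi := h.first_integral hd ((hγzero 1).2 ⟨1, by simp⟩) ht
  -- A critical point of `φ` would sit at an integer value, and by uniqueness for the initial
  -- value problem `φ` would be constant.
  have hne : ∀ y, deriv φ y ≠ 0 := by
    intro y hy
    have hz : γ (φ y) = 0 := by
      have := hfi y
      rw [hy] at this
      have h4 : 4 / α ≠ 0 := by positivity
      simpa [h4] using this.symm
    obtain ⟨n, hn⟩ := (hγzero _).1 hz
    have hcst : SolvesPN α γ (fun _ => φ y) := by
      refine ⟨fun z => by simpa using hasDerivAt_const z (φ y), fun z => ?_⟩
      simp only [deriv_const', deriv_eq_zero_of_zero hγnn hz, mul_zero]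
      exact hasDerivAt_const z 0
    have e := h.unique hK hcst (x₀ := y) rfl (by simpa using hy)
    have e0 := congrFun e 0
    simp only [h0, hn] at e0
    have : (1 : ℝ) = 2 * n := by linarith
    have : (1 : ℤ) = 2 * n := by exact_mod_cast this
    omega
  have hcont : Continuous (deriv φ) := continuous_iff_continuousAt.2 fun x => (h.2 x).continuousAt
  by_contra hx
  have hx : deriv φ x < 0 := lt_of_le_of_ne (not_lt.1 hx) (hne x)
  have hneg : ∀ y, deriv φ y < 0 := by
    intro y
    by_contra hy
    obtain ⟨z, hz⟩ := mem_range_of_exists_le_of_exists_ge hcont ⟨x, hx.le⟩ ⟨y, not_lt.1 hy⟩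
    exact hne z hz
  have hanti : Antitone φ := antitone_of_deriv_nonpos (fun z => (h.1 z).differentiableAt)
    fun z => (hneg z).le
  have := hanti.le_of_tendsto ht 0
  rw [h0] at this
  norm_num at this

/-! ### Construction of a profile by quadrature -/

/-- The autonomous equation `φ' = g(φ)` has a solution joining `0` to `1` through `1/2` at `0`
when `g` is positive on `(0,1)` and vanishes at least linearly at both ends: the travel time
`T(s) = ∫_{1/2}^s dt / g(t)` then maps `(0,1)` increasingly onto `ℝ`, and `φ = T⁻¹`. -/
lemma exists_profile {g : ℝ → ℝ} (hg : Continuous g) (hpos : ∀ s ∈ Ioo (0:ℝ) 1, 0 < g s)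
    {L : ℝ} (hL : 0 < L) (h0 : ∀ s ∈ Ioo (0:ℝ) 1, g s ≤ L * s)
    (h1 : ∀ s ∈ Ioo (0:ℝ) 1, g s ≤ L * (1 - s)) :
    ∃ φ : ℝ → ℝ, (∀ x, φ x ∈ Ioo (0:ℝ) 1) ∧ φ 0 = 1 / 2 ∧ (∀ x, HasDerivAt φ (g (φ x)) x) ∧
      Tendsto φ atBot (𝓝 0) ∧ Tendsto φ atTop (𝓝 1) := by
  have hhalf : (1 / 2 : ℝ) ∈ Ioo (0:ℝ) 1 := by norm_num
  set T : ℝ → ℝ := fun s => ∫ t in (1 / 2 : ℝ)..s, (g t)⁻¹ with hT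
  have hcon : ContinuousOn (fun t => (g t)⁻¹) (Ioo (0:ℝ) 1) :=
    hg.continuousOn.inv₀ fun s hs => (hpos s hs).ne'
  have hTd : ∀ s ∈ Ioo (0:ℝ) 1, HasDerivAt T (g s)⁻¹ s := by
    intro s hs
    refine intervalIntegral.integral_hasDerivAt_right ?_ ?_ ?_
    · exact (hcon.mono (ordConnected_Ioo.uIcc_subset hhalf hs)).intervalIntegrable
    · exact hcon.stronglyMeasurableAtFilter isOpen_Ioo s hs
    · exact hcon.continuousAt (isOpen_Ioo.mem_nhds hs)
  have hTc : ContinuousOn T (Ioo (0:ℝ) 1) := fun s hs => (hTd s hs).continuousAt.continuousWithinAt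
  have hTm : StrictMonoOn T (Ioo (0:ℝ) 1) := by
    refine strictMonoOn_of_deriv_pos (convex_Ioo 0 1) hTc fun s hs => ?_
    rw [interior_Ioo] at hs
    rw [(hTd s hs).deriv]
    exact inv_pos.2 (hpos s hs)
  have hT0 : T (1 / 2) = 0 := by simp [hT]
  -- `T(s) - L⁻¹ log s` and `T(s) + L⁻¹ log (1 - s)` are nondecreasing, so `T` diverges at both ends.
  have hlo : ∀ y : ℝ, ∃ s ∈ Ioo (0:ℝ) 1, T s ≤ y := by
    intro y
    have hm : MonotoneOn (fun s => T s - L⁻¹ * Real.log s) (Ioo (0:ℝ) 1) := by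
      have hd : ∀ s ∈ Ioo (0:ℝ) 1,
          HasDerivAt (fun s => T s - L⁻¹ * Real.log s) ((g s)⁻¹ - L⁻¹ * s⁻¹) s := fun s hs =>
        (hTd s hs).sub ((Real.hasDerivAt_log hs.1.ne').const_mul _)
      refine monotoneOn_of_deriv_nonneg (convex_Ioo 0 1)
        (fun s hs => (hd s hs).continuousAt.continuousWithinAt) ?_ ?_ <;> rw [interior_Ioo]
      · exact fun s hs => (hd s hs).differentiableAt.differentiableWithinAt
      · intro s hs
        rw [(hd s hs).deriv, ← mul_inv, sub_nonneg]
        exact inv_anti₀ (hpos s hs) (h0 s hs)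
    have he : Real.exp (-(L * |y|)) ≤ 1 := Real.exp_le_one_iff.2 (by simp; positivity)
    have hp := Real.exp_pos (-(L * |y|))
    have hs : 1 / 2 * Real.exp (-(L * |y|)) ∈ Ioo (0:ℝ) 1 := ⟨by positivity, by linarith⟩
    refine ⟨_, hs, ?_⟩
    have := hm hs hhalf (by linarith)
    simp only [hT0] at this
    rw [Real.log_mul (by norm_num) hp.ne', Real.log_exp, mul_add] at this
    have e : L⁻¹ * -(L * |y|) = -|y| := by field_simp
    rw [e] at this
    linarith [neg_abs_le y]
  have hhi : ∀ y : ℝ, ∃ s ∈ Ioo (0:ℝ) 1, y ≤ T s := by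
    intro y
    have hm : MonotoneOn (fun s => T s + L⁻¹ * Real.log (1 - s)) (Ioo (0:ℝ) 1) := by
      have hd : ∀ s ∈ Ioo (0:ℝ) 1, HasDerivAt (fun s => T s + L⁻¹ * Real.log (1 - s))
          ((g s)⁻¹ + L⁻¹ * (-1 / (1 - s))) s := fun s hs =>
        (hTd s hs).add
          ((((hasDerivAt_id s).const_sub 1).log (sub_pos.2 hs.2).ne').const_mul _)
      refine monotoneOn_of_deriv_nonneg (convex_Ioo 0 1)
        (fun s hs => (hd s hs).continuousAt.continuousWithinAt) ?_ ?_ <;> rw [interior_Ioo]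
      · exact fun s hs => (hd s hs).differentiableAt.differentiableWithinAt
      · intro s hs
        have := inv_anti₀ (hpos s hs) (h1 s hs)
        rw [mul_inv] at this
        rw [(hd s hs).deriv, neg_div, one_div]
        linarith
    have he : Real.exp (-(L * |y|)) ≤ 1 := Real.exp_le_one_iff.2 (by simp; positivity)
    have hp := Real.exp_pos (-(L * |y|))
    have hs : 1 - 1 / 2 * Real.exp (-(L * |y|)) ∈ Ioo (0:ℝ) 1 := ⟨by linarith, by linarith⟩
    refine ⟨_, hs, ?_⟩
    have := hm hhalf hs (by linarith)
    simp only [hT0] at this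
    rw [sub_sub_cancel, Real.log_mul (by norm_num) hp.ne', Real.log_exp, mul_add] at this
    have e : L⁻¹ * -(L * |y|) = -|y| := by field_simp
    rw [e] at this
    norm_num at this ⊢
    linarith [le_abs_self y]
  have hsurj : ∀ y : ℝ, ∃ s ∈ Ioo (0:ℝ) 1, T s = y := by
    intro y
    obtain ⟨a, ha, hay⟩ := hlo y
    obtain ⟨b, hb, hyb⟩ := hhi y
    exact isPreconnected_Ioo.intermediate_value ha hb hTc ⟨hay, hyb⟩
  choose φ hφm hφT using hsurj
  have hφinv : ∀ s ∈ Ioo (0:ℝ) 1, φ (T s) = s := fun s hs =>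
    hTm.injOn (hφm _) hs (hφT _)
  have hmono : Monotone φ := fun x y hxy =>
    (hTm.le_iff_le (hφm x) (hφm y)).1 (by rwa [hφT, hφT])
  have hrange : range φ = Ioo (0:ℝ) 1 :=
    Subset.antisymm (range_subset_iff.2 hφm) fun s hs => ⟨T s, hφinv s hs⟩
  have hφc : ∀ x, ContinuousAt φ x := fun x =>
    continuousAt_of_monotoneOn_of_image_mem_nhds (s := univ) (hmono.monotoneOn _) univ_mem
      (by rw [image_univ, hrange]; exact isOpen_Ioo.mem_nhds (hφm x))
  refine ⟨φ, hφm, ?_, fun x => ?_, ?_, ?_⟩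
  · rw [← hT0]; exact hφinv _ hhalf
  · have := HasDerivAt.of_local_left_inverse (hφc x) (hTd _ (hφm x))
      (inv_pos.2 (hpos _ (hφm x))).ne' (Eventually.of_forall hφT)
    simpa using this
  · refine tendsto_atBot_isGLB hmono ?_
    rw [hrange]; exact isGLB_Ioo one_pos
  · refine tendsto_atTop_isLUB hmono ?_
    rw [hrange]; exact isLUB_Ioo one_pos

/-! ### The energy -/

/-- Chain rule for the composition of a `C¹` function having bounded derivative `h` with an
absolutely continuous function `w` of derivative `p`, in integrated form. -/
lemma integral_comp_mul {h w p : ℝ → ℝ} (hh : Continuous h) {M : ℝ} (hM : ∀ s, |h s| ≤ M)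
    (hp : LocallyIntegrable p volume) (hw : ∀ x, w x = w 0 + ∫ t in (0:ℝ)..x, p t) (a b : ℝ) :
    ∫ x in a..b, h (w x) * p x = (∫ s in (0:ℝ)..w b, h s) - ∫ s in (0:ℝ)..w a, h s := by
  have hM0 : 0 ≤ M := (abs_nonneg _).trans (hM 0)
  set G : ℝ → ℝ := fun s => ∫ t in (0:ℝ)..s, h t with hG
  have hGd : ∀ s, HasDerivAt G (h s) s := fun s => hh.integral_hasStrictDerivAt 0 s |>.hasDerivAt
  have hGL : LipschitzWith ⟨M, hM0⟩ G :=
    lipschitzWith_of_nnnorm_deriv_le (fun s => (hGd s).differentiableAt) fun s => by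
      rw [(hGd s).deriv]; exact hM s
  have hpi : ∀ x y, IntervalIntegrable p volume x y := fun x y =>
    intervalIntegrable_iff.mpr
      ((hp.integrableOn_isCompact isCompact_uIcc).mono_set uIoc_subset_uIcc)
  have hw' : ∀ x, w x = w a + ∫ t in a..x, p t := fun x => by
    rw [hw x, hw a, add_assoc, intervalIntegral.integral_add_adjacent_intervals (hpi _ _) (hpi _ _)]
  have hwac : AbsolutelyContinuousOnInterval w a b := by
    have := (hpi a b).absolutelyContinuousOnInterval_intervalIntegral (c := a) left_mem_uIcc
    have h2 := (LipschitzWith.const (w a)).lipschitzOnWith (s := uIcc a b)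
      |>.absolutelyContinuousOnInterval.add this
    convert! h2 using 1
    exact funext hw'
  have hGac : AbsolutelyContinuousOnInterval (G ∘ w) a b := by
    refine squeeze_zero (fun t => Finset.sum_nonneg fun i _ => dist_nonneg) (fun t => ?_)
      (by simpa using Tendsto.const_mul M hwac)
    rw [Finset.mul_sum]
    exact Finset.sum_le_sum fun i _ => hGL.dist_le_mul _ _
  change _ = (G ∘ w) b - (G ∘ w) a
  rw [← hGac.integral_deriv_eq_sub]
  apply intervalIntegral.integral_congr_ae
  filter_upwards [LocallyIntegrable.ae_hasDerivAt_integral hp] with x hx _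
  have hwx : HasDerivAt w (p x) x := by
    have := (hx 0).const_add (w 0)
    convert! this using 1
    exact funext hw
  exact ((hGd (w x)).comp x hwx).deriv.symm

/-- The energy density dominates `√(α γ(w)) |w'|` for `w = u⁺ - u⁻`: arithmetic-geometric mean
inequality, after `p² + q² ≥ (p - q)² / 2`. -/
lemma lower_bound_pointwise {α c p q : ℝ} (hα : 0 < α) (hc : 0 ≤ c) :
    √(α * c) * |p - q| ≤ α / 2 * p ^ 2 + α / 2 * q ^ 2 + c := by
  have h1 : √(α * c) ^ 2 = α * c := Real.sq_sqrt (by positivity)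
  rw [Real.sqrt_mul hα.le] at *
  have ha : √α ^ 2 = α := Real.sq_sqrt hα.le
  have hc2 : √c ^ 2 = c := Real.sq_sqrt hc
  have h2 : |p - q| ^ 2 = (p - q) ^ 2 := sq_abs _
  have h3 := sq_nonneg (√c - √α * |p - q| / 2)
  have h4 : 0 ≤ α / 4 * (p + q) ^ 2 := by positivity
  nlinarith [congrArg (fun z => z * (p - q) ^ 2) ha, congrArg (fun z => √α ^ 2 * z) h2]

/-- Modica-type lower bound: the energy is at least the increment over `[a, b]` of `G(u⁺ - u⁻)`,
where `G' = √(α γ)`. -/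
lemma energy_lower {α : ℝ} (hα : 0 < α) {γ : ℝ → ℝ} (hγ : Continuous γ)
    (hγnn : ∀ ξ : ℝ, 0 ≤ γ ξ) {M : ℝ} (hM : ∀ s, |√(α * γ s)| ≤ M) (u : LocH1 × LocH1)
    {a b : ℝ} (hab : a ≤ b) :
    ENNReal.ofReal ((∫ s in (0:ℝ)..(u.1.toFun b - u.2.toFun b), √(α * γ s)) -
      ∫ s in (0:ℝ)..(u.1.toFun a - u.2.toFun a), √(α * γ s)) ≤ EPN α γ u := by
  have hi : ∀ v : LocH1, ∀ x y, IntervalIntegrable v.dFun volume x y := fun v x y =>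
    intervalIntegrable_iff.mpr
      ((v.locInt.integrableOn_isCompact isCompact_uIcc).mono_set uIoc_subset_uIcc)
  set w : ℝ → ℝ := fun x => u.1.toFun x - u.2.toFun x with hw
  set p : ℝ → ℝ := fun x => u.1.dFun x - u.2.dFun x with hp
  have hpl : LocallyIntegrable p volume := u.1.locInt.sub u.2.locInt
  have hftc : ∀ x, w x = w 0 + ∫ t in (0:ℝ)..x, p t := by
    intro x
    simp only [hw, hp]
    rw [u.1.ftc x, u.2.ftc x, intervalIntegral.integral_sub (hi _ _ _) (hi _ _ _)]
    ring
  have hh : Continuous fun s => √(α * γ s) := by fun_prop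
  have hwc : Continuous w := by
    have hpi : ∀ x y, IntervalIntegrable p volume x y := fun x y => (hi _ x y).sub (hi _ x y)
    have := (intervalIntegral.continuous_primitive hpi 0).const_add (w 0)
    convert! this using 1
    exact funext hftc
  have key := integral_comp_mul hh hM hpl hftc a b
  have hint : IntegrableOn (fun x => √(α * γ (w x)) * |p x|) (Ioc a b) volume := by
    have : IntervalIntegrable p volume a b := (hi _ a b).sub (hi _ a b)
    have := this.abs.continuousOn_mul (hh.comp hwc).continuousOn
    exact (intervalIntegrable_iff_integrableOn_Ioc_of_le hab).1 this
  calc ENNReal.ofReal _ = ENNReal.ofReal (∫ x in a..b, √(α * γ (w x)) * p x) := by rw [key]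
    _ ≤ ENNReal.ofReal (∫ x in Ioc a b, √(α * γ (w x)) * |p x|) := by
        refine ENNReal.ofReal_le_ofReal ?_
        rw [intervalIntegral.integral_of_le hab]
        have hn := norm_integral_le_integral_norm (μ := volume.restrict (Ioc a b))
          fun x => √(α * γ (w x)) * p x
        simp only [norm_mul, Real.norm_eq_abs, abs_of_nonneg (Real.sqrt_nonneg _)] at hn
        exact (le_abs_self _).trans hn
    _ = ∫⁻ x in Ioc a b, ENNReal.ofReal (√(α * γ (w x)) * |p x|) :=
        ofReal_integral_eq_lintegral_ofReal hint
          (Eventually.of_forall fun x => mul_nonneg (Real.sqrt_nonneg _) (abs_nonneg _))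
    _ ≤ ∫⁻ x, ENNReal.ofReal (√(α * γ (w x)) * |p x|) := setLIntegral_le_lintegral _ _
    _ ≤ EPN α γ u := lintegral_mono fun x =>
        ENNReal.ofReal_le_ofReal (lower_bound_pointwise hα (hγnn _))

/-- The energy of an admissible pair is at least `∫₀¹ √(α γ)`. -/
lemma energy_lower_S0 {α : ℝ} (hα : 0 < α) {γ : ℝ → ℝ} (hγ : Continuous γ)
    (hγnn : ∀ ξ : ℝ, 0 ≤ γ ξ) {M : ℝ} (hM : ∀ s, |√(α * γ s)| ≤ M) {u : LocH1 × LocH1}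
    (hu : u ∈ S0) : ENNReal.ofReal (∫ s in (0:ℝ)..1, √(α * γ s)) ≤ EPN α γ u := by
  have hh : Continuous fun s => √(α * γ s) := by fun_prop
  have hG : Continuous fun s => ∫ t in (0:ℝ)..s, √(α * γ t) :=
    intervalIntegral.continuous_primitive (fun x y => hh.intervalIntegrable x y) 0
  have l1 := (hG.tendsto 1).comp hu.2.1
  have l0 := (hG.tendsto 0).comp (hu.1.comp tendsto_neg_atTop_atBot)
  have l := ENNReal.tendsto_ofReal (l1.sub l0)
  simp only [intervalIntegral.integral_same, sub_zero] at l
  refine le_of_tendsto l ?_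
  filter_upwards [eventually_ge_atTop 0] with x hx
  exact energy_lower hα hγ hγnn hM u (neg_le_self hx)

/-- On a solution of the first-order equation the arithmetic-geometric mean inequality is an
equality, so its energy is exactly `∫₀¹ √(α γ)`. -/
lemma energy_profile {α : ℝ} (hα : 0 < α) {γ : ℝ → ℝ} (hγ : Continuous γ)
    (hγnn : ∀ ξ : ℝ, 0 ≤ γ ξ) {M : ℝ} (hM : ∀ s, |√(α * γ s)| ≤ M) {φ : ℝ → ℝ}
    (hφ : ∀ x, HasDerivAt φ (deriv φ x) x) (hφc : Continuous (deriv φ))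
    (hode : ∀ x, deriv φ x = √(4 / α * γ (φ x)))
    (hbot : Tendsto φ atBot (𝓝 0)) (htop : Tendsto φ atTop (𝓝 1)) {v : LocH1 × LocH1}
    (hv1 : ∀ x, v.1.dFun x = deriv φ x / 2) (hv2 : ∀ x, v.2.dFun x = -deriv φ x / 2)
    (hv : ∀ x, v.1.toFun x - v.2.toFun x = φ x) :
    EPN α γ v = ENNReal.ofReal (∫ s in (0:ℝ)..1, √(α * γ s)) := by
  have hh : Continuous fun s => √(α * γ s) := by fun_prop
  have hφcont : Continuous φ := continuous_iff_continuousAt.2 fun x => (hφ x).continuousAt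
  have e : ∀ x, α / 2 * v.1.dFun x ^ 2 + α / 2 * v.2.dFun x ^ 2 + γ (v.1.toFun x - v.2.toFun x)
      = √(α * γ (φ x)) * deriv φ x := by
    intro x
    have h0 := hγnn (φ x)
    have h1 : deriv φ x ^ 2 = 4 / α * γ (φ x) := by
      rw [hode, Real.sq_sqrt (by positivity)]
    have h2 : √(α * γ (φ x)) * deriv φ x = 2 * γ (φ x) := by
      rw [hode, ← Real.sqrt_mul (by positivity),
        show α * γ (φ x) * (4 / α * γ (φ x)) = (2 * γ (φ x)) ^ 2 by field_simp; ring,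
        Real.sqrt_sq (by positivity)]
    rw [hv1, hv2, hv, h2]
    have : α / 2 * (deriv φ x / 2) ^ 2 + α / 2 * (-deriv φ x / 2) ^ 2 = α / 4 * deriv φ x ^ 2 := by
      ring
    rw [this, h1]
    field_simp
    ring
  unfold EPN
  simp only [e]
  have hcI : Continuous fun x => √(α * γ (φ x)) * deriv φ x := (hh.comp hφcont).mul hφc
  have cover : AECover volume atTop fun x : ℝ => Ioc (-x) x :=
    aecover_Ioc tendsto_neg_atTop_atBot tendsto_id
  have t1 := cover.lintegral_tendsto_of_countably_generated
    (f := fun x => ENNReal.ofReal (√(α * γ (φ x)) * deriv φ x))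
    (hcI.measurable.ennreal_ofReal.aemeasurable)
  refine tendsto_nhds_unique t1 ?_
  have hG : Continuous fun s => ∫ t in (0:ℝ)..s, √(α * γ t) :=
    intervalIntegral.continuous_primitive (fun x y => hh.intervalIntegrable x y) 0
  have l1 := (hG.tendsto 1).comp htop
  have l0 := (hG.tendsto 0).comp (hbot.comp tendsto_neg_atTop_atBot)
  have l := ENNReal.tendsto_ofReal (l1.sub l0)
  simp only [intervalIntegral.integral_same, sub_zero] at l
  refine l.congr' ?_
  filter_upwards [eventually_ge_atTop 0] with x hx
  have hftc : ∀ x, φ x = φ 0 + ∫ t in (0:ℝ)..x, deriv φ t := fun x => by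
    rw [intervalIntegral.integral_eq_sub_of_hasDerivAt (fun y _ => hφ y)
      (hφc.intervalIntegrable _ _)]
    ring
  have key := integral_comp_mul hh hM hφc.locallyIntegrable hftc (-x) x
  simp only [Function.comp_apply]
  rw [← key, intervalIntegral.integral_of_le (neg_le_self hx)]
  refine ofReal_integral_eq_lintegral_ofReal ?_ (Eventually.of_forall fun y => ?_)
  · exact (intervalIntegrable_iff_integrableOn_Ioc_of_le (neg_le_self hx)).1
      (hcI.intervalIntegrable _ _)
  · exact mul_nonneg (Real.sqrt_nonneg _) (by rw [hode]; exact Real.sqrt_nonneg _)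

/-! ### Existence, uniqueness and minimality of the layer profile -/

theorem stmt0 (α : ℝ) (hα : 0 < α) (γ : ℝ → ℝ) (hγreg : ContDiff ℝ 4 γ)
    (hγeven : ∀ ξ : ℝ, γ (-ξ) = γ ξ) (hγper : ∀ ξ : ℝ, γ (ξ + 1) = γ ξ)
    (hγnn : ∀ ξ : ℝ, 0 ≤ γ ξ) (hγzero : ∀ ξ : ℝ, γ ξ = 0 ↔ ∃ n : ℤ, ξ = (n : ℝ))
    (hγ'' : 0 < iteratedDeriv 2 γ 0) :
    (∃! φ : ℝ → ℝ, ContDiff ℝ 2 φ ∧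
        (∀ x : ℝ, -(α/2) * iteratedDeriv 2 φ x + deriv γ (φ x) = 0) ∧
        Tendsto φ atBot (nhds 0) ∧ Tendsto φ atTop (nhds 1) ∧ φ 0 = 1/2) ∧
    (∀ φ : ℝ → ℝ,
      (ContDiff ℝ 2 φ ∧
        (∀ x : ℝ, -(α/2) * iteratedDeriv 2 φ x + deriv γ (φ x) = 0) ∧
        Tendsto φ atBot (nhds 0) ∧ Tendsto φ atTop (nhds 1) ∧ φ 0 = 1/2) →
      (StrictMono φ ∧ ContDiff ℝ 5 φ ∧
        (∀ x : ℝ, deriv φ x = Real.sqrt ((4/α) * γ (φ x))) ∧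
        ∃ v : LocH1 × LocH1, v.1.toFun = (fun x => φ x / 2) ∧
          v.2.toFun = (fun x => -(φ x) / 2) ∧ v ∈ S0 ∧
          ∀ u ∈ S0, EPN α γ v ≤ EPN α γ u)) := by
  have hγc : Continuous γ := hγreg.continuous
  have hγd : Differentiable ℝ γ := hγreg.differentiable (by norm_num)
  obtain ⟨K, hK⟩ := exists_lipschitz_deriv hγreg hγper
  have hz0 : γ 0 = 0 := (hγzero 0).2 ⟨0, by simp⟩
  have hz1 : γ 1 = 0 := (hγzero 1).2 ⟨1, by simp⟩
  have hfirst : ∀ φ : ℝ → ℝ, SolvesPN α γ φ → Tendsto φ atTop (𝓝 1) → φ 0 = 1 / 2 →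
      ∀ x, deriv φ x = √(4 / α * γ (φ x)) := by
    intro φ h ht h0 x
    rw [← h.first_integral hγd hz1 ht x,
      Real.sqrt_sq (h.deriv_pos hα hγd hγnn hγzero hK ht h0 x).le]
  refine ⟨existsUnique_of_exists_of_unique ?_ ?_, ?_⟩
  · have hpos : ∀ s ∈ Ioo (0:ℝ) 1, 0 < γ s := by
      intro s hs
      refine lt_of_le_of_ne (hγnn s) fun h => ?_
      obtain ⟨n, rfl⟩ := (hγzero s).1 h.symm
      have h1 : (0:ℤ) < n := by exact_mod_cast hs.1
      have h2 : n < (1:ℤ) := by exact_mod_cast hs.2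
      omega
    set L : ℝ := √(4 / α * (K + 1)) with hLdef
    have hL : 0 < L := Real.sqrt_pos.2 (by positivity)
    have hbd : ∀ s r : ℝ, 0 ≤ r → γ s ≤ K * r ^ 2 → √(4 / α * γ s) ≤ L * r := by
      intro s r hr h
      rw [← Real.sqrt_sq hr, hLdef, ← Real.sqrt_mul (by positivity)]
      refine Real.sqrt_le_sqrt ?_
      rw [mul_assoc]
      refine mul_le_mul_of_nonneg_left ?_ (by positivity)
      nlinarith [sq_nonneg r]
    obtain ⟨φ, hφm, hφ0, hφd, hφb, hφt⟩ := exists_profile (g := fun s => √(4 / α * γ s))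
      (by fun_prop) (fun s hs => Real.sqrt_pos.2 (mul_pos (by positivity) (hpos s hs))) hL
      (fun s hs => hbd s s hs.1.le (by simpa using le_quadratic hγd hγnn hK hz0 s))
      (fun s hs => hbd s (1 - s) (sub_pos.2 hs.2).le
        ((le_quadratic hγd hγnn hK hz1 s).trans_eq (by ring)))
    have hde : deriv φ = fun x => √(4 / α * γ (φ x)) := funext fun x => (hφd x).deriv
    have hsol : SolvesPN α γ φ := by
      refine ⟨fun x => (hφd x).differentiableAt.hasDerivAt, fun x => ?_⟩
      have hp : 0 < 4 / α * γ (φ x) := mul_pos (by positivity) (hpos _ (hφm x))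
      have := (((hγd (φ x)).hasDerivAt.comp x (hφd x)).const_mul (4 / α)).sqrt hp.ne'
      rw [hde]
      convert! this using 1
      have hq : √(4 / α * γ (φ x)) ≠ 0 := (Real.sqrt_pos.2 hp).ne'
      simp only [Function.comp_apply]
      generalize √(4 / α * γ (φ x)) = q at hq
      field_simp
      ring
    refine ⟨φ, (hsol.contDiff hγreg).of_le (by norm_num), fun x => ?_, hφb, hφt, hφ0⟩
    rw [iteratedDeriv_succ, iteratedDeriv_one, (hsol.2 x).deriv]
    field_simp
    ring
  · rintro φ ψ ⟨h1, h2, -, h4, h5⟩ ⟨k1, k2, -, k4, k5⟩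
    have hφ := solvesPN_of_contDiff hα h1 h2
    have hψ := solvesPN_of_contDiff hα k1 k2
    refine hφ.unique hK hψ (x₀ := 0) (h5.trans k5.symm) ?_
    rw [hfirst φ hφ h4 h5, hfirst ψ hψ k4 k5, h5, k5]
  · rintro φ ⟨h1, h2, hbot, htop, h0⟩
    have h := solvesPN_of_contDiff hα h1 h2
    have hode := hfirst φ h htop h0
    have hdc : Continuous (deriv φ) := h1.continuous_deriv (by norm_num)
    refine ⟨strictMono_of_deriv_pos (h.deriv_pos hα hγd hγnn hγzero hK htop h0),
      h.contDiff hγreg, hode, ?_⟩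
    have hsqc : Continuous fun s => √(α * γ s) := by fun_prop
    obtain ⟨M, -, hM⟩ := bounded_of_periodic hsqc fun x => by rw [hγper]
    have hftc : ∀ x, ∫ t in (0:ℝ)..x, deriv φ t = φ x - φ 0 := fun x =>
      intervalIntegral.integral_eq_sub_of_hasDerivAt (fun y _ => h.1 y)
        (hdc.intervalIntegrable _ _)
    let v₁ : LocH1 :=
      { toFun := fun x => φ x / 2
        dFun := fun x => deriv φ x / 2
        locInt := (hdc.div_const 2).locallyIntegrable
        locSq := ((hdc.div_const 2).pow 2).locallyIntegrable
        ftc := fun x => by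
          rw [intervalIntegral.integral_div, hftc]
          ring }
    let v₂ : LocH1 :=
      { toFun := fun x => -(φ x) / 2
        dFun := fun x => -deriv φ x / 2
        locInt := (hdc.neg.div_const 2).locallyIntegrable
        locSq := ((hdc.neg.div_const 2).pow 2).locallyIntegrable
        ftc := fun x => by
          rw [intervalIntegral.integral_div, intervalIntegral.integral_neg, hftc]
          ring }
    have hdiff : ∀ x, v₁.toFun x - v₂.toFun x = φ x := fun x => by
      change φ x / 2 - -(φ x) / 2 = φ x
      ring
    refine ⟨(v₁, v₂), rfl, rfl, ⟨?_, ?_, ?_, ?_⟩, fun u hu => ?_⟩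
    · simpa only [hdiff] using hbot
    · simpa only [hdiff] using htop
    · change φ 0 / 2 = 1 / 4
      rw [h0]; norm_num
    · change -(φ 0) / 2 = -(1 / 4)
      rw [h0]; norm_num
    · rw [energy_profile hα hγc hγnn hM h.1 hdc hode hbot htop (v := (v₁, v₂))
        (fun _ => rfl) (fun _ => rfl) hdiff]
      exact energy_lower_S0 hα hγc hγnn hM hu
end
end

section
/- If φ : ℝ → ℝ is continuously differentiable with φ'(x) = √((4/α)γ(φ(x))) for all x ∈ ℝ and φ(0) = 1/2, then φ(x) + φ(−x) = 1 for all x ∈ ℝ. -/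
/-!
Both `φ` and its reflection `x ↦ 1 - φ (-x)` solve the autonomous equation `y' = √((4/α) γ(y))`
with `y(0) = 1/2`: evenness and periodicity of `γ` give `γ (1 - ξ) = γ ξ`. So the claim is
uniqueness for this initial value problem. The right-hand side is globally Lipschitz, even at the
zeros of `γ`, because the square root of a nonnegative `C²` function with bounded second derivative
is Lipschitz (`sqrt_lipschitz_of_periodic`); here the second derivative is bounded by periodicity.
-/

noncomputable section
open Filter

/-- A quadratic Taylor bound, not sharp by a factor `2`, from a Lipschitz derivative. -/
lemma abs_taylor_le {g : ℝ → ℝ} (hg : Differentiable ℝ g) {M : ℝ}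
    (hM : ∀ x y, |deriv g y - deriv g x| ≤ M * |y - x|) (hM0 : 0 ≤ M) (x y : ℝ) :
    |g y - g x - deriv g x * (y - x)| ≤ M * (y - x) ^ 2 := by
  have key := (convex_uIcc x y).norm_image_sub_le_of_norm_hasDerivWithin_le
    (f := fun t => g t - deriv g x * t) (f' := fun t => deriv g t - deriv g x)
    (C := M * |y - x|) (x := x) (y := y)
    (fun t _ => by
      simpa using ((hg t).hasDerivAt.fun_sub ((hasDerivAt_id t).const_mul (deriv g x))).hasDerivWithinAt)
    (fun t ht => (hM x t).trans
      (mul_le_mul_of_nonneg_left (Set.abs_sub_left_of_mem_uIcc ht) hM0))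
    Set.left_mem_uIcc Set.right_mem_uIcc
  rw [Real.norm_eq_abs, Real.norm_eq_abs, mul_assoc, abs_mul_abs_self] at key
  calc _ = |g y - deriv g x * y - (g x - deriv g x * x)| := by congr 1; ring
    _ ≤ _ := key
    _ = _ := by ring

/-- Nonnegativity of `g` forces the quadratic Taylor majorant at each `x` to be nonnegative, so its
discriminant gives `g'(x)² ≤ 4 M g(x)`. The majorant is then at most `(√g(x) + √M |y - x|)²`. -/
lemma sqrt_lipschitz_of_periodic {g : ℝ → ℝ} (hg : ContDiff ℝ 2 g) (hper : ∀ x, g (x + 1) = g x)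
    (hnn : ∀ x, 0 ≤ g x) : ∃ K, LipschitzWith K (fun x => Real.sqrt (g x)) := by
  have hg1 : ContDiff ℝ 1 (deriv g) := by
    have : ContDiff ℝ (1 + 1) g := by simpa [one_add_one_eq_two] using hg
    exact (contDiff_succ_iff_deriv.1 this).2.2
  have hper' : ∀ f : ℝ → ℝ, (∀ x, f (x + 1) = f x) → ∀ x, deriv f (x + 1) = deriv f x := by
    intro f hf x
    rw [← deriv_comp_add_const, funext hf]
  have hp2 : Function.Periodic (deriv (deriv g)) 1 := hper' _ (hper' _ hper)
  obtain ⟨M, hM⟩ := (hp2.isBounded_of_continuous one_ne_zero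
    (hg1.continuous_deriv le_rfl)).exists_norm_le
  have hM' : ∀ t, |deriv (deriv g) t| ≤ M := fun t => hM _ ⟨t, rfl⟩
  have hM0 : 0 ≤ M := (abs_nonneg _).trans (hM' 0)
  have taylor := abs_taylor_le (hg.differentiable two_ne_zero) (M := M) (fun x y =>
    convex_univ.norm_image_sub_le_of_norm_deriv_le
      (fun t _ => (hg1.differentiable one_ne_zero) t) (fun t _ => hM' t)
      (Set.mem_univ x) (Set.mem_univ y)) hM0
  refine ⟨_, LipschitzWith.of_le_add_mul' (Real.sqrt M) fun y x => ?_⟩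
  have hd : deriv g x ^ 2 ≤ 4 * M * g x := by
    have := discrim_le_zero (a := M) (b := deriv g x) (c := g x) fun h => by
      have h1 := (abs_le.1 (taylor x (x + h))).2
      have h2 := hnn (x + h)
      rw [add_sub_cancel_left] at h1
      linarith
    unfold discrim at this
    linarith
  have hs := Real.sq_sqrt (hnn x)
  have hsM := Real.sq_sqrt hM0
  have hd' : |deriv g x| ≤ 2 * Real.sqrt M * Real.sqrt (g x) := by
    refine abs_le_of_sq_le_sq ?_ (by positivity)
    rw [mul_pow, mul_pow, hs, hsM]
    linarith
  rw [Real.dist_eq]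
  apply Real.sqrt_le_iff.2 ⟨by positivity, ?_⟩
  have h1 := (abs_le.1 (taylor x y)).2
  have h2 : deriv g x * (y - x) ≤ 2 * Real.sqrt M * Real.sqrt (g x) * |y - x| :=
    (le_abs_self _).trans
      ((abs_mul _ _).le.trans (mul_le_mul_of_nonneg_right hd' (abs_nonneg _)))
  have h3 : (Real.sqrt (g x) + Real.sqrt M * |y - x|) ^ 2
      = g x + 2 * Real.sqrt M * Real.sqrt (g x) * |y - x| + M * (y - x) ^ 2 := by
    rw [add_sq, mul_pow, hs, hsM, sq_abs]; ring
  linarith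

theorem stmt1 (α : ℝ) (hα : 0 < α) (γ : ℝ → ℝ) (hγreg : ContDiff ℝ 4 γ)
    (hγeven : ∀ ξ : ℝ, γ (-ξ) = γ ξ) (hγper : ∀ ξ : ℝ, γ (ξ + 1) = γ ξ)
    (hγnn : ∀ ξ : ℝ, 0 ≤ γ ξ) (hγzero : ∀ ξ : ℝ, γ ξ = 0 ↔ ∃ n : ℤ, ξ = (n : ℝ))
    (hγ'' : 0 < iteratedDeriv 2 γ 0)
    (φ : ℝ → ℝ) (hφ : ContDiff ℝ 1 φ)
    (hφ' : ∀ x : ℝ, deriv φ x = Real.sqrt ((4/α) * γ (φ x)))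
    (hφ0 : φ 0 = 1/2) :
    ∀ x : ℝ, φ x + φ (-x) = 1 := by
  obtain ⟨K, hK⟩ := sqrt_lipschitz_of_periodic (g := fun ξ => (4/α) * γ ξ)
    (contDiff_const.mul (hγreg.of_le (by norm_num)))
    (fun x => by simp only [hγper]) (fun x => mul_nonneg (by positivity) (hγnn x))
  have hφd : ∀ x, HasDerivAt φ (Real.sqrt ((4/α) * γ (φ x))) x := fun x =>
    hφ' x ▸ (hφ.differentiable one_ne_zero x).hasDerivAt
  have hrefl : ∀ ξ, γ (1 - ξ) = γ ξ := fun ξ => by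
    rw [sub_eq_neg_add, hγper, hγeven]
  have heq : φ = fun x => 1 - φ (-x) := by
    refine ODE_solution_unique_univ (t₀ := 0) (s := fun _ => Set.univ)
      (v := fun _ ξ => Real.sqrt ((4/α) * γ ξ)) (fun _ => hK.lipschitzOnWith)
      (fun t => ⟨hφd t, trivial⟩) (fun t => ⟨?_, trivial⟩) ?_
    · simp only [hrefl]
      simpa using ((hφd (-t)).comp t (hasDerivAt_neg t)).const_sub 1
    · simp only [neg_zero, hφ0]; norm_num
  intro x
  linarith [congrFun heq x]
end
end

section
/- Suppose f = (f⁺, f⁻) : ℝ → ℝ² is twice continuously differentiable with ∫_ℝ (|∇f⁺|² + |∇f⁻|²) dx < ∞ and ∫_ℝ (f⁺ − f⁻)² dx < ∞, and f satisfies −α∇²f⁺(x) + γ''(φ(x))(f⁺(x) − f⁻(x)) = 0 and −α∇²f⁻(x) − γ''(φ(x))(f⁺(x) − f⁻(x)) = 0 for all x ∈ ℝ. Then there exist real constants A and B such that f⁺ = (A/2)φ' + B and f⁻ = −(A/2)φ' + B. -/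
noncomputable section
open MeasureTheory Filter

/-!
Put `s = f⁺ + f⁻` and `d = f⁺ - f⁻`. Adding the equations gives `s'' = 0`, so `s'` is constant, and
being square integrable it vanishes; hence `s` is constant.
Subtracting them gives `α d'' = 2 γ''(φ) d`. Differentiating the equation of `φ` shows that `φ'`
solves the same linear equation, so the Wronskian `W = d' φ' - d φ''` is constant. As `φ'` and `φ''`
are bounded (they are continuous functions of `φ ∈ [0, 1]`) while `d` and `d'` are in `L²`, the
constant `W` is square integrable, hence zero. Since `φ' > 0`, the quotient `d / φ'` has zero
derivative, so `d` is a multiple of `φ'`.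
-/

theorem hasDerivAt_of_contDiff_two {f : ℝ → ℝ} (hf : ContDiff ℝ 2 f) (x : ℝ) :
    HasDerivAt f (deriv f x) x ∧ HasDerivAt (deriv f) (iteratedDeriv 2 f x) x := by
  refine ⟨(hf.differentiable (by norm_num) x).hasDerivAt, ?_⟩
  have h : Differentiable ℝ (iteratedDeriv 1 f) :=
    hf.differentiable_iteratedDeriv 1 (by norm_num)
  rw [iteratedDeriv_succ, iteratedDeriv_one]
  rw [iteratedDeriv_one] at h
  exact (h x).hasDerivAt

theorem exists_const_of_hasDerivAt_zero {g : ℝ → ℝ} (h : ∀ x, HasDerivAt g 0 x) :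
    ∃ c, ∀ x, g x = c :=
  ⟨g 0, fun x => is_const_of_deriv_eq_zero (fun y => (h y).differentiableAt)
    (fun y => (h y).deriv) x 0⟩

/-- A real constant whose square is dominated by an integrable function on `ℝ` vanishes, because
`ℝ` has infinite Lebesgue measure. -/
theorem eq_zero_of_sq_le_integrable {c : ℝ} {g : ℝ → ℝ} (hg : Integrable g)
    (h : ∀ x, c ^ 2 ≤ g x) : c = 0 := by
  have hc : Integrable (fun _ : ℝ => c ^ 2) := by
    refine hg.mono' aestronglyMeasurable_const (Eventually.of_forall fun x => ?_)
    rw [Real.norm_of_nonneg (sq_nonneg c)]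
    exact h x
  rw [integrable_const_iff] at hc
  rcases hc with hc | hc
  · exact pow_eq_zero_iff (two_ne_zero) |>.1 hc
  · exact absurd hc.measure_univ_lt_top (by simp)

theorem stmt3 (α : ℝ) (hα : 0 < α) (γ : ℝ → ℝ) (hγreg : ContDiff ℝ 4 γ)
    (hγeven : ∀ ξ : ℝ, γ (-ξ) = γ ξ) (hγper : ∀ ξ : ℝ, γ (ξ + 1) = γ ξ)
    (hγnn : ∀ ξ : ℝ, 0 ≤ γ ξ) (hγzero : ∀ ξ : ℝ, γ ξ = 0 ↔ ∃ n : ℤ, ξ = (n : ℝ))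
    (hγ'' : 0 < iteratedDeriv 2 γ 0)
    -- φ is the dislocation solution of the PN model
    (φ : ℝ → ℝ) (hφreg : ContDiff ℝ 2 φ) (hφmono : StrictMono φ)
    (hφode : ∀ x : ℝ, -(α/2) * iteratedDeriv 2 φ x + deriv γ (φ x) = 0)
    (hφbot : Tendsto φ atBot (nhds 0)) (hφtop : Tendsto φ atTop (nhds 1))
    (hφ0 : φ 0 = 1/2)
    (hφ' : ∀ x : ℝ, deriv φ x = Real.sqrt ((4/α) * γ (φ x)))
    -- the pair f = (f⁺, f⁻)
    (fp fm : ℝ → ℝ) (hfp : ContDiff ℝ 2 fp) (hfm : ContDiff ℝ 2 fm)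
    (hint1 : Integrable (fun x => (deriv fp x) ^ 2 + (deriv fm x) ^ 2))
    (hint2 : Integrable (fun x => (fp x - fm x) ^ 2))
    (heqp : ∀ x : ℝ, -α * iteratedDeriv 2 fp x + iteratedDeriv 2 γ (φ x) * (fp x - fm x) = 0)
    (heqm : ∀ x : ℝ, -α * iteratedDeriv 2 fm x - iteratedDeriv 2 γ (φ x) * (fp x - fm x) = 0) :
    ∃ A B : ℝ, (∀ x : ℝ, fp x = A/2 * deriv φ x + B) ∧
      (∀ x : ℝ, fm x = -(A/2) * deriv φ x + B) := by
  have hφ01 : ∀ x, 0 < φ x ∧ φ x < 1 := fun x =>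
    ⟨(hφmono.monotone.le_of_tendsto hφbot (x - 1)).trans_lt (hφmono (by linarith)),
      (hφmono (by linarith : x < x + 1)).trans_le (hφmono.monotone.ge_of_tendsto hφtop (x + 1))⟩
  have hψpos : ∀ x, 0 < deriv φ x := by
    intro x
    rw [hφ' x]
    have hne : γ (φ x) ≠ 0 := by
      rw [Ne, hγzero]
      rintro ⟨n, hn⟩
      obtain ⟨h0, h1⟩ := hφ01 x
      rw [hn] at h0 h1
      norm_cast at h0 h1
      omega
    have : 0 < γ (φ x) := lt_of_le_of_ne (hγnn _) hne.symm
    positivity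
  have hφ2 : ∀ x, iteratedDeriv 2 φ x = 2 / α * deriv γ (φ x) := by
    intro x
    have := hφode x
    field_simp
    linarith
  have hγ2 : ContDiff ℝ 2 γ := hγreg.of_le (by norm_num)
  have hDφ := hasDerivAt_of_contDiff_two hφreg
  have hDp := hasDerivAt_of_contDiff_two hfp
  have hDm := hasDerivAt_of_contDiff_two hfm
  have hDφ3 : ∀ x, HasDerivAt (iteratedDeriv 2 φ)
      (2 / α * (iteratedDeriv 2 γ (φ x) * deriv φ x)) x := by
    intro x
    rw [funext hφ2]
    exact ((hasDerivAt_of_contDiff_two hγ2 (φ x)).2.comp x (hDφ x).1).const_mul _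
  have hp2 : ∀ x, iteratedDeriv 2 fp x = iteratedDeriv 2 γ (φ x) * (fp x - fm x) / α := by
    intro x
    have := heqp x
    field_simp
    linarith
  have hm2 : ∀ x, iteratedDeriv 2 fm x = -(iteratedDeriv 2 γ (φ x) * (fp x - fm x) / α) := by
    intro x
    have := heqm x
    field_simp
    linarith
  -- The sum is constant.
  obtain ⟨c, hc⟩ : ∃ c, ∀ x, deriv fp x + deriv fm x = c := by
    refine exists_const_of_hasDerivAt_zero fun x => ?_
    have h := (hDp x).2.add (hDm x).2
    rwa [hp2, hm2, add_neg_cancel] at h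
  have hc0 : c = 0 := by
    refine eq_zero_of_sq_le_integrable (hint1.const_mul 2) fun x => ?_
    rw [← hc x]
    nlinarith [sq_nonneg (deriv fp x - deriv fm x)]
  obtain ⟨S, hS⟩ : ∃ S, ∀ x, fp x + fm x = S := by
    refine exists_const_of_hasDerivAt_zero fun x => ?_
    have h := (hDp x).1.add (hDm x).1
    rwa [hc, hc0] at h
  -- The Wronskian of the difference and `φ'` vanishes.
  obtain ⟨W, hW⟩ : ∃ W, ∀ x, (deriv fp x - deriv fm x) * deriv φ x
      - (fp x - fm x) * iteratedDeriv 2 φ x = W := by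
    refine exists_const_of_hasDerivAt_zero fun x => ?_
    have h := (((hDp x).2.sub (hDm x).2).mul (hDφ x).2).sub
      (((hDp x).1.sub (hDm x).1).mul (hDφ3 x))
    refine h.congr_deriv ?_
    simp only [Pi.sub_apply]
    rw [hp2, hm2]
    ring
  have hbdd : ∀ g : ℝ → ℝ, Continuous g → ∃ C, ∀ x, |g (φ x)| ≤ C := by
    intro g hg
    obtain ⟨C, hC⟩ := (isCompact_Icc (a := (0 : ℝ)) (b := 1)).exists_bound_of_continuousOn
      hg.continuousOn
    exact ⟨C, fun x => hC _ ⟨(hφ01 x).1.le, (hφ01 x).2.le⟩⟩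
  obtain ⟨C₁, hC₁⟩ := hbdd (fun y => Real.sqrt ((4 / α) * γ y))
    (Real.continuous_sqrt.comp (continuous_const.mul hγreg.continuous))
  obtain ⟨C₂, hC₂⟩ := hbdd (fun y => 2 / α * deriv γ y)
    (continuous_const.mul (hγreg.continuous_deriv (by norm_num)))
  have hW0 : W = 0 := by
    refine eq_zero_of_sq_le_integrable
      ((hint1.const_mul (4 * C₁ ^ 2)).add (hint2.const_mul (2 * C₂ ^ 2))) fun x => ?_
    have h1 : (deriv φ x) ^ 2 ≤ C₁ ^ 2 := by
      rw [hφ' x]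
      exact sq_le_sq' (abs_le.1 (hC₁ x)).1 (abs_le.1 (hC₁ x)).2
    have h2 : (iteratedDeriv 2 φ x) ^ 2 ≤ C₂ ^ 2 := by
      rw [hφ2 x]
      exact sq_le_sq' (abs_le.1 (hC₂ x)).1 (abs_le.1 (hC₂ x)).2
    rw [← hW x]
    simp only [Pi.add_apply]
    generalize deriv φ x = u at *
    generalize iteratedDeriv 2 φ x = v at *
    generalize deriv fp x = p at *
    generalize deriv fm x = m at *
    generalize fp x - fm x = d at *
    calc ((p - m) * u - d * v) ^ 2
        ≤ 2 * (p - m) ^ 2 * u ^ 2 + 2 * d ^ 2 * v ^ 2 := by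
          nlinarith [sq_nonneg ((p - m) * u + d * v)]
      _ ≤ 2 * (p - m) ^ 2 * C₁ ^ 2 + 2 * d ^ 2 * C₂ ^ 2 := by gcongr
      _ ≤ 4 * C₁ ^ 2 * (p ^ 2 + m ^ 2) + 2 * C₂ ^ 2 * d ^ 2 := by
          nlinarith [mul_nonneg (sq_nonneg C₁) (sq_nonneg (p + m))]
  obtain ⟨A, hA⟩ : ∃ A, ∀ x, (fp x - fm x) / deriv φ x = A := by
    refine exists_const_of_hasDerivAt_zero fun x => ?_
    have h := ((hDp x).1.sub (hDm x).1).div (hDφ x).2 (hψpos x).ne'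
    refine h.congr_deriv ?_
    simp only [Pi.sub_apply]
    rw [hW x, hW0, zero_div]
  refine ⟨A, S / 2, fun x => ?_, fun x => ?_⟩ <;>
  · have h := (div_eq_iff (hψpos x).ne').1 (hA x)
    linarith [hS x]
end
end

section
/- There exists a constant κ > 0 such that for every g = (g⁺, g⁻) ∈ X₀: ∫_ℝ [ α|∇g⁺|² + α|∇g⁻|² + γ''(φ(x))(g⁺(x) − g⁻(x))² ] dx ≥ κ ‖g‖_{X₀}². -/
noncomputable section
open MeasureTheory Filter

/-!
With `u = g⁺ - g⁻`, one has `u 0 = 0` and `(g⁺ - g⁻)'² ≤ 2 (g⁺'² + g⁻'²)`, so the claim follows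
from an estimate `∫ (u'² + q u²) ≥ c ∫ u²` with `q = (2/α) γ''(φ)` (`line_coercive`): it controls
`∫ u²` by the energy, and the gradient terms are then controlled because `γ''` is bounded.
Here the prime on `g` and `u` is the weak derivative.

Differentiating the equation for `φ` shows that `φ' > 0` is a zero mode of `-∂² + q`; hence its
logarithmic derivative `w₀ = φ''/φ' = (2/α) γ'(φ)/φ'` solves the Riccati equation `w' + w² = q`.
The identity `φ'² = (4/α) γ(φ)` gives `w₀² = γ'(φ)² / (α γ(φ))`, so that `w₀` is bounded
(`deriv_sq_le_of_nonneg`), is `≤ -m < 0` near `+∞` and `≥ m` near `-∞` (`deriv_sq_ge_near`).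
On the half-line `[0, ∞)` this leaves room to add to `w₀` a small decreasing positive function and
get a strict subsolution `w' + w² ≤ q - c` (`exists_strict_riccati`). Completing the square,
`u'² + (q - c) u² ≥ (w u²)'`; integrating, the boundary term at `0` vanishes and the one at
infinity vanishes along a sequence (`half_line_coercive`). The left half-line is the mirror image;
the two subsolutions need not match at `0`, again because `u 0 = 0`. This is where the zero mode
`φ'`, which does not vanish at `0`, is excluded.
-/

/-! ### Absolutely continuous functions on the line -/

/-- The weak derivative obeys the product rule: if `u` is the primitive of `d` vanishing at `0`,
then `w u²` is absolutely continuous with derivative `2 w u d + w' u²`. -/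
lemma integral_deriv_mul_sq {w w' u d : ℝ → ℝ} (hw : ∀ x, HasDerivAt w (w' x) x)
    (hw' : Continuous w') (hd : LocallyIntegrable d volume)
    (hu : ∀ x, u x = ∫ t in (0:ℝ)..x, d t) (N : ℝ) :
    IntervalIntegrable (fun x => 2 * w x * u x * d x + w' x * u x ^ 2) volume 0 N ∧
    ∫ x in (0:ℝ)..N, (2 * w x * u x * d x + w' x * u x ^ 2) = w N * u N ^ 2 := by
  have hdi : ∀ a b : ℝ, IntervalIntegrable d volume a b := fun a b =>
    (hd.integrableOn_isCompact isCompact_uIcc).intervalIntegrable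
  have huc : Continuous u := by
    rw [funext hu]; exact intervalIntegral.continuous_primitive hdi 0
  have hwc : Continuous w := continuous_iff_continuousAt.2 fun x => (hw x).continuousAt
  refine ⟨?_, ?_⟩
  · exact ((hdi 0 N).continuousOn_mul (by fun_prop)).add
      (Continuous.intervalIntegrable (by fun_prop) _ _)
  have hwd : ContDiff ℝ 1 w := by
    rw [contDiff_one_iff_deriv]
    refine ⟨fun x => (hw x).differentiableAt, ?_⟩
    rwa [funext fun x => (hw x).deriv]
  have acw : AbsolutelyContinuousOnInterval w 0 N :=
    hwd.contDiffOn.absolutelyContinuousOnInterval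
  have acu : AbsolutelyContinuousOnInterval u 0 N := by
    rw [funext hu]
    exact (hdi 0 N).absolutelyContinuousOnInterval_intervalIntegral (by simp)
  have key := (acw.mul (acu.mul acu)).integral_deriv_eq_sub
  have hu0 : u 0 = 0 := by simp [hu 0]
  simp only [Pi.mul_apply, hu0, mul_zero, sub_zero] at key
  rw [show w N * u N ^ 2 = w N * (u N * u N) by ring, ← key]
  apply intervalIntegral.integral_congr_ae
  filter_upwards [LocallyIntegrable.ae_hasDerivAt_integral hd] with x hx _
  have hux : HasDerivAt u (d x) x := by
    have := hx 0
    rwa [← funext hu] at this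
  rw [((hw x).mul (hux.mul hux)).deriv]
  simp only [Pi.mul_apply]
  ring

/-- A square integrable function is small at arbitrarily large arguments. -/
lemma frequently_sq_lt {u : ℝ → ℝ} (hu : Integrable fun x => u x ^ 2) {δ : ℝ} (hδ : 0 < δ) :
    ∃ᶠ x in atTop, u x ^ 2 < δ := by
  intro h
  obtain ⟨A, hA⟩ := eventually_atTop.1 h
  have h1 : IntegrableOn (fun _ : ℝ => δ) (Set.Ioi A) := by
    refine hu.integrableOn.mono' (by fun_prop) ?_
    refine (ae_restrict_iff' measurableSet_Ioi).2 (Eventually.of_forall fun x hx => ?_)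
    rw [Real.norm_of_nonneg hδ.le]
    exact not_lt.1 (hA x (le_of_lt hx))
  rw [integrableOn_const_iff] at h1
  simp [hδ.ne'] at h1

/-! ### The Riccati equation and coercivity -/

/-- A solution `w₀` of the Riccati equation `w' + w² = q` that is eventually `≤ -m < 0` can be
perturbed on `[0, ∞)` to a bounded strict subsolution `w' + w² ≤ q - c`. -/
lemma exists_strict_riccati {w₀ q : ℝ → ℝ} {M m R : ℝ}
    (hw : ∀ x, HasDerivAt w₀ (q x - w₀ x ^ 2) x) (hqc : Continuous q) (hM : ∀ x, |w₀ x| ≤ M)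
    (hm : 0 < m) (hR : ∀ x, R ≤ x → w₀ x ≤ -m) :
    ∃ c B : ℝ, 0 < c ∧ 0 < B ∧ ∃ w w' : ℝ → ℝ, (∀ x, HasDerivAt w (w' x) x) ∧ Continuous w' ∧
      ∀ x, 0 ≤ x → |w x| ≤ B ∧ w' x + w x ^ 2 ≤ q x - c := by
  have hM0 : 0 ≤ M := (abs_nonneg _).trans (hM 0)
  have hwc : Continuous w₀ := continuous_iff_continuousAt.2 fun x => (hw x).continuousAt
  set K := 4 * M + 2 with hK
  set L := Real.exp (K * |R|) with hL
  have hL1 : 1 ≤ L := Real.one_le_exp (by positivity)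
  set ε := min (1 / (4 * L)) (m / 2) with hε
  have hε0 : 0 < ε := lt_min (by positivity) (by positivity)
  have hε1 : 4 * ε * L ≤ 1 := by
    have := min_le_left (1 / (4 * L)) (m / 2)
    rw [← hε, le_div_iff₀ (by positivity)] at this
    linarith
  have hε2 : 2 * ε ≤ m := by linarith [min_le_right (1 / (4 * L)) (m / 2)]
  -- The perturbation `ε (1 + e^{-K (x - R)})` decays fast enough on `[0, R]` to beat `w₀`, and
  -- beyond `R` the negativity of `w₀` takes over.
  let E : ℝ → ℝ := fun x => Real.exp (-K * (x - R))
  have hE : ∀ x, HasDerivAt E (-K * E x) x := fun x => by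
    have := (((hasDerivAt_id x).sub_const R).const_mul (-K)).exp
    simpa [E, mul_comm] using this
  have hEc : Continuous E := by fun_prop
  refine ⟨ε * min 1 m, M + ε * (1 + L), by positivity, by positivity,
    fun x => w₀ x + ε * (1 + E x), fun x => (q x - w₀ x ^ 2) + ε * (-K * E x),
    fun x => (hw x).add (((hE x).const_add 1).const_mul ε), by fun_prop, fun x hx => ?_⟩
  have hE0 : 0 < E x := Real.exp_pos _
  have hEL : E x ≤ L := by
    apply Real.exp_le_exp.2
    have h1 : R ≤ |R| := le_abs_self R
    have h2 : 0 ≤ K := by positivity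
    nlinarith
  have hwM := abs_le.1 (hM x)
  constructor
  · have h1 : ε * (1 + E x) ≤ ε * (1 + L) := by gcongr
    have h2 : 0 ≤ ε * (1 + E x) := by positivity
    exact abs_le.2 ⟨by linarith, by linarith⟩
  set η := ε * (1 + E x) with hη
  have hη0 : 0 < η := by positivity
  rcases le_total x R with hxR | hxR
  · have hE1 : 1 ≤ E x := Real.one_le_exp (by
      have h2 : 0 ≤ K := by positivity
      nlinarith)
    have h1 : η ≤ 2 * ε * E x := by nlinarith
    have h2 : w₀ x * η ≤ M * (2 * ε * E x) :=
      (mul_le_mul_of_nonneg_right hwM.2 hη0.le).trans (by gcongr)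
    have h3 : η ^ 2 ≤ ε * E x := by
      calc η ^ 2 ≤ (2 * ε * E x) ^ 2 := by gcongr
        _ = (4 * ε * E x) * (ε * E x) := by ring
        _ ≤ (4 * ε * L) * (ε * E x) := by gcongr
        _ ≤ 1 * (ε * E x) := by gcongr
        _ = ε * E x := one_mul _
    have h4 : ε * min 1 m ≤ ε * E x := by
      gcongr; exact (min_le_left _ _).trans hE1
    rw [hK]
    linarith
  · have hE1 : E x ≤ 1 := Real.exp_le_one_iff.2 (by
      have h2 : 0 ≤ K := by positivity
      nlinarith)
    have h1 : η ≤ 2 * ε := by nlinarith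
    have h2 : ε ≤ η := by nlinarith
    have h3 : η * (2 * w₀ x + η) ≤ η * (-m) := by
      gcongr; linarith [hR x hxR]
    have h4 : ε * min 1 m ≤ η * m := by
      gcongr; exact min_le_right _ _
    have h5 : 0 ≤ ε * (K * E x) := by positivity
    linarith

/-- Half-line coercivity with a Dirichlet condition at `0`: completing the square with a strict
Riccati subsolution bounds the energy below, the boundary term at `0` vanishing because
`u 0 = 0`. -/
lemma half_line_coercive {w₀ q : ℝ → ℝ} {M m R b : ℝ}
    (hw : ∀ x, HasDerivAt w₀ (q x - w₀ x ^ 2) x) (hqc : Continuous q) (hqb : ∀ x, |q x| ≤ b)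
    (hM : ∀ x, |w₀ x| ≤ M) (hm : 0 < m) (hR : ∀ x, R ≤ x → w₀ x ≤ -m) :
    ∃ c : ℝ, 0 < c ∧ ∀ u d : ℝ → ℝ, LocallyIntegrable d volume →
      (∀ x, u x = ∫ t in (0:ℝ)..x, d t) → Integrable (fun x => d x ^ 2) →
      Integrable (fun x => u x ^ 2) →
      0 ≤ ∫ x in Set.Ioi (0:ℝ), (d x ^ 2 + (q x - c) * u x ^ 2) := by
  obtain ⟨c, B, hc, hB, w, w', hww', hw'c, hwB⟩ := exists_strict_riccati hw hqc hM hm hR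
  refine ⟨c, hc, fun u d hd hu hd2 hu2 => ?_⟩
  set G : ℝ → ℝ := fun x => d x ^ 2 + (q x - c) * u x ^ 2 with hG
  have hGi : Integrable G := by
    refine hd2.add (hu2.bdd_mul (c := b + c) (by fun_prop) (Eventually.of_forall fun x => ?_))
    rw [Real.norm_eq_abs]
    refine (abs_sub _ _).trans ?_
    rw [abs_of_pos hc]
    linarith [hqb x]
  have hlow : ∀ N, 0 ≤ N → -(B * u N ^ 2) ≤ ∫ x in (0:ℝ)..N, G x := by
    intro N hN
    obtain ⟨hi, he⟩ := integral_deriv_mul_sq hww' hw'c hd hu N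
    have h1 : w N * u N ^ 2 ≤ ∫ x in (0:ℝ)..N, G x := by
      rw [← he]
      refine intervalIntegral.integral_mono_on hN hi hGi.intervalIntegrable fun x hx => ?_
      have h2 := mul_le_mul_of_nonneg_right (hwB x hx.1).2 (sq_nonneg (u x))
      have h3 := sq_nonneg (d x - w x * u x)
      simp only [hG]
      linarith
    have h2 := mul_le_mul_of_nonneg_right (abs_le.1 (hwB N hN).1).1 (sq_nonneg (u N))
    linarith
  have hlim := intervalIntegral_tendsto_integral_Ioi 0 hGi.integrableOn tendsto_id
  -- If the limit were negative, the boundary term `-B u(N)²` would stay away from `0` for all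
  -- large `N`, contradicting `u ∈ L²`.
  by_contra! hneg
  set I := ∫ x in Set.Ioi (0:ℝ), G x with hI
  have hev : ∀ᶠ N in atTop, ∫ x in (0:ℝ)..N, G x < I / 2 :=
    hlim.eventually (gt_mem_nhds (by linarith))
  obtain ⟨N, h1, h2, h3⟩ := ((frequently_sq_lt hu2 (δ := -I / (2 * B))
    (div_pos (by linarith) (by positivity))).and_eventually
      (hev.and (eventually_ge_atTop 0))).exists
  rw [lt_div_iff₀ (by positivity)] at h1
  linarith [hlow N h3]

/-- Coercivity on the whole line: the two half-lines decouple because `u 0 = 0`, and the left one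
is reduced to the right one by reflection. -/
lemma line_coercive {w₀ q : ℝ → ℝ} {M m R b : ℝ}
    (hw : ∀ x, HasDerivAt w₀ (q x - w₀ x ^ 2) x) (hqc : Continuous q) (hqb : ∀ x, |q x| ≤ b)
    (hM : ∀ x, |w₀ x| ≤ M) (hm : 0 < m) (hR : ∀ x, R ≤ x → w₀ x ≤ -m)
    (hR' : ∀ x, x ≤ -R → m ≤ w₀ x) :
    ∃ c : ℝ, 0 < c ∧ ∀ u d : ℝ → ℝ, LocallyIntegrable d volume →
      (∀ x, u x = ∫ t in (0:ℝ)..x, d t) → Integrable (fun x => d x ^ 2) →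
      Integrable (fun x => u x ^ 2) →
      c * ∫ x, u x ^ 2 ≤ ∫ x, (d x ^ 2 + q x * u x ^ 2) := by
  obtain ⟨c₁, hc₁, h₁⟩ := half_line_coercive hw hqc hqb hM hm hR
  obtain ⟨c₂, hc₂, h₂⟩ := half_line_coercive (w₀ := fun x => -w₀ (-x)) (q := fun x => q (-x))
    (M := M) (m := m) (R := R) (b := b)
    (fun x => by
      have h := ((hw (-x)).comp x (hasDerivAt_neg x)).neg
      refine h.congr_deriv ?_
      simp)
    (by fun_prop) (fun x => hqb _) (fun x => by simpa using hM (-x)) hm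
    (fun x hx => by have := hR' (-x) (by linarith); linarith)
  refine ⟨min c₁ c₂, lt_min hc₁ hc₂, fun u d hd hu hd2 hu2 => ?_⟩
  have hqu : Integrable fun x => q x * u x ^ 2 :=
    hu2.bdd_mul (c := b) (by fun_prop) (Eventually.of_forall fun x => hqb x)
  have hdq : Integrable fun x => d x ^ 2 + q x * u x ^ 2 := hd2.add hqu
  have k₁ := h₁ u d hd hu hd2 hu2
  have k₂ := h₂ (fun x => u (-x)) (fun x => -d (-x))
    ((locallyIntegrable_iff.2 fun k hk => by
      have := (hd.integrableOn_isCompact (k := -k) hk.neg)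
      have h2 := (Measure.measurePreserving_neg (volume : Measure ℝ)).integrableOn_comp_preimage
        (f := d) (s := -k) (Homeomorph.neg ℝ).measurableEmbedding
      have h3 := (h2.2 this)
      simpa [Function.comp_def] using h3.neg))
    (fun x => by
      rw [hu (-x), intervalIntegral.integral_neg, intervalIntegral.integral_comp_neg,
        intervalIntegral.integral_symm]
      simp)
    (by simpa using hd2.comp_neg) hu2.comp_neg
  have e₂ := integral_comp_neg_Ioi (0:ℝ) (fun x => d x ^ 2 + (q x - c₂) * u x ^ 2)
  simp only [neg_sq] at k₂
  rw [e₂, neg_zero] at k₂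
  have split : ∀ (c : ℝ) (S : Set ℝ), ∫ x in S, (d x ^ 2 + (q x - c) * u x ^ 2) =
      (∫ x in S, (d x ^ 2 + q x * u x ^ 2)) - c * ∫ x in S, u x ^ 2 := by
    intro c S
    rw [← integral_const_mul, ← integral_sub hdq.integrableOn (hu2.integrableOn.const_mul c)]
    congr 1; ext x; ring
  rw [split] at k₁ k₂
  have s₁ := intervalIntegral.integral_Iic_add_Ioi (b := (0:ℝ)) hdq.integrableOn hdq.integrableOn
  have s₂ := intervalIntegral.integral_Iic_add_Ioi (b := (0:ℝ)) hu2.integrableOn hu2.integrableOn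
  have p₁ : 0 ≤ ∫ x in Set.Ioi (0:ℝ), u x ^ 2 := integral_nonneg fun x => sq_nonneg _
  have p₂ : 0 ≤ ∫ x in Set.Iic (0:ℝ), u x ^ 2 := integral_nonneg fun x => sq_nonneg _
  have t₁ := mul_le_mul_of_nonneg_right (min_le_left c₁ c₂) p₁
  have t₂ := mul_le_mul_of_nonneg_right (min_le_right c₁ c₂) p₂
  rw [← s₁, ← s₂]
  linarith

/-! ### Comparison of a potential with its derivative -/

/-- A nonnegative function with second derivative bounded by `B` satisfies `g'² ≤ 2 B g`: its
quadratic majorant at `s` is nonnegative at its minimum `s - g'(s) / B`. -/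
lemma deriv_sq_le_of_nonneg {g g₁ g₂ : ℝ → ℝ} {B : ℝ} (hg : ∀ x, HasDerivAt g (g₁ x) x)
    (hg₁ : ∀ x, HasDerivAt g₁ (g₂ x) x) (hnn : ∀ x, 0 ≤ g x) (hB : 0 < B)
    (hb : ∀ x, g₂ x ≤ B) (s : ℝ) : g₁ s ^ 2 ≤ 2 * B * g s := by
  let f : ℝ → ℝ := fun t => g s + g₁ s * (t - s) + B / 2 * (t - s) ^ 2 - g t
  let f₁ : ℝ → ℝ := fun t => g₁ s + B * (t - s) - g₁ t
  have hf : ∀ t, HasDerivAt f (f₁ t) t := fun t => by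
    have h := ((((hasDerivAt_id t).sub_const s).const_mul (g₁ s)).const_add (g s)).add
      ((((hasDerivAt_id t).sub_const s).pow 2).const_mul (B / 2)) |>.sub (hg t)
    refine h.congr_deriv ?_
    simp [f₁]; ring
  have hf₁ : ∀ t, HasDerivAt f₁ (B - g₂ t) t := fun t => by
    have h := ((((hasDerivAt_id t).sub_const s).const_mul B).const_add (g₁ s)).sub (hg₁ t)
    refine h.congr_deriv ?_
    simp
  have hmono : Monotone f₁ := monotone_of_hasDerivAt_nonneg hf₁ fun t => by
    simpa using hb t
  have hconv : ConvexOn ℝ Set.univ f := by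
    refine MonotoneOn.convexOn_of_deriv convex_univ
      (fun t _ => (hf t).continuousAt.continuousWithinAt)
      (fun t _ => (hf t).differentiableAt.differentiableWithinAt) ?_
    rw [funext fun t => (hf t).deriv]
    exact hmono.monotoneOn _
  have hfs : f s = 0 := by simp [f]
  have hmin : ∀ t, f s ≤ f t := by
    intro t
    rcases lt_trichotomy s t with h | h | h
    · have := hconv.le_slope_of_hasDerivAt (Set.mem_univ s) (Set.mem_univ t) h (hf s)
      rw [slope_def_field, le_div_iff₀ (by linarith)] at this
      simp only [f₁] at this
      linarith
    · rw [h]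
    · have := hconv.slope_le_of_hasDerivAt (Set.mem_univ t) (Set.mem_univ s) h (hf s)
      rw [slope_def_field, div_le_iff₀ (by linarith)] at this
      simp only [f₁] at this
      linarith
  have key := hmin (s - g₁ s / B)
  rw [hfs] at key
  simp only [f] at key
  have h2 := hnn (s - g₁ s / B)
  have h3 : g s + g₁ s * (s - g₁ s / B - s) + B / 2 * (s - g₁ s / B - s) ^ 2
      = g s - g₁ s ^ 2 / (2 * B) := by field_simp; ring
  rw [h3] at key
  have h4 : g₁ s ^ 2 / (2 * B) ≤ g s := by linarith
  rw [div_le_iff₀ (by positivity)] at h4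
  linarith

/-- To the right of a nondegenerate zero minimum, `g'` is nonnegative and dominates a
multiple of `√g`. -/
lemma deriv_sq_ge_near {g g₁ g₂ : ℝ → ℝ} (hg : ∀ x, HasDerivAt g (g₁ x) x)
    (hg₁ : ∀ x, HasDerivAt g₁ (g₂ x) x) (hc : Continuous g₂) (h0 : g 0 = 0) (h1 : g₁ 0 = 0)
    (h2 : 0 < g₂ 0) :
    ∃ a δ : ℝ, 0 < a ∧ 0 < δ ∧ ∀ s, 0 < s → s < δ → 0 ≤ g₁ s ∧ 2 * a * g s ≤ g₁ s ^ 2 := by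
  obtain ⟨δ, hδ, hball⟩ := Metric.eventually_nhds_iff.1
    (hc.continuousAt.eventually (lt_mem_nhds (half_lt_self h2)))
  have hge : ∀ s, 0 < s → s < δ → g₂ 0 / 2 ≤ g₂ s := fun s hs hs' =>
    (hball (by rw [Real.dist_eq, sub_zero, abs_of_pos hs]; exact hs')).le
  have hpos : ∀ s, 0 < s → s < δ → 0 ≤ g₁ s := by
    intro s hs hs'
    have hm : MonotoneOn g₁ (Set.Icc 0 s) := by
      refine monotoneOn_of_deriv_nonneg (convex_Icc _ _)
        (fun t _ => (hg₁ t).continuousAt.continuousWithinAt)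
        (fun t _ => (hg₁ t).differentiableAt.differentiableWithinAt) fun t ht => ?_
      rw [interior_Icc] at ht
      rw [(hg₁ t).deriv]
      linarith [hge t ht.1 (ht.2.trans hs')]
    have := hm (Set.left_mem_Icc.2 hs.le) (Set.right_mem_Icc.2 hs.le) hs.le
    rwa [h1] at this
  refine ⟨g₂ 0 / 2, δ, by linarith, hδ, fun s hs hs' => ⟨hpos s hs hs', ?_⟩⟩
  -- The derivative of `g₁² - 2 a g` is `2 g₁ (g₂ - a) ≥ 0`.
  have hd : ∀ t, HasDerivAt (fun t => g₁ t ^ 2 - 2 * (g₂ 0 / 2) * g t)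
      (2 * g₁ t * (g₂ t - g₂ 0 / 2)) t := fun t => by
    refine (((hg₁ t).pow 2).sub ((hg t).const_mul (2 * (g₂ 0 / 2)))).congr_deriv ?_
    simp; ring
  have hm : MonotoneOn (fun t => g₁ t ^ 2 - 2 * (g₂ 0 / 2) * g t) (Set.Icc 0 s) := by
    refine monotoneOn_of_deriv_nonneg (convex_Icc _ _)
      (fun t _ => (hd t).continuousAt.continuousWithinAt)
      (fun t _ => (hd t).differentiableAt.differentiableWithinAt) fun t ht => ?_
    rw [interior_Icc] at ht
    rw [(hd t).deriv]
    have := hge t ht.1 (ht.2.trans hs')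
    have := hpos t ht.1 (ht.2.trans hs')
    exact mul_nonneg (by linarith) (by linarith)
  have := hm (Set.left_mem_Icc.2 hs.le) (Set.right_mem_Icc.2 hs.le) hs.le
  simp only [h0, h1] at this
  linarith

/-! ### Linearization at the dislocation profile -/

theorem stmt4 (α : ℝ) (hα : 0 < α) (γ : ℝ → ℝ) (hγreg : ContDiff ℝ 4 γ)
    (hγeven : ∀ ξ : ℝ, γ (-ξ) = γ ξ) (hγper : ∀ ξ : ℝ, γ (ξ + 1) = γ ξ)
    (hγnn : ∀ ξ : ℝ, 0 ≤ γ ξ) (hγzero : ∀ ξ : ℝ, γ ξ = 0 ↔ ∃ n : ℤ, ξ = (n : ℝ))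
    (hγ'' : 0 < iteratedDeriv 2 γ 0)
    -- φ is the dislocation solution of the PN model
    (φ : ℝ → ℝ) (hφreg : ContDiff ℝ 2 φ) (hφmono : StrictMono φ)
    (hφode : ∀ x : ℝ, -(α/2) * iteratedDeriv 2 φ x + deriv γ (φ x) = 0)
    (hφbot : Tendsto φ atBot (nhds 0)) (hφtop : Tendsto φ atTop (nhds 1))
    (hφ0 : φ 0 = 1/2)
    (hφ' : ∀ x : ℝ, deriv φ x = Real.sqrt ((4/α) * γ (φ x))) :
    ∃ κ : ℝ, 0 < κ ∧
      ∀ g : LocH1 × LocH1, g.1.toFun 0 = 0 → g.2.toFun 0 = 0 →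
        Integrable (fun x => g.1.dFun x ^ 2) → Integrable (fun x => g.2.dFun x ^ 2) →
        Integrable (fun x => (g.1.toFun x - g.2.toFun x) ^ 2) →
        κ * ((∫ x : ℝ, g.1.dFun x ^ 2) + (∫ x : ℝ, g.2.dFun x ^ 2) +
              ∫ x : ℝ, (g.1.toFun x - g.2.toFun x) ^ 2) ≤
          ∫ x : ℝ, (α * g.1.dFun x ^ 2 + α * g.2.dFun x ^ 2 +
            iteratedDeriv 2 γ (φ x) * (g.1.toFun x - g.2.toFun x) ^ 2) := by
  have hγ1 : ∀ x, HasDerivAt γ (deriv γ x) x := fun x =>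
    (hγreg.differentiable (by norm_num) x).hasDerivAt
  have hγ1reg : ContDiff ℝ 1 (deriv γ) := by
    have : ContDiff ℝ (1 + 1) γ := hγreg.of_le (by norm_num)
    exact ((contDiff_succ_iff_deriv).1 this).2.2
  have hγ2 : ∀ x, HasDerivAt (deriv γ) (iteratedDeriv 2 γ x) x := fun x => by
    have := (hγ1reg.differentiable (by norm_num) x).hasDerivAt
    rwa [iteratedDeriv_succ, iteratedDeriv_one]
  have hγ2c : Continuous (iteratedDeriv 2 γ) :=
    hγreg.continuous_iteratedDeriv 2 (by norm_num)
  have hγ2per : Function.Periodic (iteratedDeriv 2 γ) 1 := fun x => by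
    have := congrFun (iteratedDeriv_comp_add_const 2 γ 1) x
    rw [← this, funext hγper]
  obtain ⟨B, hB, hγ2b⟩ : ∃ B : ℝ, 0 < B ∧ ∀ x, |iteratedDeriv 2 γ x| ≤ B := by
    obtain ⟨C, hC⟩ := (isCompact_Icc (a := (0:ℝ)) (b := 1)).exists_bound_of_continuousOn
      hγ2c.continuousOn
    refine ⟨max C 1, by positivity, fun x => ?_⟩
    obtain ⟨y, hy, hxy⟩ := hγ2per.exists_mem_Ico₀ one_pos x
    rw [hxy]
    exact (hC y ⟨hy.1, hy.2.le⟩).trans (le_max_left _ _)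
  have hγ0 : γ 0 = 0 := (hγzero 0).2 ⟨0, by simp⟩
  have hodd : ∀ x, deriv γ (-x) = -deriv γ x := fun x => by
    have := deriv_comp_neg γ x
    rw [funext hγeven] at this
    linarith
  have hγ10 : deriv γ 0 = 0 := by have := hodd 0; rw [neg_zero] at this; linarith
  have hrefl : ∀ x, γ (1 - x) = γ x := fun x => by
    rw [← hγeven x, ← hγper (-x)]; ring_nf
  have hrefl1 : ∀ x, deriv γ (1 - x) = -deriv γ x := fun x => by
    have := deriv_comp_const_sub (f := γ) (a := 1) (x := x)
    rw [funext hrefl] at this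
    linarith
  obtain ⟨a, δ, ha, hδ, hnear⟩ := deriv_sq_ge_near hγ1 hγ2 hγ2c hγ0 hγ10 hγ''
  have hφlt : ∀ x, φ x < 1 := fun x =>
    (hφmono (lt_add_one x)).trans_le (hφmono.monotone.ge_of_tendsto hφtop _)
  have hφgt : ∀ x, 0 < φ x := fun x =>
    (hφmono.monotone.le_of_tendsto hφbot (x - 1)).trans_lt (hφmono (sub_one_lt x))
  have hγpos : ∀ x, 0 < γ (φ x) := fun x => by
    refine (hγnn _).lt_of_ne' fun h => ?_
    obtain ⟨n, hn⟩ := (hγzero _).1 h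
    have h1 := hφgt x
    have h2 := hφlt x
    rw [hn] at h1 h2
    have h3 : 0 < n := by exact_mod_cast h1
    have h4 : n < 1 := by exact_mod_cast h2
    omega
  have hφ1 : ∀ x, HasDerivAt φ (deriv φ x) x := fun x =>
    (hφreg.differentiable (by norm_num) x).hasDerivAt
  have hφ1reg : ContDiff ℝ 1 (deriv φ) := by
    have : ContDiff ℝ (1 + 1) φ := hφreg.of_le (by norm_num)
    exact ((contDiff_succ_iff_deriv).1 this).2.2
  have hφ2 : ∀ x, HasDerivAt (deriv φ) (2 / α * deriv γ (φ x)) x := fun x => by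
    have h := (hφ1reg.differentiable (by norm_num) x).hasDerivAt
    have h2 := hφode x
    rw [iteratedDeriv_succ, iteratedDeriv_one] at h2
    refine h.congr_deriv ?_
    field_simp
    linarith
  have hψpos : ∀ x, 0 < deriv φ x := fun x => by
    rw [hφ']
    have := hγpos x
    positivity
  have hψsq : ∀ x, deriv φ x ^ 2 = 4 / α * γ (φ x) := fun x => by
    rw [hφ', Real.sq_sqrt]
    have := hγpos x
    positivity
  -- The logarithmic derivative of the ground state `φ'`.
  let w : ℝ → ℝ := fun x => 2 / α * deriv γ (φ x) / deriv φ x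
  have hw : ∀ x, HasDerivAt w (2 / α * iteratedDeriv 2 γ (φ x) - w x ^ 2) x := fun x => by
    have h := ((((hγ2 (φ x)).comp x (hφ1 x)).const_mul (2 / α)).div (hφ2 x) (hψpos x).ne')
    refine h.congr_deriv ?_
    have := (hψpos x).ne'
    simp only [w, Function.comp_apply]
    field_simp
  have hwsq : ∀ x, w x ^ 2 = deriv γ (φ x) ^ 2 / (α * γ (φ x)) := fun x => by
    have := (hγpos x).ne'
    simp only [w]
    rw [div_pow, hψsq]
    field_simp
    ring
  have hwM : ∀ x, |w x| ≤ Real.sqrt (2 * B / α) := fun x => by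
    apply Real.abs_le_sqrt
    have h0 := hγpos x
    have := deriv_sq_le_of_nonneg hγ1 hγ2 hγnn hB (fun y => (abs_le.1 (hγ2b y)).2) (φ x)
    rw [hwsq, div_le_div_iff₀ (by positivity) hα]
    nlinarith
  have hwm : ∀ x, 2 * a * γ (φ x) ≤ deriv γ (φ x) ^ 2 → Real.sqrt (2 * a / α) ≤ |w x| :=
      fun x hx => by
    rw [← Real.sqrt_sq_eq_abs]
    apply Real.sqrt_le_sqrt
    have h0 := hγpos x
    rw [hwsq, div_le_div_iff₀ hα (by positivity)]
    nlinarith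
  obtain ⟨R₁, hR₁⟩ := eventually_atTop.1
    (hφtop.eventually (lt_mem_nhds (show 1 - δ < 1 by linarith)))
  obtain ⟨R₂, hR₂⟩ := eventually_atBot.1 (hφbot.eventually (gt_mem_nhds hδ))
  have hqc : Continuous fun x => 2 / α * iteratedDeriv 2 γ (φ x) :=
    continuous_const.mul (hγ2c.comp hφreg.continuous)
  obtain ⟨c, hc, hcoer⟩ := line_coercive (w₀ := w) (M := Real.sqrt (2 * B / α))
    (m := Real.sqrt (2 * a / α)) (R := max R₁ (-R₂)) (b := 2 / α * B) hw hqc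
    (fun x => by
      rw [abs_mul, abs_of_pos (by positivity : 0 < 2 / α)]
      gcongr; exact hγ2b _)
    hwM (by positivity)
    (fun x hx => by
      obtain ⟨h1, h2⟩ := hnear (1 - φ x) (by linarith [hφlt x])
        (by linarith [hR₁ x ((le_max_left _ _).trans hx)])
      rw [hrefl1] at h1 h2
      rw [hrefl, neg_sq] at h2
      have h3 := hwm x h2
      have h4 : w x ≤ 0 := div_nonpos_of_nonpos_of_nonneg
        (mul_nonpos_of_nonneg_of_nonpos (by positivity) (by linarith)) (hψpos x).le
      rw [abs_of_nonpos h4] at h3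
      linarith)
    (fun x hx => by
      obtain ⟨h1, h2⟩ := hnear (φ x) (hφgt x)
        (hR₂ x (by linarith [le_max_right R₁ (-R₂)]))
      have h3 := hwm x h2
      have h4 : 0 ≤ w x := div_nonneg (mul_nonneg (by positivity) h1) (hψpos x).le
      rwa [abs_of_nonneg h4] at h3)
  -- With `Q` the energy, `k` is the sum of the constants in `∫ u² ≤ 2/(α c) Q` and
  -- `α ∫ (g⁺'² + g⁻'²) ≤ Q + B ∫ u²`.
  set k := 2 / (α * c) + (1 + B * (2 / (α * c))) / α with hk
  have hk0 : 0 < k := by positivity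
  refine ⟨k⁻¹, by positivity, fun g hg1 hg2 hd1 hd2 hu2 => ?_⟩
  set u : ℝ → ℝ := fun x => g.1.toFun x - g.2.toFun x with hu
  have hdd : Integrable fun x => (g.1.dFun x - g.2.dFun x) ^ 2 := by
    refine ((hd1.const_mul 2).add (hd2.const_mul 2)).mono'
      ((g.1.locInt.aestronglyMeasurable.sub g.2.locInt.aestronglyMeasurable).pow 2)
      (Eventually.of_forall fun x => ?_)
    rw [Real.norm_of_nonneg (sq_nonneg _)]
    simp only [Pi.add_apply]
    linarith [sq_nonneg (g.1.dFun x + g.2.dFun x)]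
  have hVu : Integrable fun x => iteratedDeriv 2 γ (φ x) * u x ^ 2 :=
    hu2.bdd_mul (c := B) (hγ2c.comp hφreg.continuous).aestronglyMeasurable
      (Eventually.of_forall fun x => hγ2b _)
  have key := hcoer u (fun x => g.1.dFun x - g.2.dFun x) (g.1.locInt.sub g.2.locInt)
    (fun x => by
      rw [intervalIntegral.integral_sub
        (g.1.locInt.integrableOn_isCompact isCompact_uIcc).intervalIntegrable
        (g.2.locInt.integrableOn_isCompact isCompact_uIcc).intervalIntegrable]
      simp only [hu]
      rw [g.1.ftc x, g.2.ftc x, hg1, hg2]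
      ring) hdd hu2
  have eQ : ∫ x, (α * g.1.dFun x ^ 2 + α * g.2.dFun x ^ 2 +
      iteratedDeriv 2 γ (φ x) * u x ^ 2) = α * ((∫ x, g.1.dFun x ^ 2) + ∫ x, g.2.dFun x ^ 2) +
      ∫ x, iteratedDeriv 2 γ (φ x) * u x ^ 2 := by
    have h12 : Integrable fun x => α * g.1.dFun x ^ 2 + α * g.2.dFun x ^ 2 :=
      (hd1.const_mul α).add (hd2.const_mul α)
    rw [integral_add h12 hVu, integral_add (hd1.const_mul α) (hd2.const_mul α), integral_const_mul, integral_const_mul]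
    ring
  -- `(g⁺ - g⁻)'² ≤ 2 (g⁺'² + g⁻'²)` transfers the scalar estimate to the pair.
  have hle : ∫ x, ((g.1.dFun x - g.2.dFun x) ^ 2 +
      2 / α * iteratedDeriv 2 γ (φ x) * u x ^ 2) ≤
      ∫ x, 2 / α * (α * g.1.dFun x ^ 2 + α * g.2.dFun x ^ 2 +
        iteratedDeriv 2 γ (φ x) * u x ^ 2) := by
    refine integral_mono ?_
      ((((hd1.const_mul α).add (hd2.const_mul α)).add hVu).const_mul (2 / α)) fun x => ?_
    · simp only [mul_assoc]
      exact hdd.add (hVu.const_mul (2 / α))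
    · have e : 2 / α * (α * g.1.dFun x ^ 2 + α * g.2.dFun x ^ 2 +
          iteratedDeriv 2 γ (φ x) * u x ^ 2) = 2 * g.1.dFun x ^ 2 + 2 * g.2.dFun x ^ 2 +
          2 / α * iteratedDeriv 2 γ (φ x) * u x ^ 2 := by field_simp
      simp only [e]
      linarith [sq_nonneg (g.1.dFun x + g.2.dFun x)]
  rw [integral_const_mul] at hle
  have hVlow : -(B * ∫ x, u x ^ 2) ≤ ∫ x, iteratedDeriv 2 γ (φ x) * u x ^ 2 := by
    rw [← integral_const_mul, ← integral_neg]
    refine integral_mono (hu2.const_mul B).neg hVu fun x => ?_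
    have := mul_le_mul_of_nonneg_right (abs_le.1 (hγ2b (φ x))).1 (sq_nonneg (u x))
    simp only
    linarith
  set Q := ∫ x, (α * g.1.dFun x ^ 2 + α * g.2.dFun x ^ 2 +
      iteratedDeriv 2 γ (φ x) * u x ^ 2) with hQ
  have hU : ∫ x, u x ^ 2 ≤ 2 / (α * c) * Q := by
    have h1 := key.trans hle
    have e : 2 / (α * c) * Q = (2 / α * Q) / c := by field_simp
    rw [e, le_div_iff₀ hc]
    linarith
  have hS : (∫ x, g.1.dFun x ^ 2) + (∫ x, g.2.dFun x ^ 2) ≤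
      (1 + B * (2 / (α * c))) / α * Q := by
    have h1 := mul_le_mul_of_nonneg_left hU hB.le
    rw [div_mul_eq_mul_div, le_div_iff₀ hα]
    linarith
  rw [inv_mul_le_iff₀ hk0, hk, add_mul]
  linarith
end
end

section
/- Let f : ℝ → ℝ be continuously differentiable with f and f' Lebesgue integrable on ℝ, let ε > 0, and let s ≥ 1 be an integer. Then ε Σ_{i∈ℤ} sup{|f(x)| : ε(i−s) ≤ x ≤ ε(i+s)} ≤ 2sε ∫_ℝ |f'(x)| dx + ∫_ℝ |f(x)| dx. If in addition f is bounded, then ε Σ_{i∈ℤ} ( sup{|f(x)| : ε(i−s) ≤ x ≤ ε(i+s)} )² ≤ (sup_{x∈ℝ} |f(x)|) · (2sε ∫_ℝ |f'(x)| dx + ∫_ℝ |f(x)| dx). -/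
/-!
On each window the supremum of `|f|` is attained, at `x` say. For every `y` in the cell
`(ε i, ε (i + 1)]`, which lies in the window because `s ≥ 1`, the fundamental theorem of calculus
gives `|f x| ≤ |f y| + ∫_window |f'|`. Averaging over `y` in the cell yields
`ε sup |f| ≤ ∫_cell |f| + ε ∫_window |f'|` (`cell_estimate`). The cells partition the line
(`tsum_cell`), and each window is a union of `2s` cells, so that the windows cover every point
`2s` times (`tsum_window_le`); summing over `i` gives the first bound. The second follows from
`(sup_window |f|)² ≤ (sup_ℝ |f|) · sup_window |f|`. Sums and integrals are handled in `ℝ≥0∞`, where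
they can be rearranged freely.
-/

noncomputable section
open MeasureTheory
open scoped ENNReal

/-- Local supremum of `|f|` on the window of radius `ε s` around the grid point `ε i`. -/
def locSup (ε : ℝ) (s : ℤ) (f : ℝ → ℝ) (i : ℤ) : ℝ :=
  sSup ((fun x => |f x|) '' Set.Icc (ε * ((i : ℝ) - (s : ℝ))) (ε * ((i : ℝ) + (s : ℝ))))

/-- The half-open grid cell `(ε j, ε (j + 1)]`; half-open so that the cells partition `ℝ`. -/
def cell (ε : ℝ) (j : ℤ) : Set ℝ := Set.Ioc (ε * (j : ℝ)) (ε * ((j : ℝ) + 1))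

/-- The window of radius `ε s` around `ε i`, without its left endpoint (a null set), so that it is
exactly a union of cells. -/
def window (ε : ℝ) (s i : ℤ) : Set ℝ :=
  Set.Ioc (ε * ((i : ℝ) - (s : ℝ))) (ε * ((i : ℝ) + (s : ℝ)))

lemma cell_eq_zsmul (ε : ℝ) (j : ℤ) : cell ε j = Set.Ioc (j • ε) ((j + 1) • ε) := by
  simp [cell, mul_comm]

lemma volume_cell (ε : ℝ) (j : ℤ) : volume (cell ε j) = ENNReal.ofReal ε := by
  rw [cell, Real.volume_Ioc]
  congr 1
  ring

lemma tsum_cell (g : ℝ → ℝ≥0∞) {ε : ℝ} (hε : 0 < ε) :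
    ∑' j : ℤ, ∫⁻ x in cell ε j, g x = ∫⁻ x, g x := by
  simp_rw [cell_eq_zsmul]
  rw [← lintegral_iUnion (fun _ => measurableSet_Ioc) (Set.pairwise_disjoint_Ioc_zsmul ε),
    iUnion_Ioc_zsmul hε, setLIntegral_univ]

lemma window_subset (ε : ℝ) (hε : 0 < ε) (s i : ℤ) :
    window ε s i ⊆ ⋃ k ∈ Finset.Ico (-s) s, cell ε (i + k) := by
  intro x hx
  have hmem : x ∈ ⋃ j : ℤ, Set.Ioc (j • ε) ((j + 1) • ε) := by
    rw [iUnion_Ioc_zsmul hε]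
    trivial
  obtain ⟨j, hj⟩ := Set.mem_iUnion.1 hmem
  rw [← cell_eq_zsmul] at hj
  have h1 : ((i - s : ℤ) : ℝ) < ((j + 1 : ℤ) : ℝ) := by
    push_cast
    exact lt_of_mul_lt_mul_left (hx.1.trans_le hj.2) hε.le
  have h2 : (j : ℝ) < ((i + s : ℤ) : ℝ) := by
    push_cast
    exact lt_of_mul_lt_mul_left (hj.1.trans_le hx.2) hε.le
  have h1' := Int.cast_lt.1 h1
  have h2' := Int.cast_lt.1 h2
  refine Set.mem_iUnion₂.2 ⟨j - i, Finset.mem_Ico.2 ⟨by lia, by lia⟩, ?_⟩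
  rwa [add_sub_cancel]

lemma tsum_window_le (g : ℝ → ℝ≥0∞) {ε : ℝ} (hε : 0 < ε) {s : ℤ} (hs : 1 ≤ s) :
    ∑' i : ℤ, ∫⁻ x in window ε s i, g x ≤ ENNReal.ofReal (2 * (s : ℝ)) * ∫⁻ x, g x := by
  have hwin (i : ℤ) : ∫⁻ x in window ε s i, g x ≤
      ∑ k ∈ Finset.Ico (-s) s, ∫⁻ x in cell ε (i + k), g x := by
    calc ∫⁻ x in window ε s i, g x
        ≤ ∫⁻ x in ⋃ k : Finset.Ico (-s) s, cell ε (i + k), g x := by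
          refine lintegral_mono_set ((window_subset ε hε s i).trans ?_)
          rw [Set.iUnion_subtype]
      _ ≤ ∑' k : Finset.Ico (-s) s, ∫⁻ x in cell ε (i + k), g x := lintegral_iUnion_le _ _
      _ = ∑ k ∈ Finset.Ico (-s) s, ∫⁻ x in cell ε (i + k), g x :=
          Finset.tsum_subtype _ (fun k => ∫⁻ x in cell ε (i + k), g x)
  have hshift (k : ℤ) : ∑' i : ℤ, ∫⁻ x in cell ε (i + k), g x = ∫⁻ x, g x := by
    rw [← tsum_cell g hε]
    exact (Equiv.addRight k).tsum_eq (fun j => ∫⁻ x in cell ε j, g x)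
  refine (ENNReal.tsum_le_tsum hwin).trans ?_
  rw [Summable.tsum_finsetSum (fun _ _ => ENNReal.summable)]
  simp_rw [hshift]
  rw [Finset.sum_const, nsmul_eq_mul, Int.card_Ico]
  have hcard : ((s - -s).toNat : ℝ) = 2 * (s : ℝ) := by
    have h : ((s - -s).toNat : ℤ) = 2 * s := by lia
    exact_mod_cast h
  rw [← hcard, ENNReal.ofReal_natCast]

lemma exists_locSup_eq {f : ℝ → ℝ} (hf : Continuous f) {ε : ℝ} (hε : 0 < ε) {s : ℤ} (hs : 1 ≤ s)
    (i : ℤ) : ∃ x ∈ Set.Icc (ε * ((i : ℝ) - (s : ℝ))) (ε * ((i : ℝ) + (s : ℝ))),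
      locSup ε s f i = |f x| := by
  have hs' : (1 : ℝ) ≤ s := by exact_mod_cast hs
  have hne : (Set.Icc (ε * ((i : ℝ) - (s : ℝ))) (ε * ((i : ℝ) + (s : ℝ)))).Nonempty :=
    Set.nonempty_Icc.2 (mul_le_mul_of_nonneg_left (by linarith) hε.le)
  exact isCompact_Icc.exists_sSup_image_eq hne hf.abs.continuousOn

/-- The fundamental theorem of calculus as an oscillation bound in `ℝ≥0∞`. -/
lemma enorm_le_add_window {f : ℝ → ℝ} (hf : ContDiff ℝ 1 f) {a b x y : ℝ}
    (hx : x ∈ Set.Icc a b) (hy : y ∈ Set.Icc a b) :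
    ‖f x‖ₑ ≤ ‖f y‖ₑ + ∫⁻ t in Set.Ioc a b, ‖deriv f t‖ₑ := by
  have hftc : ∫ t in y..x, deriv f t = f x - f y :=
    intervalIntegral.integral_deriv_eq_sub (fun t _ => hf.differentiable one_ne_zero t)
      ((hf.continuous_deriv le_rfl).intervalIntegrable _ _)
  have hsub : Set.uIoc y x ⊆ Set.Ioc a b :=
    Set.Ioc_subset_Ioc (le_min hy.1 hx.1) (max_le hy.2 hx.2)
  have hosc : ‖f x - f y‖ₑ ≤ ∫⁻ t in Set.Ioc a b, ‖deriv f t‖ₑ := by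
    rw [← hftc, ← enorm_norm, intervalIntegral.norm_integral_eq_norm_integral_uIoc, enorm_norm]
    exact (enorm_integral_le_lintegral_enorm _).trans (lintegral_mono_set hsub)
  calc ‖f x‖ₑ = ‖f y + (f x - f y)‖ₑ := by rw [add_sub_cancel]
    _ ≤ ‖f y‖ₑ + ‖f x - f y‖ₑ := enorm_add_le _ _
    _ ≤ _ := by gcongr

/-- The oscillation bound at a maximiser, averaged over the cell to the right of `ε i`. -/
lemma cell_estimate {f : ℝ → ℝ} (hf : ContDiff ℝ 1 f) {ε : ℝ} (hε : 0 < ε) {s : ℤ} (hs : 1 ≤ s)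
    (i : ℤ) : ENNReal.ofReal (ε * locSup ε s f i) ≤
      (∫⁻ y in cell ε i, ‖f y‖ₑ) + ENNReal.ofReal ε * ∫⁻ t in window ε s i, ‖deriv f t‖ₑ := by
  obtain ⟨x, hx, hsup⟩ := exists_locSup_eq hf.continuous hε hs i
  have hs' : (1 : ℝ) ≤ s := by exact_mod_cast hs
  have hcell : ∀ y ∈ cell ε i, y ∈ Set.Icc (ε * ((i : ℝ) - (s : ℝ))) (ε * ((i : ℝ) + (s : ℝ))) :=
    fun y hy => ⟨(mul_le_mul_of_nonneg_left (by linarith) hε.le).trans hy.1.le,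
      hy.2.trans (mul_le_mul_of_nonneg_left (by linarith) hε.le)⟩
  calc ENNReal.ofReal (ε * locSup ε s f i)
      = ∫⁻ _ in cell ε i, ‖f x‖ₑ := by
        rw [hsup, ENNReal.ofReal_mul hε.le, setLIntegral_const, volume_cell, mul_comm,
          Real.enorm_eq_ofReal_abs]
    _ ≤ ∫⁻ y in cell ε i, (‖f y‖ₑ + ∫⁻ t in window ε s i, ‖deriv f t‖ₑ) :=
        setLIntegral_mono' measurableSet_Ioc fun y hy => enorm_le_add_window hf hx (hcell y hy)
    _ = _ := by
        rw [lintegral_add_right _ measurable_const, setLIntegral_const, volume_cell, mul_comm]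

theorem stmt9 (f : ℝ → ℝ) (hf : ContDiff ℝ 1 f)
    (hint : Integrable f) (hint' : Integrable (deriv f))
    (ε : ℝ) (hε : 0 < ε) (s : ℤ) (hs : 1 ≤ s) :
    (∑' i : ℤ, ENNReal.ofReal (ε * locSup ε s f i)) ≤
      ENNReal.ofReal (2 * (s : ℝ) * ε * (∫ x : ℝ, |deriv f x|) + ∫ x : ℝ, |f x|) ∧
    (BddAbove (Set.range fun x : ℝ => |f x|) →
      (∑' i : ℤ, ENNReal.ofReal (ε * (locSup ε s f i) ^ 2)) ≤
        ENNReal.ofReal ((⨆ x : ℝ, |f x|) *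
          (2 * (s : ℝ) * ε * (∫ x : ℝ, |deriv f x|) + ∫ x : ℝ, |f x|))) := by
  have hs' : (1 : ℝ) ≤ s := by exact_mod_cast hs
  have hconv {g : ℝ → ℝ} (hg : Integrable g) :
      ENNReal.ofReal (∫ x, |g x|) = ∫⁻ x, ‖g x‖ₑ :=
    ofReal_integral_norm_eq_lintegral_enorm hg
  have hfirst : (∑' i : ℤ, ENNReal.ofReal (ε * locSup ε s f i)) ≤
      ENNReal.ofReal (2 * (s : ℝ) * ε * (∫ x : ℝ, |deriv f x|) + ∫ x : ℝ, |f x|) := by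
    refine (ENNReal.tsum_le_tsum (cell_estimate hf hε hs)).trans ?_
    rw [ENNReal.tsum_add, ENNReal.tsum_mul_left, tsum_cell _ hε,
      ENNReal.ofReal_add (by positivity) (by positivity), ENNReal.ofReal_mul (by positivity),
      ENNReal.ofReal_mul (by positivity), hconv hint, hconv hint', add_comm,
      mul_comm (ENNReal.ofReal (2 * (s : ℝ))), mul_assoc]
    gcongr
    exact tsum_window_le _ hε hs
  refine ⟨hfirst, fun hbdd => ?_⟩
  have hM : 0 ≤ ⨆ x : ℝ, |f x| := Real.iSup_nonneg fun x => abs_nonneg _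
  rw [ENNReal.ofReal_mul hM]
  refine le_trans ?_ (mul_le_mul_right hfirst _)
  rw [← ENNReal.tsum_mul_left]
  refine ENNReal.tsum_le_tsum fun i => ?_
  rw [← ENNReal.ofReal_mul hM]
  apply ENNReal.ofReal_le_ofReal
  obtain ⟨x, -, hsup⟩ := exists_locSup_eq hf.continuous hε hs i
  have hle : |f x| ≤ ⨆ x : ℝ, |f x| := le_ciSup hbdd x
  rw [hsup]
  calc ε * |f x| ^ 2 = |f x| * (ε * |f x|) := by ring
    _ ≤ _ := by gcongr
end
end

section
/- There exist C > 0 and ε₀ > 0 such that for every 0 < ε < ε₀ and every f = (f⁺, f⁻) : ℤ → ℝ² with ‖f‖_{X_ε} < ∞: | (⟨δ²E_a[v]f, f⟩_ε − ⟨δ²E_PN[v]f̄, f̄⟩) − (⟨δ²E_a[0]f, f⟩_ε − ⟨δ²E_PN[0]f̄, f̄⟩) | ≤ C ε ‖f‖_{X_ε}², where δ²E_a[0] and δ²E_PN[0] denote the second variations at the zero displacement u ≡ 0. -/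
/-!
Write `P`, `Q`, `N` for the sums over the lattice of `(D₁f⁺)²`, `(D₁f⁻)²` and `(f⁺ - f⁻)²`, so that
`‖f‖²` in `X_ε` is `ε (P + Q + N)`. Taking the difference between the deformed and the undeformed
state cancels the leading terms of every second variation, and the remainder splits into three
parts, each bounded by a constant times `ε ‖f‖²`.

* Intraplane part (`intraplane_diff`). A bond of length `s` changes by `O(ε |s|)`, because the
  profile `φ` is Lipschitz. Since the third derivative of `V` is `O(|s|⁻⁵)` near `s`, the second
  changes by `O(ε |s|⁻⁴)`, while `∑ᵢ (D_s f)² ≤ s² ∑ᵢ (D₁f)²`; hence the sum over `s` converges.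
* Interplane part (`interplane_diff`). In the coefficient, `(φ(ε(i+s)) + φ(εi)) / 2` may be replaced
  by `φ(εi)` at the cost of `O(ε |s|)`, and `(f⁺_{i+s} - f⁻_i)²` by `(f⁺_i - f⁻_i)²` with an error
  `O(ε)` in terms of `(f⁺_i - f⁻_i)²` and `(D_s f⁺)²`. Summation over `s` of what remains gives
  `∑ᵢ (γ''(φ(εi)) - γ''(0)) (f⁺_i - f⁻_i)²`, since `γ''` is a lattice sum of `U''`
  (`misfit_deriv`).
* Continuum part (`QPN_diff`). The gradient terms cancel, and what is left is the integral of
  `(γ''(φ) - γ''(0)) (f̄⁺ - f̄⁻)²`. Its contribution from each cell differs from `ε` times the value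
  at the left endpoint by a relative `O(ε)`, because `γ'' ∘ φ` is Lipschitz and `f̄` is affine there.

The decay of the lower derivatives of `V` and `U` follows by integrating the bound on the fourth
derivative from infinity (`lattice_bound`). The profile is Lipschitz because `φ''` is bounded through
the equation `(α/2) φ'' = γ'(φ)` while `φ` stays between `0` and `1` (`lipschitz_of_bdd`). The double
sums are controlled by `double_sum`, which also justifies exchanging the order of summation.
-/

noncomputable section
open MeasureTheory Filter

/-- Finite difference operator `D_s⁺`. -/
def Ds (ε : ℝ) (s : ℤ) (g : ℤ → ℝ) (i : ℤ) : ℝ := (g (i + s) - g i) / ε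

/-- Squared discrete `L²_ε` norm. -/
def nsq (ε : ℝ) (h : ℤ → ℝ) : ℝ := ε * ∑' i : ℤ, (h i) ^ 2

/-- Squared `X_ε` norm of a pair of grid functions. -/
def Xsq (ε : ℝ) (fp fm : ℤ → ℝ) : ℝ :=
  nsq ε (Ds ε 1 fp) + nsq ε (Ds ε 1 fm) + nsq ε (fun i => fp i - fm i)

/-- Finiteness of the `X_ε` norm of a pair of grid functions. -/
def XFin (ε : ℝ) (fp fm : ℤ → ℝ) : Prop :=
  Summable (fun i : ℤ => (Ds ε 1 fp i) ^ 2) ∧ Summable (fun i : ℤ => (Ds ε 1 fm i) ^ 2) ∧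
    Summable (fun i : ℤ => (fp i - fm i) ^ 2)

/-- The symmetry class `M_ε`: `f_i⁺ = −f_i⁻ = −f_{−i}⁺`. -/
def Meps (fp fm : ℤ → ℝ) : Prop := ∀ i : ℤ, fp i = -fm i ∧ -fm i = -fp (-i)

/-- First variation of the atomistic energy, `⟨δE_a[u], f⟩_ε`. -/
def dEa (ε : ℝ) (V U : ℝ → ℝ) (up um fp fm : ℤ → ℝ) : ℝ :=
  (∑' i : ℤ, ∑' s : ℤ,
      if s = 0 then 0 else
        (1/2) * (deriv V ((s : ℝ) + ε * Ds ε s up i) * Ds ε s fp i +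
          deriv V ((s : ℝ) + ε * Ds ε s um i) * Ds ε s fm i)) +
  ε * ∑' i : ℤ, ∑' s : ℤ,
      deriv U ((s : ℝ) - 1/2 + up (i + s) - um i) * (fp (i + s) - fm i)

/-- Second variation of the atomistic energy, `⟨δ²E_a[u]f, g⟩_ε`. -/
def d2Ea (ε : ℝ) (V U : ℝ → ℝ) (up um fp fm gp gm : ℤ → ℝ) : ℝ :=
  ε * (∑' i : ℤ, ∑' s : ℤ,
      if s = 0 then 0 else
        (1/2) * (iteratedDeriv 2 V ((s : ℝ) + ε * Ds ε s up i) * Ds ε s fp i * Ds ε s gp i +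
          iteratedDeriv 2 V ((s : ℝ) + ε * Ds ε s um i) * Ds ε s fm i * Ds ε s gm i)) +
  ε * ∑' i : ℤ, ∑' s : ℤ,
      iteratedDeriv 2 U ((s : ℝ) - 1/2 + up (i + s) - um i) *
        (fp (i + s) - fm i) * (gp (i + s) - gm i)

/-- Continuous piecewise-linear interpolation of a grid function. -/
def interp (ε : ℝ) (g : ℤ → ℝ) (x : ℝ) : ℝ :=
  g ⌊x / ε⌋ + (x / ε - (⌊x / ε⌋ : ℝ)) * (g (⌊x / ε⌋ + 1) - g ⌊x / ε⌋)

/-- Continuum second variation `⟨δ²E_PN[u]h, h⟩` where `ψ = u⁺ − u⁻`. -/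
def QPN (α : ℝ) (γ ψ : ℝ → ℝ) (hp hm : ℝ → ℝ) : ℝ :=
  ∫ x : ℝ, (α * (deriv hp x) ^ 2 + α * (deriv hm x) ^ 2 +
    iteratedDeriv 2 γ (ψ x) * (hp x - hm x) ^ 2)

/-! ### Decay of the potentials -/

/-- Integrating a one-sided power bound on the derivative from infinity. -/
lemma decay_one_sided {g g' : ℝ → ℝ} {a : ℝ} (ha : 0 < a) {n : ℕ} (hn : 1 ≤ n)
    (hd : ∀ x, a ≤ x → HasDerivAt g (g' x) x)
    (hb : ∀ x, a ≤ x → -g' x ≤ 1 / x ^ (n + 1))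
    (hlim : Tendsto g atTop (nhds 0)) : ∀ x, a ≤ x → g x ≤ 1 / x ^ n := by
  intro x hx
  -- `g - x⁻ⁿ` is nondecreasing and vanishes at infinity
  have hder : ∀ y, a ≤ y →
      HasDerivAt (fun y => g y - (y ^ n)⁻¹) (g' y - -(n * y ^ (n - 1)) / (y ^ n) ^ 2) y := by
    intro y hy
    have hy0 : y ≠ 0 := (ha.trans_le hy).ne'
    exact (hd y hy).sub ((hasDerivAt_pow n y).inv (pow_ne_zero n hy0))
  have hmono : MonotoneOn (fun y => g y - (y ^ n)⁻¹) (Set.Ici a) := by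
    apply monotoneOn_of_deriv_nonneg (convex_Ici a)
    · exact fun y hy => (hder y hy).continuousAt.continuousWithinAt
    · rw [interior_Ici]
      exact fun y hy => (hder y (le_of_lt hy)).differentiableAt.differentiableWithinAt
    · rw [interior_Ici]
      intro y hy
      have hy' : a < y := hy
      have hy0 : 0 < y := ha.trans hy'
      rw [(hder y hy'.le).deriv]
      have h1 := hb y hy'.le
      have h2 : -(n * y ^ (n - 1)) / (y ^ n) ^ 2 = -(n * (1 / y ^ (n + 1))) := by
        obtain ⟨m, rfl⟩ : ∃ m, n = m + 1 := ⟨n - 1, by omega⟩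
        simp only [Nat.add_sub_cancel]
        field_simp
        ring
      have h3 : (1 : ℝ) ≤ n := by exact_mod_cast hn
      have h4 : 0 < 1 / y ^ (n + 1) := by positivity
      rw [h2]
      nlinarith
  have hlim' : Tendsto (fun y => g y - (y ^ n)⁻¹) atTop (nhds 0) := by
    have := hlim.sub ((tendsto_pow_atTop (α := ℝ) (n := n) (by omega)).inv_tendsto_atTop)
    simpa using this
  have : g x - (x ^ n)⁻¹ ≤ 0 := by
    refine ge_of_tendsto hlim' ?_
    filter_upwards [eventually_ge_atTop x] with y hy
    exact hmono hx (hx.trans hy) hy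
  rw [one_div]; linarith

lemma decay_step {g g' : ℝ → ℝ} {a : ℝ} (ha : 0 < a) {n : ℕ} (hn : 1 ≤ n)
    (hd : ∀ x, a ≤ x → HasDerivAt g (g' x) x)
    (hb : ∀ x, a ≤ x → |g' x| ≤ 1 / x ^ (n + 1))
    (hlim : Tendsto g atTop (nhds 0)) : ∀ x, a ≤ x → |g x| ≤ 1 / x ^ n := by
  intro x hx
  have h1 := decay_one_sided ha hn hd (fun y hy => (neg_le_abs _).trans (hb y hy)) hlim x hx
  have h2 := decay_one_sided (g := fun y => -g y) (g' := fun y => -g' y) ha hn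
    (fun y hy => (hd y hy).neg)
    (fun y hy => by simpa using (le_abs_self _).trans (hb y hy)) (by simpa using hlim.neg) x hx
  exact abs_le.2 ⟨by linarith, h1⟩

lemma iter_hasDerivAt {F : ℝ → ℝ} (hF : ContDiffOn ℝ 4 F {x : ℝ | x ≠ 0}) {k : ℕ} (hk : k ≤ 3)
    {x : ℝ} (hx : x ≠ 0) : HasDerivAt (iteratedDeriv k F) (iteratedDeriv (k + 1) F x) x := by
  have hopen : IsOpen {x : ℝ | x ≠ 0} := isOpen_ne
  have h1 : DifferentiableOn ℝ (iteratedDerivWithin k F {x : ℝ | x ≠ 0}) {x : ℝ | x ≠ 0} :=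
    hF.differentiableOn_iteratedDerivWithin (by exact_mod_cast (by omega : k < 4))
      hopen.uniqueDiffOn
  have h2 : DifferentiableOn ℝ (iteratedDeriv k F) {x : ℝ | x ≠ 0} :=
    h1.congr fun y hy => (iteratedDerivWithin_of_isOpen hopen hy).symm
  rw [iteratedDeriv_succ]
  exact (h2.differentiableAt (hopen.mem_nhds hx)).hasDerivAt

lemma iter_abs_even {F : ℝ → ℝ} (hF : ∀ x, F (-x) = F x) (k : ℕ) (x : ℝ) :
    |iteratedDeriv k F (|x|)| = |iteratedDeriv k F x| := by
  rcases abs_cases x with ⟨h, _⟩ | ⟨h, _⟩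
  · rw [h]
  · have h1 := iteratedDeriv_comp_neg k F x
    rw [funext hF] at h1
    rw [h, h1, smul_eq_mul, abs_mul, abs_pow, abs_neg, abs_one, one_pow, one_mul]

/-- The derivatives of an even function with an inverse sixth power bound on the fourth
derivative decay like the corresponding inverse powers. -/
lemma tail_bound {F : ℝ → ℝ} {R p : ℝ} (hp : p ≤ -6)
    (heven : ∀ x : ℝ, F (-x) = F x) (hreg : ContDiffOn ℝ 4 F {x : ℝ | x ≠ 0})
    (hdecay : ∀ x : ℝ, R ≤ |x| → |iteratedDeriv 4 F x| ≤ |x| ^ p)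
    (hlim : ∀ k : ℕ, k ≤ 3 →
      Tendsto (fun x : ℝ => iteratedDeriv k F x) (Filter.cocompact ℝ) (nhds 0)) :
    ∀ k : ℕ, k ≤ 3 → ∀ x : ℝ, max R 1 ≤ |x| → |iteratedDeriv k F x| ≤ 1 / |x| ^ (2 + k) := by
  have ha : 0 < max R 1 := lt_max_of_lt_right one_pos
  have h4 : ∀ x : ℝ, max R 1 ≤ x → |iteratedDeriv 4 F x| ≤ 1 / x ^ 6 := by
    intro x hx
    have hx1 : 1 ≤ x := (le_max_right _ _).trans hx
    have hx0 : |x| = x := abs_of_nonneg (by linarith)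
    have := hdecay x (by rw [hx0]; exact (le_max_left _ _).trans hx)
    rw [hx0] at this
    refine this.trans ((Real.rpow_le_rpow_of_exponent_le hx1 hp).trans_eq ?_)
    rw [Real.rpow_neg (by linarith), one_div]
    norm_cast
  have step : ∀ k : ℕ, k ≤ 3 →
      (∀ x : ℝ, max R 1 ≤ x → |iteratedDeriv (k + 1) F x| ≤ 1 / x ^ (2 + (k + 1))) →
      ∀ x : ℝ, max R 1 ≤ x → |iteratedDeriv k F x| ≤ 1 / x ^ (2 + k) := fun k hk h =>
    decay_step ha (by omega) (fun x hx => iter_hasDerivAt hreg hk (ha.trans_le hx).ne') h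
      ((hlim k hk).mono_left atTop_le_cocompact)
  have h3 := step 3 (by norm_num) h4
  have h2 := step 2 (by norm_num) h3
  have h1 := step 1 (by norm_num) h2
  have h0 := step 0 (by norm_num) h1
  intro k hk x hx
  rw [← iter_abs_even heven]
  interval_cases k
  · exact h0 _ hx
  · exact h1 _ hx
  · exact h2 _ hx
  · exact h3 _ hx

/-- Bounds of order `(1 + |s|)^(-2-k)` for `F^(k)` near the lattice point `s`, on a closed set `K`
where these derivatives are continuous. -/
lemma lattice_bound {F : ℝ → ℝ} {R p : ℝ} (hp : p ≤ -6)
    (heven : ∀ x : ℝ, F (-x) = F x) (hreg : ContDiffOn ℝ 4 F {x : ℝ | x ≠ 0})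
    (hdecay : ∀ x : ℝ, R ≤ |x| → |iteratedDeriv 4 F x| ≤ |x| ^ p)
    (hlim : ∀ k : ℕ, k ≤ 3 →
      Tendsto (fun x : ℝ => iteratedDeriv k F x) (Filter.cocompact ℝ) (nhds 0))
    {K : Set ℝ} (hK : IsClosed K)
    (hc : ∀ k : ℕ, k ≤ 3 → ContinuousOn (iteratedDeriv k F) K) {k : ℕ} (hk : k ≤ 3) :
    ∃ C : ℝ, 0 < C ∧ ∀ s : ℤ, ∀ x ∈ K, |x - s| ≤ 3 →
      |iteratedDeriv k F x| ≤ C / (1 + |(s : ℝ)|) ^ (2 + k) := by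
  set a := max R 1 with ha
  have ha1 : 1 ≤ a := le_max_right _ _
  have hcomp : IsCompact (K ∩ Set.Icc (-a) a) := isCompact_Icc.inter_left hK
  obtain ⟨M, hM⟩ := hcomp.exists_bound_of_continuousOn ((hc k hk).mono Set.inter_subset_left)
  have hM' : ∀ x ∈ K, |iteratedDeriv k F x| ≤ (|M| * (1 + a) ^ (2 + k) + 2 ^ (2 + k)) /
      (1 + |x|) ^ (2 + k) := by
    intro x hx
    have hx1 : 0 < (1 + |x|) ^ (2 + k) := by positivity
    rw [le_div_iff₀ hx1]
    rcases le_total a |x| with h | h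
    · have h1 := tail_bound hp heven hreg hdecay hlim k hk x h
      have hx0 : 0 < |x| := by linarith
      have h2 : (1 + |x|) ^ (2 + k) ≤ 2 ^ (2 + k) * |x| ^ (2 + k) := by
        rw [← mul_pow]; gcongr; linarith
      calc |iteratedDeriv k F x| * (1 + |x|) ^ (2 + k)
          ≤ 1 / |x| ^ (2 + k) * (2 ^ (2 + k) * |x| ^ (2 + k)) := by gcongr
        _ = 2 ^ (2 + k) := by field_simp
        _ ≤ _ := by
          have : 0 ≤ |M| * (1 + a) ^ (2 + k) := by positivity
          linarith
    · have h1 : |iteratedDeriv k F x| ≤ |M| :=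
        (hM x ⟨hx, abs_le.1 h⟩).trans (le_abs_self M)
      calc |iteratedDeriv k F x| * (1 + |x|) ^ (2 + k)
          ≤ |M| * (1 + a) ^ (2 + k) := by gcongr
        _ ≤ _ := by
          have : (0 : ℝ) ≤ 2 ^ (2 + k) := by positivity
          linarith
  refine ⟨(|M| * (1 + a) ^ (2 + k) + 2 ^ (2 + k)) * 4 ^ (2 + k), by positivity, ?_⟩
  intro s x hx hxs
  refine (hM' x hx).trans ?_
  have h1 : 1 + |(s : ℝ)| ≤ 4 * (1 + |x|) := by
    have := abs_sub_abs_le_abs_sub (s : ℝ) x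
    rw [abs_sub_comm] at this
    have := abs_nonneg x
    linarith
  rw [div_le_div_iff₀ (by positivity) (by positivity), mul_assoc]
  gcongr
  rw [← mul_pow]
  gcongr

/-! ### Lattice sums -/

lemma summable_weight : Summable fun s : ℤ => (1 + (s : ℝ) ^ 2) / (1 + |(s : ℝ)|) ^ 4 := by
  have h0 : Summable fun n : ℕ => 1 / (1 + (n : ℝ)) ^ 2 := by
    have := (summable_nat_add_iff 1).2 (Real.summable_one_div_nat_pow.2 (one_lt_two))
    refine this.congr fun n => ?_
    push_cast
    rw [add_comm]
  have h1 : Summable fun s : ℤ => 1 / (1 + |(s : ℝ)|) ^ 2 := by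
    apply Summable.of_nat_of_neg <;> simpa using h0
  refine Summable.of_nonneg_of_le (fun s => by positivity) (fun s => ?_) h1
  rw [div_le_div_iff₀ (by positivity) (by positivity)]
  have : 1 + (s : ℝ) ^ 2 ≤ (1 + |(s : ℝ)|) ^ 2 := by
    nlinarith [abs_nonneg (s : ℝ), sq_abs (s : ℝ)]
  calc (1 + (s : ℝ) ^ 2) * (1 + |(s : ℝ)|) ^ 2
      ≤ (1 + |(s : ℝ)|) ^ 2 * (1 + |(s : ℝ)|) ^ 2 := by gcongr
    _ = _ := by ring

lemma summable_weight' {k : ℕ} (hk : 2 ≤ k) :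
    Summable fun s : ℤ => 1 / (1 + |(s : ℝ)|) ^ k := by
  have h0 : Summable fun n : ℕ => 1 / (1 + (n : ℝ)) ^ k := by
    have := (summable_nat_add_iff 1).2 (Real.summable_one_div_nat_pow.2 (show 1 < k by omega))
    refine this.congr fun n => ?_
    push_cast
    rw [add_comm]
  apply Summable.of_nat_of_neg <;> simpa using h0

/-- The absolute constant collecting the weights of all interaction ranges. -/
def latticeConst : ℝ := ∑' s : ℤ, (1 + (s : ℝ) ^ 2) / (1 + |(s : ℝ)|) ^ 4

lemma latticeConst_pos : 0 < latticeConst :=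
  summable_weight.tsum_pos (fun s => by positivity) 0 (by simp)

/-- Weighted domination of a double lattice sum; absolute summability lets the order of summation
be exchanged. -/
lemma double_sum {a : ℤ → ℤ → ℝ} {b : ℤ → ℤ → ℝ} {c B : ℝ} (hc : 0 ≤ c)
    (hab : ∀ i s, |a i s| ≤ c / (1 + |(s : ℝ)|) ^ 4 * b s i)
    (hb0 : ∀ s i, 0 ≤ b s i)
    (hb : ∀ s, Summable (b s)) (hB : ∀ s, ∑' i, b s i ≤ (1 + (s : ℝ) ^ 2) * B) :
    Summable (Function.uncurry a) ∧ |∑' i, ∑' s, a i s| ≤ c * latticeConst * B := by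
  obtain ⟨w, hw⟩ : ∃ w : ℤ → ℝ, ∀ s, w s = c / (1 + |(s : ℝ)|) ^ 4 := ⟨_, fun _ => rfl⟩
  have hw0 : ∀ s, 0 ≤ w s := fun s => by rw [hw]; positivity
  have hle : ∀ s, ∑' i, w s * b s i ≤
      (1 + (s : ℝ) ^ 2) / (1 + |(s : ℝ)|) ^ 4 * (c * B) := by
    intro s
    rw [tsum_mul_left]
    calc w s * ∑' i, b s i ≤ w s * ((1 + (s : ℝ) ^ 2) * B) := by
          exact mul_le_mul_of_nonneg_left (hB s) (hw0 s)
      _ = _ := by rw [hw]; ring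
  have hS1 : Summable fun s => ∑' i, w s * b s i :=
    Summable.of_nonneg_of_le (fun s => tsum_nonneg fun i => mul_nonneg (hw0 s) (hb0 s i)) hle
      (summable_weight.mul_right _)
  have hnn : 0 ≤ fun q : ℤ × ℤ => w q.1 * b q.1 q.2 := by
    intro q
    exact mul_nonneg (hw0 q.1) (hb0 q.1 q.2)
  have hS2 : Summable fun q : ℤ × ℤ => w q.1 * b q.1 q.2 := by
    rw [summable_prod_of_nonneg hnn]
    exact ⟨fun s => (hb s).mul_left (w s), hS1⟩
  have hS3 : Summable fun q : ℤ × ℤ => w q.2 * b q.2 q.1 :=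
    hS2.prod_symm
  have hS : Summable (Function.uncurry a) :=
    Summable.of_norm_bounded hS3 fun q => by
      rw [hw]; exact hab q.1 q.2
  refine ⟨hS, ?_⟩
  have h1 : ∑' i, ∑' s, a i s = ∑' q, Function.uncurry a q := hS.tsum_prod.symm
  rw [h1]
  calc |∑' q, Function.uncurry a q| ≤ ∑' q : ℤ × ℤ, w q.2 * b q.2 q.1 := by
        rw [← Real.norm_eq_abs]
        exact tsum_of_norm_bounded hS3.hasSum
          fun q => by rw [hw]; exact hab q.1 q.2
    _ = ∑' q : ℤ × ℤ, w q.1 * b q.1 q.2 :=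
        (Equiv.prodComm ℤ ℤ).tsum_eq (fun q : ℤ × ℤ => w q.1 * b q.1 q.2)
    _ = ∑' s, ∑' i, w s * b s i := hS2.tsum_prod
    _ ≤ ∑' s : ℤ, (1 + (s : ℝ) ^ 2) / (1 + |(s : ℝ)|) ^ 4 * (c * B) :=
        hS1.tsum_le_tsum hle (summable_weight.mul_right _)
    _ = c * latticeConst * B := by rw [tsum_mul_right, latticeConst]; ring

/-- `‖D_s f‖ ≤ s ‖D f‖` for a positive range `s`. -/
lemma Ds_nat {ε : ℝ} {f : ℤ → ℝ} (hf : Summable fun i => (Ds ε 1 f i) ^ 2) (n : ℕ) :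
    Summable (fun i => (Ds ε n f i) ^ 2) ∧
      ∑' i, (Ds ε n f i) ^ 2 ≤ (n : ℝ) ^ 2 * ∑' i, (Ds ε 1 f i) ^ 2 := by
  have hshift : ∀ j : ℕ, Summable fun i : ℤ => (Ds ε 1 f (i + j)) ^ 2 := fun j =>
    (Equiv.addRight (j : ℤ)).summable_iff.2 hf
  have hrep : ∀ i : ℤ, Ds ε n f i = ∑ j ∈ Finset.range n, Ds ε 1 f (i + j) := by
    intro i
    have := Finset.sum_range_sub (fun j : ℕ => f (i + j)) n
    simp only [Ds, ← Finset.sum_div]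
    congr 1
    simp only [Nat.cast_zero, add_zero] at this
    rw [← this]
    refine Finset.sum_congr rfl fun j _ => ?_
    push_cast
    rw [add_assoc]
  have hle : ∀ i : ℤ, (Ds ε n f i) ^ 2 ≤
      (n : ℝ) * ∑ j ∈ Finset.range n, (Ds ε 1 f (i + j)) ^ 2 := by
    intro i
    rw [hrep]
    simpa using sq_sum_le_card_mul_sum_sq (s := Finset.range n) (f := fun j : ℕ => Ds ε 1 f (i + j))
  have hsum : Summable fun i : ℤ => (n : ℝ) * ∑ j ∈ Finset.range n, (Ds ε 1 f (i + j)) ^ 2 :=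
    (summable_sum fun j _ => hshift j).mul_left _
  have hs := Summable.of_nonneg_of_le (fun i => sq_nonneg _) hle hsum
  refine ⟨hs, (hs.tsum_le_tsum hle hsum).trans_eq ?_⟩
  rw [tsum_mul_left, Summable.tsum_finsetSum fun j _ => hshift j]
  have : ∀ j ∈ Finset.range n, ∑' i : ℤ, (Ds ε 1 f (i + j)) ^ 2 = ∑' i, (Ds ε 1 f i) ^ 2 :=
    fun j _ => (Equiv.addRight (j : ℤ)).tsum_eq fun i => (Ds ε 1 f i) ^ 2
  rw [Finset.sum_congr rfl this, Finset.sum_const, Finset.card_range, nsmul_eq_mul]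
  ring

lemma Ds_int {ε : ℝ} {f : ℤ → ℝ} (hf : Summable fun i => (Ds ε 1 f i) ^ 2) (s : ℤ) :
    Summable (fun i => (Ds ε s f i) ^ 2) ∧
      ∑' i, (Ds ε s f i) ^ 2 ≤ (s : ℝ) ^ 2 * ∑' i, (Ds ε 1 f i) ^ 2 := by
  obtain ⟨n, rfl | rfl⟩ := s.eq_nat_or_neg
  · simpa using Ds_nat hf n
  · obtain ⟨h1, h2⟩ := Ds_nat hf n
    have h3 : (fun i => (Ds ε (-n) f i) ^ 2) =
        (fun i => (Ds ε n f i) ^ 2) ∘ (Equiv.addRight (-(n : ℤ))) := by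
      funext i
      simp only [Function.comp, Equiv.coe_addRight, Ds, neg_add_cancel_right]
      ring
    rw [h3]
    refine ⟨(Equiv.addRight (-(n : ℤ))).summable_iff.2 h1, ?_⟩
    rw [show ∑' i, ((fun i => (Ds ε n f i) ^ 2) ∘ (Equiv.addRight (-(n : ℤ)))) i =
      ∑' i, (Ds ε n f i) ^ 2 from
      (Equiv.addRight (-(n : ℤ))).tsum_eq fun i => (Ds ε n f i) ^ 2]
    simpa using h2

/-! ### The misfit potential and the dislocation profile -/

/-- The `k`-th formal derivative `∑ₛ U⁽ᵏ⁾(s - 1/2 + ξ)` of the misfit potential. -/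
def misfitSeries (U : ℝ → ℝ) (k : ℕ) (ξ : ℝ) : ℝ :=
  ∑' s : ℤ, iteratedDeriv k U ((s : ℝ) - 1/2 + ξ)

/-- The bound `|U⁽ᵏ⁾| ≤ C (1 + |s|)^(-2-k)` within distance `3` of each lattice point `s`. -/
def LatticeBdd (U : ℝ → ℝ) (C : ℝ) : Prop :=
  ∀ k : ℕ, k ≤ 3 → ∀ (s : ℤ) (x : ℝ), |x - s| ≤ 3 →
    |iteratedDeriv k U x| ≤ C / (1 + |(s : ℝ)|) ^ (2 + k)

lemma near_lattice {ξ : ℝ} (hξ : ξ ∈ Set.Ioo (-1 : ℝ) 2) (s : ℤ) :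
    |((s : ℝ) - 1/2 + ξ) - s| ≤ 3 := by
  rw [abs_le]; constructor <;> linarith [hξ.1, hξ.2]

lemma summable_bound (C : ℝ) (k : ℕ) :
    Summable fun s : ℤ => C / (1 + |(s : ℝ)|) ^ (2 + k) := by
  simpa [div_eq_mul_inv] using (summable_weight' (k := 2 + k) (by omega)).mul_left C

lemma misfitSeries_summable {U : ℝ → ℝ} {C : ℝ} (hU : LatticeBdd U C) {k : ℕ} (hk : k ≤ 3)
    {ξ : ℝ} (hξ : ξ ∈ Set.Ioo (-1 : ℝ) 2) :
    Summable fun s : ℤ => iteratedDeriv k U ((s : ℝ) - 1/2 + ξ) :=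
  Summable.of_norm_bounded (summable_bound C k) fun s => hU k hk s _ (near_lattice hξ s)

lemma misfitSeries_bdd {U : ℝ → ℝ} {C : ℝ} (hU : LatticeBdd U C) {k : ℕ} (hk : k ≤ 3)
    {ξ : ℝ} (hξ : ξ ∈ Set.Ioo (-1 : ℝ) 2) :
    |misfitSeries U k ξ| ≤ ∑' s : ℤ, C / (1 + |(s : ℝ)|) ^ (2 + k) :=
  tsum_of_norm_bounded (f := fun s : ℤ => iteratedDeriv k U ((s : ℝ) - 1/2 + ξ))
    (summable_bound C k).hasSum fun s => hU k hk s _ (near_lattice hξ s)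

lemma iter_hasDerivAt' {U : ℝ → ℝ} (hreg : ContDiff ℝ 4 U) {k : ℕ} (hk : k ≤ 3) (x : ℝ) :
    HasDerivAt (iteratedDeriv k U) (iteratedDeriv (k + 1) U x) x := by
  rw [iteratedDeriv_succ]
  exact (hreg.differentiable_iteratedDeriv k (by exact_mod_cast (by omega : k < 4)) x).hasDerivAt

lemma misfitSeries_hasDerivAt {U : ℝ → ℝ} (hreg : ContDiff ℝ 4 U) {C : ℝ} (hU : LatticeBdd U C)
    {k : ℕ} (hk : k ≤ 2) {ξ : ℝ} (hξ : ξ ∈ Set.Ioo (-1 : ℝ) 2) :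
    HasDerivAt (misfitSeries U k) (misfitSeries U (k + 1) ξ) ξ := by
  have h0 : (0 : ℝ) ∈ Set.Ioo (-1 : ℝ) 2 := by norm_num
  have hd : ∀ (s : ℤ) (y : ℝ), y ∈ Set.Ioo (-1 : ℝ) 2 →
      HasDerivAt (fun z => iteratedDeriv k U ((s : ℝ) - 1/2 + z))
        (iteratedDeriv (k + 1) U ((s : ℝ) - 1/2 + y)) y := fun s y _ =>
    (iter_hasDerivAt' hreg (by omega) _).comp_const_add _ _
  have hb : ∀ (s : ℤ) (y : ℝ), y ∈ Set.Ioo (-1 : ℝ) 2 →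
      ‖iteratedDeriv (k + 1) U ((s : ℝ) - 1/2 + y)‖ ≤ C / (1 + |(s : ℝ)|) ^ (2 + (k + 1)) :=
    fun s y hy => hU (k + 1) (by omega) s _ (near_lattice hy s)
  exact hasDerivAt_tsum_of_isPreconnected (summable_bound C (k + 1)) isOpen_Ioo
    isPreconnected_Ioo hd hb h0 (misfitSeries_summable hU (by omega) h0) hξ

lemma misfit_deriv {U γ : ℝ → ℝ} (hreg : ContDiff ℝ 4 U) {C : ℝ} (hU : LatticeBdd U C)
    (hγ : ∀ ξ : ℝ, γ ξ = ∑' s : ℤ, (U ((s : ℝ) - 1/2 + ξ) - U ((s : ℝ) - 1/2)))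
    {ξ : ℝ} (hξ : ξ ∈ Set.Ioo (-1 : ℝ) 2) :
    deriv γ ξ = misfitSeries U 1 ξ ∧ iteratedDeriv 2 γ ξ = misfitSeries U 2 ξ := by
  have h0 : (0 : ℝ) ∈ Set.Ioo (-1 : ℝ) 2 := by norm_num
  have hγ0 : ∀ z ∈ Set.Ioo (-1 : ℝ) 2, γ z = misfitSeries U 0 z - misfitSeries U 0 0 := by
    intro z hz
    rw [hγ, misfitSeries, misfitSeries,
      ← (misfitSeries_summable hU (by norm_num) hz).tsum_sub
        (misfitSeries_summable hU (by norm_num) h0)]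
    simp
  have h1 : ∀ z ∈ Set.Ioo (-1 : ℝ) 2, deriv γ z = misfitSeries U 1 z := by
    intro z hz
    have : γ =ᶠ[nhds z] fun z => misfitSeries U 0 z - misfitSeries U 0 0 :=
      Filter.eventuallyEq_of_mem (isOpen_Ioo.mem_nhds hz) hγ0
    rw [this.deriv_eq]
    exact ((misfitSeries_hasDerivAt hreg hU (by norm_num) hz).sub_const _).deriv
  refine ⟨h1 ξ hξ, ?_⟩
  have : deriv γ =ᶠ[nhds ξ] misfitSeries U 1 :=
    Filter.eventuallyEq_of_mem (isOpen_Ioo.mem_nhds hξ) h1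
  rw [iteratedDeriv_succ, iteratedDeriv_one, this.deriv_eq]
  exact (misfitSeries_hasDerivAt hreg hU (by norm_num) hξ).deriv

lemma misfitSeries_lipschitz {U : ℝ → ℝ} (hreg : ContDiff ℝ 4 U) {C : ℝ} (hU : LatticeBdd U C)
    {ξ η : ℝ} (hξ : ξ ∈ Set.Ioo (-1 : ℝ) 2) (hη : η ∈ Set.Ioo (-1 : ℝ) 2) :
    |misfitSeries U 2 ξ - misfitSeries U 2 η| ≤
      (∑' s : ℤ, C / (1 + |(s : ℝ)|) ^ (2 + 3)) * |ξ - η| :=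
  (convex_Ioo (-1 : ℝ) 2).norm_image_sub_le_of_norm_hasDerivWithin_le
    (fun _ hx => (misfitSeries_hasDerivAt hreg hU (by norm_num) hx).hasDerivWithinAt)
    (fun _ hx => misfitSeries_bdd hU (by norm_num) hx) hη hξ

/-- A bounded function with bounded second derivative has a bounded derivative, hence is
Lipschitz. -/
lemma lipschitz_of_bdd {φ : ℝ → ℝ} {N : ℝ} (hφ : ContDiff ℝ 2 φ)
    (h01 : ∀ x, φ x ∈ Set.Icc (0 : ℝ) 1) (hN : ∀ x, |iteratedDeriv 2 φ x| ≤ N) (x y : ℝ) :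
    |φ x - φ y| ≤ (1 + N) * |x - y| := by
  have hd : Differentiable ℝ φ := hφ.differentiable (by norm_num)
  have hd2 : Differentiable ℝ (deriv φ) := by
    have := hφ.differentiable_iteratedDeriv 1 (by norm_num)
    rwa [iteratedDeriv_one] at this
  have hb : ∀ x, |deriv φ x| ≤ 1 + N := by
    intro x
    obtain ⟨c, hc, hc'⟩ := exists_deriv_eq_slope φ (show x < x + 1 by linarith)
      hd.continuous.continuousOn hd.differentiableOn
    have h1 : |deriv φ c| ≤ 1 := by
      rw [hc', add_sub_cancel_left, div_one, abs_le]
      constructor <;> linarith [(h01 x).1, (h01 x).2, (h01 (x + 1)).1, (h01 (x + 1)).2]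
    have h2 : |deriv φ x - deriv φ c| ≤ N * |x - c| :=
      convex_univ.norm_image_sub_le_of_norm_deriv_le (f := deriv φ) (fun y _ => hd2 y)
        (fun y _ => by
          have := hN y
          rwa [iteratedDeriv_succ, iteratedDeriv_one] at this) (Set.mem_univ c) (Set.mem_univ x)
    have h3 : |x - c| ≤ 1 := by rw [abs_le]; constructor <;> linarith [hc.1, hc.2]
    have hN0 : 0 ≤ N := (abs_nonneg _).trans (hN 0)
    have h4 := abs_sub_abs_le_abs_sub (deriv φ x) (deriv φ c)
    nlinarith
  exact convex_univ.norm_image_sub_le_of_norm_deriv_le (f := φ) (fun y _ => hd y)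
    (fun y _ => hb y) (Set.mem_univ y) (Set.mem_univ x)

/-! ### Comparison of the continuum integral with a Riemann sum -/

lemma cell_preimage {ε : ℝ} (hε : 0 < ε) (n : ℤ) :
    (fun x : ℝ => ⌊x / ε⌋) ⁻¹' {n} = Set.Ico (ε * n) (ε * n + ε) := by
  ext x
  simp only [Set.mem_preimage, Set.mem_singleton_iff, Int.floor_eq_iff, Set.mem_Ico,
    le_div_iff₀ hε, div_lt_iff₀ hε]
  constructor <;> rintro ⟨h1, h2⟩ <;> constructor <;> linarith

lemma measurable_cell (ε : ℝ) : Measurable fun x : ℝ => ⌊x / ε⌋ :=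
  Int.measurable_floor.comp (measurable_id.div_const ε)

/-- The index of the grid cell pushes Lebesgue measure to `ε` times the counting measure. -/
lemma map_cell {ε : ℝ} (hε : 0 < ε) :
    Measure.map (fun x : ℝ => ⌊x / ε⌋) volume = ENNReal.ofReal ε • Measure.count := by
  refine Measure.ext_of_singleton fun n => ?_
  rw [Measure.map_apply (measurable_cell ε) (measurableSet_singleton n), cell_preimage hε,
    Real.volume_Ico]
  simp

lemma integrable_cell {ε : ℝ} (hε : 0 < ε) {g : ℤ → ℝ} (hg : Summable g) :
    Integrable (fun x : ℝ => g ⌊x / ε⌋) ∧ ∫ x : ℝ, g ⌊x / ε⌋ = ε * ∑' i, g i := by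
  have h1 : Integrable g (ENNReal.ofReal ε • Measure.count) :=
    (integrable_count_iff.2 hg.norm).smul_measure ENNReal.ofReal_ne_top
  have h2 : Integrable g (Measure.map (fun x : ℝ => ⌊x / ε⌋) volume) := by rwa [map_cell hε]
  refine ⟨h2.comp_measurable (measurable_cell ε), ?_⟩
  rw [← integral_map (measurable_cell ε).aemeasurable (f := g) h2.aestronglyMeasurable,
    map_cell hε, integral_countable h1, ← tsum_mul_left]
  refine tsum_congr fun i => ?_
  simp [Measure.real, ENNReal.toReal_ofReal hε.le]

lemma measurable_interp (ε : ℝ) (g : ℤ → ℝ) : Measurable (interp ε g) := by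
  have h1 : ∀ h : ℤ → ℝ, Measurable fun x : ℝ => h ⌊x / ε⌋ := fun h =>
    (measurable_of_countable h).comp (measurable_cell ε)
  unfold interp
  exact (h1 g).add (((measurable_id.div_const ε).sub (h1 fun n => (n : ℝ))).mul
    ((h1 fun n => g (n + 1)).sub (h1 g)))

/-- The right derivative of the interpolant is the difference quotient of the cell; where the
interpolant is not differentiable, `deriv` vanishes. -/
lemma deriv_interp_sq {ε : ℝ} (hε : 0 < ε) (g : ℤ → ℝ) (x : ℝ) :
    (deriv (interp ε g) x) ^ 2 ≤ (Ds ε 1 g ⌊x / ε⌋) ^ 2 := by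
  by_cases hd : DifferentiableAt ℝ (interp ε g) x
  · set n := ⌊x / ε⌋ with hn
    have hx : x ∈ Set.Ico (ε * n) (ε * n + ε) := by
      rw [← cell_preimage hε]; exact hn.symm
    have haff : HasDerivAt (fun y : ℝ => g n + (y / ε - n) * (g (n + 1) - g n))
        (1 / ε * (g (n + 1) - g n)) x :=
      ((((hasDerivAt_id x).div_const ε).sub_const (n : ℝ)).mul_const _).const_add _
    have hloc : ∀ y ∈ Set.Ico x (ε * n + ε),
        interp ε g y = g n + (y / ε - n) * (g (n + 1) - g n) := by
      intro y hy
      have : ⌊y / ε⌋ = n := by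
        have : y ∈ (fun x : ℝ => ⌊x / ε⌋) ⁻¹' {n} := by
          rw [cell_preimage hε]; exact ⟨hx.1.trans hy.1, hy.2⟩
        exact this
      simp only [interp, this]
    have hmem : Set.Ico x (ε * n + ε) ∈ nhdsWithin x (Set.Ici x) := Ico_mem_nhdsGE hx.2
    have h1 : HasDerivWithinAt (interp ε g) (1 / ε * (g (n + 1) - g n)) (Set.Ici x) x :=
      haff.hasDerivWithinAt.congr_of_eventuallyEq (Filter.eventuallyEq_of_mem hmem hloc)
        (hloc x ⟨le_rfl, hx.2⟩)
    have h2 := (uniqueDiffWithinAt_Ici x).eq_deriv _ hd.hasDerivAt.hasDerivWithinAt h1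
    rw [h2, Ds]
    apply le_of_eq
    ring
  · rw [deriv_zero_of_not_differentiableAt hd, zero_pow two_ne_zero]
    exact sq_nonneg _

lemma sq_perturb {ε t p δ : ℝ} (hε : 0 ≤ ε) (hε1 : ε ≤ 1) (ht : 0 ≤ t) (ht1 : t ≤ 1) :
    |(p + t * (ε * δ)) ^ 2 - p ^ 2| ≤ ε * (p ^ 2 + 2 * δ ^ 2) := by
  have hk0 : 0 ≤ t * ε := mul_nonneg ht hε
  have hk : t * ε ≤ ε := mul_le_of_le_one_left hε ht1
  have h1 : (p + t * (ε * δ)) ^ 2 - p ^ 2 = (t * ε) * (2 * p * δ + (t * ε) * δ ^ 2) := by ring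
  rw [h1, abs_mul, abs_of_nonneg hk0]
  have h2 : |2 * p * δ + (t * ε) * δ ^ 2| ≤ p ^ 2 + 2 * δ ^ 2 := by
    have hk1 : t * ε ≤ 1 := hk.trans hε1
    have : (t * ε) * δ ^ 2 ≤ δ ^ 2 := mul_le_of_le_one_left (sq_nonneg _) hk1
    have h3 : 0 ≤ (t * ε) * δ ^ 2 := by positivity
    rw [abs_le]
    constructor <;> nlinarith [sq_nonneg (p + δ), sq_nonneg (p - δ)]
  gcongr

/-- The continuum second variations at `φ` and at `0` differ by a Riemann sum up to `O(ε)`: the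
gradient terms cancel and `γ'' ∘ φ` is Lipschitz. -/
lemma QPN_diff {α ε M L : ℝ} {γ φ : ℝ → ℝ} (hε : 0 < ε) (hε1 : ε ≤ 1)
    (hM : ∀ x, |iteratedDeriv 2 γ (φ x)| ≤ M) (hc : |iteratedDeriv 2 γ 0| ≤ M) (hL0 : 0 ≤ L)
    (hL : ∀ x y, |iteratedDeriv 2 γ (φ x) - iteratedDeriv 2 γ (φ y)| ≤ L * |x - y|)
    {fp fm : ℤ → ℝ} (hf : XFin ε fp fm) :
    |ε * (∑' i : ℤ, (iteratedDeriv 2 γ (φ (ε * i)) - iteratedDeriv 2 γ 0) * (fp i - fm i) ^ 2) -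
      (QPN α γ φ (interp ε fp) (interp ε fm) -
        QPN α γ (fun _ => 0) (interp ε fp) (interp ε fm))| ≤
      (L + 8 * M) * ε * Xsq ε fp fm := by
  obtain ⟨hP, hQ, hN⟩ := hf
  obtain ⟨H, hH⟩ : ∃ H : ℝ → ℝ, ∀ x, H x = iteratedDeriv 2 γ (φ x) := ⟨_, fun _ => rfl⟩
  obtain ⟨c, hcc⟩ : ∃ c : ℝ, c = iteratedDeriv 2 γ 0 := ⟨_, rfl⟩
  simp only [QPN, ← hH, ← hcc] at hM hc hL ⊢
  have hM0 : 0 ≤ M := (abs_nonneg _).trans hc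
  have hHcont : Continuous H := by
    refine (LipschitzWith.of_dist_le_mul (K := L.toNNReal) fun x y => ?_).continuous
    rw [Real.coe_toNNReal L hL0]
    exact hL x y
  set S : ℤ → ℝ := fun i => (Ds ε 1 fp i) ^ 2 + (Ds ε 1 fm i) ^ 2 + (fp i - fm i) ^ 2 with hS
  have hSs : Summable S := (hP.add hQ).add hN
  have hS0 : ∀ i, 0 ≤ S i := fun i => by positivity
  have hX : Xsq ε fp fm = ε * ∑' i, S i := by
    simp only [Xsq, nsq, hS]
    rw [(hP.add hQ).tsum_add hN, hP.tsum_add hQ]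
    ring
  obtain ⟨hSi, hSint⟩ := integrable_cell hε hSs
  -- pointwise structure of the interpolated misfit
  have hcell : ∀ x : ℝ, ∃ t : ℝ, 0 ≤ t ∧ t ≤ 1 ∧ |x - ε * ⌊x / ε⌋| ≤ ε ∧
      interp ε fp x - interp ε fm x = (fp ⌊x / ε⌋ - fm ⌊x / ε⌋) +
        t * (ε * (Ds ε 1 fp ⌊x / ε⌋ - Ds ε 1 fm ⌊x / ε⌋)) := by
    intro x
    refine ⟨x / ε - ⌊x / ε⌋, by linarith [Int.floor_le (x / ε)],
      by linarith [Int.lt_floor_add_one (x / ε)], ?_, ?_⟩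
    · have hx : x ∈ (fun x : ℝ => ⌊x / ε⌋) ⁻¹' {⌊x / ε⌋} := rfl
      rw [cell_preimage hε] at hx
      rw [abs_le]
      constructor <;> linarith [hx.1, hx.2]
    · simp only [interp, Ds]
      field_simp
      ring
  have hpert : ∀ x : ℝ, |(interp ε fp x - interp ε fm x) ^ 2 - (fp ⌊x / ε⌋ - fm ⌊x / ε⌋) ^ 2| ≤
      4 * ε * S ⌊x / ε⌋ := by
    intro x
    obtain ⟨t, ht0, ht1, -, he⟩ := hcell x
    rw [he]
    refine (sq_perturb hε.le hε1 ht0 ht1).trans ?_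
    rw [mul_comm 4 ε, mul_assoc]
    gcongr
    simp only [hS]
    nlinarith [sq_nonneg (Ds ε 1 fp ⌊x / ε⌋ + Ds ε 1 fm ⌊x / ε⌋), sq_nonneg (fp ⌊x / ε⌋ - fm ⌊x / ε⌋)]
  have hmeas : Measurable fun x => (interp ε fp x - interp ε fm x) ^ 2 :=
    ((measurable_interp ε fp).sub (measurable_interp ε fm)).pow_const 2
  have hsqS : ∀ i, (fp i - fm i) ^ 2 ≤ S i := fun i => by
    simp only [hS]; nlinarith [sq_nonneg (Ds ε 1 fp i), sq_nonneg (Ds ε 1 fm i)]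
  have hint : ∀ K : ℝ → ℝ, Measurable K → (∀ x, |K x| ≤ M) →
      Integrable fun x => K x * (interp ε fp x - interp ε fm x) ^ 2 := by
    intro K hK hKM
    refine (hSi.const_mul (5 * M)).mono' (hK.mul hmeas).aestronglyMeasurable
      (Filter.Eventually.of_forall fun x => ?_)
    have h1 := abs_le.1 (hpert x)
    have h2 := hsqS ⌊x / ε⌋
    have h3 := hS0 ⌊x / ε⌋
    have h4 : (interp ε fp x - interp ε fm x) ^ 2 ≤ 5 * S ⌊x / ε⌋ := by nlinarith [h1.2]
    rw [Real.norm_eq_abs, abs_mul, abs_of_nonneg (sq_nonneg (interp ε fp x - _))]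
    calc |K x| * (interp ε fp x - interp ε fm x) ^ 2 ≤ M * (5 * S ⌊x / ε⌋) := by
          gcongr
          exact hKM x
      _ = _ := by ring
  have hgrad : ∀ g : ℤ → ℝ, Summable (fun i => (Ds ε 1 g i) ^ 2) →
      Integrable fun x => α * (deriv (interp ε g) x) ^ 2 := by
    intro g hg
    refine Integrable.const_mul ?_ α
    refine (integrable_cell hε hg).1.mono'
      ((measurable_deriv _).pow_const 2).aestronglyMeasurable
      (Filter.Eventually.of_forall fun x => ?_)
    rw [Real.norm_eq_abs, abs_of_nonneg (sq_nonneg _)]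
    exact deriv_interp_sq hε g x
  have hi1 := hint H hHcont.measurable hM
  have hi2 := hint (fun _ => c) measurable_const fun _ => hc
  have hA : ∀ K : ℝ → ℝ, Integrable (fun x => K x * (interp ε fp x - interp ε fm x) ^ 2) →
      Integrable fun x => α * (deriv (interp ε fp) x) ^ 2 + α * (deriv (interp ε fm) x) ^ 2 +
        K x * (interp ε fp x - interp ε fm x) ^ 2 := fun K hK =>
    ((hgrad fp hP).add (hgrad fm hQ)).add hK
  have hmp : Summable fun i : ℤ => (H (ε * i) - c) * (fp i - fm i) ^ 2 := by
    refine Summable.of_norm_bounded (hN.mul_left (2 * M)) fun i => ?_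
    rw [Real.norm_eq_abs, abs_mul, abs_of_nonneg (sq_nonneg (fp i - fm i))]
    gcongr
    exact (abs_sub _ _).trans (by linarith [hM (ε * i)])
  obtain ⟨hj, hjint⟩ := integrable_cell hε hmp
  have hsub : (∫ x : ℝ, (α * (deriv (interp ε fp) x) ^ 2 + α * (deriv (interp ε fm) x) ^ 2 +
        H x * (interp ε fp x - interp ε fm x) ^ 2)) -
      ∫ x : ℝ, (α * (deriv (interp ε fp) x) ^ 2 + α * (deriv (interp ε fm) x) ^ 2 +
        c * (interp ε fp x - interp ε fm x) ^ 2) =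
      ∫ x : ℝ, (H x - c) * (interp ε fp x - interp ε fm x) ^ 2 := by
    rw [← integral_sub (hA H hi1) (hA (fun _ => c) hi2)]
    refine integral_congr_ae (Filter.Eventually.of_forall fun x => ?_)
    ring
  have hi3 : Integrable fun x => (H x - c) * (interp ε fp x - interp ε fm x) ^ 2 := by
    refine (hi1.sub hi2).congr (Filter.Eventually.of_forall fun x => ?_)
    simp only [Pi.sub_apply]
    ring
  rw [hsub, ← hjint, ← integral_sub hj hi3, hX, ← hSint, mul_assoc, ← integral_const_mul,
    ← integral_const_mul, ← Real.norm_eq_abs]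
  refine norm_integral_le_of_norm_le ((hSi.const_mul ε).const_mul _)
    (Filter.Eventually.of_forall fun x => ?_)
  obtain ⟨t, -, -, hx, -⟩ := hcell x
  set n := ⌊x / ε⌋
  have e : (H (ε * n) - c) * (fp n - fm n) ^ 2 - (H x - c) * (interp ε fp x - interp ε fm x) ^ 2 =
      (H (ε * n) - H x) * (fp n - fm n) ^ 2 +
        -((H x - c) * ((interp ε fp x - interp ε fm x) ^ 2 - (fp n - fm n) ^ 2)) := by ring
  rw [e, Real.norm_eq_abs]
  refine (abs_add_le _ _).trans ?_
  rw [abs_neg, abs_mul, abs_mul, abs_of_nonneg (sq_nonneg (fp n - fm n))]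
  have a1 : |H (ε * n) - H x| ≤ L * ε := by
    refine (hL _ _).trans ?_
    rw [abs_sub_comm]
    gcongr
  have a2 : |H x - c| ≤ 2 * M := (abs_sub _ _).trans (by linarith [hM x])
  calc |H (ε * n) - H x| * (fp n - fm n) ^ 2 +
        |H x - c| * |(interp ε fp x - interp ε fm x) ^ 2 - (fp n - fm n) ^ 2|
      ≤ (L * ε) * S n + (2 * M) * (4 * ε * S n) := by
        gcongr
        exacts [hsqS n, hpert x]
    _ = _ := by ring

/-! ### The atomistic second variation -/

lemma tsum_tsum_sub {A B : ℤ → ℤ → ℝ} (hA : Summable (Function.uncurry A))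
    (hB : Summable (Function.uncurry B)) :
    ∑' i, ∑' s, A i s - ∑' i, ∑' s, B i s = ∑' i, ∑' s, (A i s - B i s) := by
  have h1 : Summable fun i => ∑' s, A i s := hA.prod
  have h2 : Summable fun i => ∑' s, B i s := hB.prod
  rw [← h1.tsum_sub h2]
  refine tsum_congr fun i => ?_
  have h3 : Summable fun s => A i s := hA.prod_factor i
  have h4 : Summable fun s => B i s := hB.prod_factor i
  exact (h3.tsum_sub h4).symm

lemma weight_shift {C Λ ε d s : ℝ} (hC : 0 ≤ C) (hΛε : 0 ≤ Λ * ε) (hd : d ≤ Λ * ε * |s|) :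
    C / (1 + |s|) ^ 5 * d ≤ C * Λ * ε / (1 + |s|) ^ 4 := by
  have h0 : 0 < 1 + |s| := by positivity
  calc C / (1 + |s|) ^ 5 * d ≤ C / (1 + |s|) ^ 5 * (Λ * ε * (1 + |s|)) := by
        gcongr
        refine hd.trans ?_
        gcongr
        linarith
    _ = _ := by field_simp

/-- The intraplane part: replacing the deformed bond lengths by the reference ones costs `O(ε)`. -/
lemma intraplane_diff {W : ℝ → ℝ} {C Λ ε : ℝ} (hC : 0 ≤ C) (hΛ : 0 ≤ Λ) (hε : 0 < ε)
    (hW : ∀ s : ℤ, s ≠ 0 → ∀ δ : ℝ, |δ| ≤ 1/2 → |W (s + δ)| ≤ C / (1 + |(s : ℝ)|) ^ 4)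
    (hWL : ∀ s : ℤ, s ≠ 0 → ∀ δ : ℝ, |δ| ≤ 1/2 →
      |W (s + δ) - W s| ≤ C / (1 + |(s : ℝ)|) ^ 5 * |δ|)
    {up um fp fm : ℤ → ℝ}
    (hup : ∀ s i, |ε * Ds ε s up i| ≤ 1/2 ∧ |ε * Ds ε s up i| ≤ Λ * ε * |(s : ℝ)|)
    (hum : ∀ s i, |ε * Ds ε s um i| ≤ 1/2 ∧ |ε * Ds ε s um i| ≤ Λ * ε * |(s : ℝ)|)
    (hP : Summable fun i => (Ds ε 1 fp i) ^ 2) (hQ : Summable fun i => (Ds ε 1 fm i) ^ 2) :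
    |(∑' i : ℤ, ∑' s : ℤ, if s = 0 then 0 else
        (1/2) * (W ((s : ℝ) + ε * Ds ε s up i) * Ds ε s fp i * Ds ε s fp i +
          W ((s : ℝ) + ε * Ds ε s um i) * Ds ε s fm i * Ds ε s fm i)) -
      (∑' i : ℤ, ∑' s : ℤ, if s = 0 then 0 else
        (1/2) * (W ((s : ℝ) + ε * Ds ε s (fun _ => 0) i) * Ds ε s fp i * Ds ε s fp i +
          W ((s : ℝ) + ε * Ds ε s (fun _ => 0) i) * Ds ε s fm i * Ds ε s fm i))| ≤
      C * Λ * ε * latticeConst * (∑' i, (Ds ε 1 fp i) ^ 2 + ∑' i, (Ds ε 1 fm i) ^ 2) := by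
  have hDs0 : ∀ s i, Ds ε s (fun _ => 0) i = 0 := fun s i => by simp [Ds]
  set b : ℤ → ℤ → ℝ := fun s i => (Ds ε s fp i) ^ 2 + (Ds ε s fm i) ^ 2 with hb
  have hb0 : ∀ s i, 0 ≤ b s i := fun s i => by positivity
  have hbs : ∀ s, Summable (b s) := fun s => (Ds_int hP s).1.add (Ds_int hQ s).1
  have hB : ∀ s : ℤ, ∑' i, b s i ≤
      (1 + (s : ℝ) ^ 2) * (∑' i, (Ds ε 1 fp i) ^ 2 + ∑' i, (Ds ε 1 fm i) ^ 2) := by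
    intro s
    simp only [hb]
    rw [(Ds_int hP s).1.tsum_add (Ds_int hQ s).1]
    have h1 := (Ds_int hP s).2
    have h2 := (Ds_int hQ s).2
    have h3 : 0 ≤ ∑' i, (Ds ε 1 fp i) ^ 2 := tsum_nonneg fun i => sq_nonneg _
    have h4 : 0 ≤ ∑' i, (Ds ε 1 fm i) ^ 2 := tsum_nonneg fun i => sq_nonneg _
    nlinarith
  -- a termwise estimate covering both the quadratic forms and their difference
  have hterm : ∀ (x y : ℝ) (i s : ℤ) (w : ℝ), |x| ≤ w → |y| ≤ w →
      |(1/2) * (x * Ds ε s fp i * Ds ε s fp i + y * Ds ε s fm i * Ds ε s fm i)| ≤ w * b s i := by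
    intro x y i s w hx hy
    have hw : 0 ≤ w := (abs_nonneg x).trans hx
    have h1 := mul_le_mul_of_nonneg_right (abs_le.1 hx).1 (sq_nonneg (Ds ε s fp i))
    have h2 := mul_le_mul_of_nonneg_right (abs_le.1 hx).2 (sq_nonneg (Ds ε s fp i))
    have h3 := mul_le_mul_of_nonneg_right (abs_le.1 hy).1 (sq_nonneg (Ds ε s fm i))
    have h4 := mul_le_mul_of_nonneg_right (abs_le.1 hy).2 (sq_nonneg (Ds ε s fm i))
    have h5 := mul_nonneg hw (hb0 s i)
    simp only [hb] at h5 ⊢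
    rw [abs_le]
    constructor <;> nlinarith
  have hform : ∀ u w : ℤ → ℝ, (∀ s i, |ε * Ds ε s u i| ≤ 1/2) → (∀ s i, |ε * Ds ε s w i| ≤ 1/2) →
      Summable (Function.uncurry fun i s : ℤ => if s = 0 then 0 else
        (1/2) * (W ((s : ℝ) + ε * Ds ε s u i) * Ds ε s fp i * Ds ε s fp i +
          W ((s : ℝ) + ε * Ds ε s w i) * Ds ε s fm i * Ds ε s fm i)) := by
    intro u w hu hw
    refine (double_sum (c := C) hC (fun i s => ?_) hb0 hbs hB).1
    split_ifs with hs
    · rw [abs_zero]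
      exact mul_nonneg (by positivity) (hb0 s i)
    · exact hterm _ _ i s _ (hW s hs _ (hu s i)) (hW s hs _ (hw s i))
  have h0 : ∀ s i, |ε * Ds ε s (fun _ => 0) i| ≤ 1/2 := fun s i => by
    rw [hDs0]; norm_num
  rw [tsum_tsum_sub (hform up um (fun s i => (hup s i).1) (fun s i => (hum s i).1))
    (hform _ _ h0 h0)]
  refine (double_sum (c := C * Λ * ε) (by positivity) (fun i s => ?_) hb0 hbs hB).2
  split_ifs with hs
  · rw [sub_zero, abs_zero]
    exact mul_nonneg (by positivity) (hb0 s i)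
  · rw [← mul_sub, hDs0, mul_zero, add_zero]
    have e : ∀ x y z p q : ℝ, x * p * p + y * q * q - (z * p * p + z * q * q) =
      (x - z) * p * p + (y - z) * q * q := fun x y z p q => by ring
    rw [e]
    refine hterm _ _ i s _ ?_ ?_
    · exact (hWL s hs _ (hup s i).1).trans (weight_shift hC (by positivity) (hup s i).2)
    · exact (hWL s hs _ (hum s i).1).trans (weight_shift hC (by positivity) (hum s i).2)

set_option maxHeartbeats 1600000 in
/-- The interplane part: up to `O(ε)` it is a Riemann sum with weight `γ''(φ) - γ''(0)`. -/
lemma interplane_diff {U φ : ℝ → ℝ} {C Λ ε : ℝ} (hC : 0 ≤ C) (hΛ : 0 ≤ Λ) (hε : 0 < ε)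
    (hε1 : ε ≤ 1) (hU : LatticeBdd U C)
    (hUL : ∀ (s : ℤ) (x y : ℝ), |x - s| ≤ 3 → |y - s| ≤ 3 →
      |iteratedDeriv 2 U x - iteratedDeriv 2 U y| ≤ C / (1 + |(s : ℝ)|) ^ 5 * |x - y|)
    (h01 : ∀ x, φ x ∈ Set.Icc (0 : ℝ) 1) (hφ : ∀ x y, |φ x - φ y| ≤ Λ * |x - y|)
    {fp fm : ℤ → ℝ} (hf : XFin ε fp fm) :
    |(∑' i : ℤ, ∑' s : ℤ,
        iteratedDeriv 2 U ((s : ℝ) - 1/2 + φ (ε * ((i + s : ℤ) : ℝ)) / 2 - -(φ (ε * i)) / 2) *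
          (fp (i + s) - fm i) * (fp (i + s) - fm i)) -
      (∑' i : ℤ, ∑' s : ℤ, iteratedDeriv 2 U ((s : ℝ) - 1/2 + 0 - 0) *
          (fp (i + s) - fm i) * (fp (i + s) - fm i)) -
      ∑' i : ℤ, (misfitSeries U 2 (φ (ε * i)) - misfitSeries U 2 0) * (fp i - fm i) ^ 2| ≤
      ε * (C * (2 + Λ)) * latticeConst *
        (∑' i, (fp i - fm i) ^ 2 + 2 * ∑' i, (Ds ε 1 fp i) ^ 2) := by
  obtain ⟨hP, -, hN⟩ := hf
  obtain ⟨Y, hY⟩ : ∃ Y : ℝ → ℝ, Y = iteratedDeriv 2 U := ⟨_, rfl⟩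
  set b : ℤ → ℤ → ℝ := fun s i => (fp i - fm i) ^ 2 + 2 * (Ds ε s fp i) ^ 2 with hb
  have hb0 : ∀ s i, 0 ≤ b s i := fun s i => by positivity
  have hbs : ∀ s, Summable (b s) := fun s => hN.add ((Ds_int hP s).1.mul_left 2)
  have hB : ∀ s : ℤ, ∑' i, b s i ≤
      (1 + (s : ℝ) ^ 2) * (∑' i, (fp i - fm i) ^ 2 + 2 * ∑' i, (Ds ε 1 fp i) ^ 2) := by
    intro s
    simp only [hb]
    rw [hN.tsum_add ((Ds_int hP s).1.mul_left 2), tsum_mul_left]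
    have h1 := (Ds_int hP s).2
    have h3 : 0 ≤ ∑' i, (Ds ε 1 fp i) ^ 2 := tsum_nonneg fun i => sq_nonneg _
    have h4 : 0 ≤ ∑' i, (fp i - fm i) ^ 2 := tsum_nonneg fun i => sq_nonneg _
    nlinarith [mul_nonneg (sq_nonneg (s : ℝ)) h4]
  have hq : ∀ i s : ℤ, fp (i + s) - fm i = (fp i - fm i) + 1 * (ε * Ds ε s fp i) := by
    intro i s
    simp only [Ds]
    field_simp
    ring
  have hsq : ∀ i s : ℤ, |(fp (i + s) - fm i) ^ 2 - (fp i - fm i) ^ 2| ≤ ε * b s i := by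
    intro i s
    rw [hq]
    exact sq_perturb hε.le hε1 zero_le_one le_rfl
  have hpb : ∀ i s : ℤ, (fp i - fm i) ^ 2 ≤ b s i := fun i s => by
    simp only [hb]; nlinarith [sq_nonneg (Ds ε s fp i)]
  have hqb : ∀ i s : ℤ, (fp (i + s) - fm i) ^ 2 ≤ 2 * b s i := fun i s => by
    have h1 := (abs_le.1 (hsq i s)).2
    have h2 := hpb i s
    have h3 := mul_le_of_le_one_left (hb0 s i) hε1
    linarith
  have hY2 : ∀ (s : ℤ) (x : ℝ), |x - s| ≤ 3 → |Y x| ≤ C / (1 + |(s : ℝ)|) ^ 4 := fun s x hx => by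
    rw [hY]; exact hU 2 (by norm_num) s x hx
  -- all arguments lie within distance `3` of the lattice point `s`
  have hx : ∀ i s : ℤ,
      |(s : ℝ) - 1/2 + φ (ε * ((i + s : ℤ) : ℝ)) / 2 - -(φ (ε * i)) / 2 - s| ≤ 3 := by
    intro i s
    have h1 := h01 (ε * ((i + s : ℤ) : ℝ))
    have h2 := h01 (ε * i)
    rw [abs_le]
    constructor <;> linarith [h1.1, h1.2, h2.1, h2.2]
  have hy : ∀ i s : ℤ, |(s : ℝ) - 1/2 + φ (ε * i) - s| ≤ 3 := by
    intro i s
    have h2 := h01 (ε * i)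
    rw [abs_le]
    constructor <;> linarith [h2.1, h2.2]
  have hz : ∀ s : ℤ, |(s : ℝ) - 1/2 + 0 - s| ≤ 3 := by
    intro s
    rw [abs_le]
    constructor <;> linarith
  have hxy : ∀ i s : ℤ,
      |((s : ℝ) - 1/2 + φ (ε * ((i + s : ℤ) : ℝ)) / 2 - -(φ (ε * i)) / 2) -
        ((s : ℝ) - 1/2 + φ (ε * i))| ≤ Λ * ε * |(s : ℝ)| := by
    intro i s
    have h1 := hφ (ε * ((i + s : ℤ) : ℝ)) (ε * i)
    have h2 : ε * ((i + s : ℤ) : ℝ) - ε * i = ε * s := by push_cast; ring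
    rw [h2, abs_mul, abs_of_pos hε, ← mul_assoc] at h1
    have h3 : ((s : ℝ) - 1/2 + φ (ε * ((i + s : ℤ) : ℝ)) / 2 - -(φ (ε * i)) / 2) -
        ((s : ℝ) - 1/2 + φ (ε * i)) = (φ (ε * ((i + s : ℤ) : ℝ)) - φ (ε * i)) / 2 := by ring
    rw [h3, abs_div, abs_of_pos (two_pos : (0 : ℝ) < 2)]
    have := abs_nonneg (φ (ε * ((i + s : ℤ) : ℝ)) - φ (ε * i))
    linarith
  simp only [← hY] at hUL ⊢
  have hform : ∀ X : ℤ → ℤ → ℝ, (∀ i s : ℤ, |X i s - s| ≤ 3) →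
      Summable (Function.uncurry fun i s : ℤ =>
        Y (X i s) * (fp (i + s) - fm i) * (fp (i + s) - fm i)) := by
    intro X hX
    refine (double_sum (c := C * 2) (by positivity) (fun i s => ?_) hb0 hbs hB).1
    rw [mul_assoc, ← sq, abs_mul, abs_of_nonneg (sq_nonneg (fp (i + s) - fm i))]
    calc |Y (X i s)| * (fp (i + s) - fm i) ^ 2
        ≤ C / (1 + |(s : ℝ)|) ^ 4 * (2 * b s i) := by
          gcongr
          exacts [hY2 s _ (hX i s), hqb i s]
      _ = _ := by ring
  have hlim : Summable (Function.uncurry fun i s : ℤ =>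
      (Y ((s : ℝ) - 1/2 + φ (ε * i)) - Y ((s : ℝ) - 1/2 + 0)) * (fp i - fm i) ^ 2) := by
    refine (double_sum (c := C * 2) (by positivity) (fun i s => ?_) hb0 hbs hB).1
    rw [abs_mul, abs_of_nonneg (sq_nonneg (fp i - fm i))]
    have h1 := hY2 s _ (hy i s)
    have h2 := hY2 s _ (hz s)
    calc |Y ((s : ℝ) - 1/2 + φ (ε * i)) - Y ((s : ℝ) - 1/2 + 0)| * (fp i - fm i) ^ 2
        ≤ (C / (1 + |(s : ℝ)|) ^ 4 + C / (1 + |(s : ℝ)|) ^ 4) * b s i := by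
          gcongr
          exacts [(abs_sub _ _).trans (add_le_add h1 h2), hpb i s]
      _ = _ := by ring
  have hmis : ∀ i : ℤ, (misfitSeries U 2 (φ (ε * i)) - misfitSeries U 2 0) * (fp i - fm i) ^ 2 =
      ∑' s : ℤ, (Y ((s : ℝ) - 1/2 + φ (ε * i)) - Y ((s : ℝ) - 1/2 + 0)) * (fp i - fm i) ^ 2 := by
    intro i
    have h1 : φ (ε * i) ∈ Set.Ioo (-1 : ℝ) 2 :=
      ⟨by linarith [(h01 (ε * i)).1], by linarith [(h01 (ε * i)).2]⟩
    rw [tsum_mul_right, hY, (misfitSeries_summable hU (by norm_num) h1).tsum_sub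
      (misfitSeries_summable hU (by norm_num) (by norm_num))]
    rfl
  have hz' : ∀ i s : ℤ, |(s : ℝ) - 1/2 + 0 - 0 - s| ≤ 3 := fun i s => by
    rw [sub_zero]; exact hz s
  have hdiff := tsum_tsum_sub (hform _ hx) (hform _ hz')
  have hsum : Summable (Function.uncurry fun i s : ℤ =>
      Y ((s : ℝ) - 1/2 + φ (ε * ((i + s : ℤ) : ℝ)) / 2 - -(φ (ε * i)) / 2) *
          (fp (i + s) - fm i) * (fp (i + s) - fm i) -
        Y ((s : ℝ) - 1/2 + 0 - 0) * (fp (i + s) - fm i) * (fp (i + s) - fm i)) :=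
    (hform _ hx).sub (hform _ hz')
  rw [tsum_congr hmis, hdiff, tsum_tsum_sub hsum hlim]
  refine (double_sum (c := ε * (C * (2 + Λ))) (by positivity) (fun i s => ?_) hb0 hbs hB).2
  have hX := hx i s
  have hXY := hxy i s
  have hYi := hy i s
  have hZ := hz s
  rw [sub_zero ((s : ℝ) - 1/2 + 0)]
  generalize (s : ℝ) - 1/2 + φ (ε * ((i + s : ℤ) : ℝ)) / 2 - -(φ (ε * i)) / 2 = x at *
  generalize (s : ℝ) - 1/2 + φ (ε * i) = y at *
  generalize (s : ℝ) - 1/2 + 0 = z at *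
  have e : Y x * (fp (i + s) - fm i) * (fp (i + s) - fm i) -
        Y z * (fp (i + s) - fm i) * (fp (i + s) - fm i) - (Y y - Y z) * (fp i - fm i) ^ 2 =
      (Y x - Y z) * ((fp (i + s) - fm i) ^ 2 - (fp i - fm i) ^ 2) +
        (Y x - Y y) * (fp i - fm i) ^ 2 := by ring
  rw [e]
  refine (abs_add_le _ _).trans ?_
  rw [abs_mul, abs_mul, abs_of_nonneg (sq_nonneg (fp i - fm i))]
  have h1 : |Y x - Y z| ≤ C / (1 + |(s : ℝ)|) ^ 4 + C / (1 + |(s : ℝ)|) ^ 4 :=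
    (abs_sub _ _).trans (add_le_add (hY2 s _ hX) (hY2 s _ hZ))
  have h2 : |Y x - Y y| ≤ C * Λ * ε / (1 + |(s : ℝ)|) ^ 4 :=
    (hUL s x y hX hYi).trans (weight_shift hC (by positivity) hXY)
  calc |Y x - Y z| * |(fp (i + s) - fm i) ^ 2 - (fp i - fm i) ^ 2| +
        |Y x - Y y| * (fp i - fm i) ^ 2
      ≤ (C / (1 + |(s : ℝ)|) ^ 4 + C / (1 + |(s : ℝ)|) ^ 4) * (ε * b s i) +
        C * Λ * ε / (1 + |(s : ℝ)|) ^ 4 * b s i := by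
        gcongr
        exacts [hsq i s, hpb i s]
    _ = _ := by ring

/-! ### Regularity of the potentials and of the profile -/

lemma exists_latticeBdd {U : ℝ → ℝ} {R θ : ℝ} (hθ : 0 < θ) (heven : ∀ x : ℝ, U (-x) = U x)
    (hreg : ContDiff ℝ 4 U)
    (hdecay : ∀ x : ℝ, R ≤ |x| → |iteratedDeriv 4 U x| ≤ |x| ^ (-(6:ℝ) - θ))
    (hlim : ∀ k : ℕ, k ≤ 3 →
      Tendsto (fun x : ℝ => iteratedDeriv k U x) (Filter.cocompact ℝ) (nhds 0)) :
    ∃ C : ℝ, 0 < C ∧ LatticeBdd U C := by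
  have h : ∀ k : ℕ, ∃ C : ℝ, 0 < C ∧ (k ≤ 3 → ∀ (s : ℤ) (x : ℝ), |x - s| ≤ 3 →
      |iteratedDeriv k U x| ≤ C / (1 + |(s : ℝ)|) ^ (2 + k)) := by
    intro k
    by_cases hk : k ≤ 3
    · obtain ⟨C, hC, hb⟩ := lattice_bound (by linarith) heven hreg.contDiffOn hdecay hlim
        isClosed_univ (fun j hj => (hreg.continuous_iteratedDeriv j
          (by exact_mod_cast (by omega : j ≤ 4))).continuousOn) hk
      exact ⟨C, hC, fun _ s x hx => hb s x (Set.mem_univ x) hx⟩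
    · exact ⟨1, one_pos, fun h => absurd h hk⟩
  choose C hC hb using h
  refine ⟨∑ k ∈ Finset.range 4, C k, Finset.sum_pos (fun k _ => hC k) (by simp), ?_⟩
  intro k hk s x hx
  refine (hb k hk s x hx).trans ?_
  gcongr
  exact Finset.single_le_sum (fun j _ => (hC j).le) (Finset.mem_range.2 (by omega))

lemma latticeBdd_lipschitz {U : ℝ → ℝ} {C : ℝ} (hreg : ContDiff ℝ 4 U) (hU : LatticeBdd U C)
    (s : ℤ) (x y : ℝ) (hx : |x - s| ≤ 3) (hy : |y - s| ≤ 3) :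
    |iteratedDeriv 2 U x - iteratedDeriv 2 U y| ≤ C / (1 + |(s : ℝ)|) ^ 5 * |x - y| := by
  rw [abs_sub_comm, ← Real.dist_eq, ← Metric.mem_closedBall'] at hx hy
  refine (convex_closedBall (s : ℝ) 3).norm_image_sub_le_of_norm_hasDerivWithin_le
    (fun z _ => (iter_hasDerivAt' hreg (by norm_num) z).hasDerivWithinAt) (fun z hz => ?_) hy hx
  rw [Metric.mem_closedBall, Real.dist_eq] at hz
  exact hU 3 le_rfl s z hz

/-- Bounds for `V''` near nonzero lattice points; the segments used avoid the singularity at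
the origin. -/
lemma exists_intraplane_bounds {V : ℝ → ℝ} {R θ : ℝ} (hθ : 0 < θ)
    (heven : ∀ x : ℝ, V (-x) = V x) (hreg : ContDiffOn ℝ 4 V {x : ℝ | x ≠ 0})
    (hdecay : ∀ x : ℝ, R ≤ |x| → |iteratedDeriv 4 V x| ≤ |x| ^ (-(8:ℝ) - θ))
    (hlim : ∀ k : ℕ, k ≤ 3 →
      Tendsto (fun x : ℝ => iteratedDeriv k V x) (Filter.cocompact ℝ) (nhds 0)) :
    ∃ C : ℝ, 0 < C ∧
      (∀ s : ℤ, s ≠ 0 → ∀ δ : ℝ, |δ| ≤ 1/2 →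
        |iteratedDeriv 2 V (s + δ)| ≤ C / (1 + |(s : ℝ)|) ^ 4) ∧
      (∀ s : ℤ, s ≠ 0 → ∀ δ : ℝ, |δ| ≤ 1/2 →
        |iteratedDeriv 2 V (s + δ) - iteratedDeriv 2 V s| ≤ C / (1 + |(s : ℝ)|) ^ 5 * |δ|) := by
  have hK : IsClosed {x : ℝ | 1/2 ≤ |x|} := isClosed_le continuous_const continuous_abs
  have hne : ∀ x ∈ {x : ℝ | 1/2 ≤ |x|}, x ≠ 0 := by
    intro x hx h
    rw [Set.mem_ofPred_eq, h, abs_zero] at hx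
    norm_num at hx
  have hb : ∀ k ≤ 3, ∃ C : ℝ, 0 < C ∧ ∀ s : ℤ, ∀ x ∈ {x : ℝ | 1/2 ≤ |x|}, |x - s| ≤ 3 →
      |iteratedDeriv k V x| ≤ C / (1 + |(s : ℝ)|) ^ (2 + k) := fun k hk =>
    lattice_bound (by linarith) heven hreg hdecay hlim hK (fun j hj x hx =>
      (iter_hasDerivAt hreg hj (hne x hx)).continuousAt.continuousWithinAt) hk
  obtain ⟨C₂, hC₂, hb₂⟩ := hb 2 (by norm_num)
  obtain ⟨C₃, hC₃, hb₃⟩ := hb 3 le_rfl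
  have hfar : ∀ s : ℤ, s ≠ 0 → ∀ x ∈ Metric.closedBall (s : ℝ) (1/2), 1/2 ≤ |x| := by
    intro s hs x hx
    rw [Metric.mem_closedBall, Real.dist_eq] at hx
    have h1 : (1 : ℝ) ≤ |(s : ℝ)| := by exact_mod_cast Int.one_le_abs hs
    have h2 := abs_sub_abs_le_abs_sub (s : ℝ) x
    rw [abs_sub_comm] at h2
    linarith
  have hball : ∀ (s : ℤ) (δ : ℝ), |δ| ≤ 1/2 → (s : ℝ) + δ ∈ Metric.closedBall (s : ℝ) (1/2) :=
    fun s δ hδ => by rwa [Metric.mem_closedBall, Real.dist_eq, add_sub_cancel_left]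
  have hnear : ∀ (s : ℤ), ∀ x ∈ Metric.closedBall (s : ℝ) (1/2), |x - s| ≤ 3 := fun s x hx => by
    rw [Metric.mem_closedBall, Real.dist_eq] at hx
    linarith
  refine ⟨C₂ + C₃, by positivity, fun s hs δ hδ => ?_, fun s hs δ hδ => ?_⟩
  · refine (hb₂ s _ (hfar s hs _ (hball s δ hδ)) (hnear s _ (hball s δ hδ))).trans ?_
    gcongr
    linarith
  · have h := (convex_closedBall (s : ℝ) (1/2)).norm_image_sub_le_of_norm_hasDerivWithin_le
      (f := iteratedDeriv 2 V) (f' := iteratedDeriv 3 V) (C := C₃ / (1 + |(s : ℝ)|) ^ 5)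
      (fun z hz => (iter_hasDerivAt hreg (by norm_num)
        (hne z (hfar s hs z hz))).hasDerivWithinAt)
      (fun z hz => hb₃ s z (hfar s hs z hz) (hnear s z hz))
      (Metric.mem_closedBall_self (by norm_num)) (hball s δ hδ)
    rw [add_sub_cancel_left] at h
    refine h.trans ?_
    rw [Real.norm_eq_abs]
    gcongr
    linarith

lemma profile_mem {φ : ℝ → ℝ} (hmono : StrictMono φ) (hbot : Tendsto φ atBot (nhds 0))
    (htop : Tendsto φ atTop (nhds 1)) (x : ℝ) : φ x ∈ Set.Icc (0 : ℝ) 1 :=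
  ⟨hmono.monotone.le_of_tendsto hbot x, hmono.monotone.ge_of_tendsto htop x⟩

/-- Bond strains of the continuum profile: at most `1/2`, and `O(ε)` at fixed bond length. -/
lemma strain_bound {φ : ℝ → ℝ} {Λ ε c : ℝ} (hε : 0 < ε) (hc : |c| = 1)
    (h01 : ∀ x, φ x ∈ Set.Icc (0 : ℝ) 1) (hφ : ∀ x y, |φ x - φ y| ≤ Λ * |x - y|) {u : ℤ → ℝ}
    (hu : ∀ i : ℤ, u i = c * φ (ε * i) / 2) (s i : ℤ) :
    |ε * Ds ε s u i| ≤ 1/2 ∧ |ε * Ds ε s u i| ≤ Λ * ε * |(s : ℝ)| := by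
  have h1 := hφ (ε * ((i + s : ℤ) : ℝ)) (ε * i)
  have h2 : ε * ((i + s : ℤ) : ℝ) - ε * i = ε * s := by push_cast; ring
  rw [h2, abs_mul, abs_of_pos hε, ← mul_assoc] at h1
  have h3 : ε * Ds ε s u i = c * ((φ (ε * ((i + s : ℤ) : ℝ)) - φ (ε * i)) / 2) := by
    rw [Ds, hu, hu]
    field_simp
  have h4 : |φ (ε * ((i + s : ℤ) : ℝ)) - φ (ε * i)| ≤ 1 := by
    have a := h01 (ε * ((i + s : ℤ) : ℝ))
    have b := h01 (ε * i)
    rw [abs_le]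
    constructor <;> linarith [a.1, a.2, b.1, b.2]
  have h5 := abs_nonneg (φ (ε * ((i + s : ℤ) : ℝ)) - φ (ε * i))
  rw [h3, abs_mul, hc, one_mul, abs_div, abs_of_pos (two_pos : (0 : ℝ) < 2)]
  constructor <;> linarith

/-! ### Assembling the estimates -/

theorem stmt12
    (V U : ℝ → ℝ) (R θ : ℝ) (hR : 0 < R) (hθ : 0 < θ)
    (hVeven : ∀ x : ℝ, V (-x) = V x) (hUeven : ∀ x : ℝ, U (-x) = U x)
    (hVreg : ContDiffOn ℝ 4 V {x : ℝ | x ≠ 0}) (hUreg : ContDiff ℝ 4 U)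
    (hVdecay : ∀ x : ℝ, R ≤ |x| → |iteratedDeriv 4 V x| ≤ |x| ^ (-(8:ℝ) - θ))
    (hUdecay : ∀ x : ℝ, R ≤ |x| → |iteratedDeriv 4 U x| ≤ |x| ^ (-(6:ℝ) - θ))
    (hVlim : ∀ k : ℕ, k ≤ 3 →
      Tendsto (fun x : ℝ => iteratedDeriv k V x) (Filter.cocompact ℝ) (nhds 0))
    (hUlim : ∀ k : ℕ, k ≤ 3 →
      Tendsto (fun x : ℝ => iteratedDeriv k U x) (Filter.cocompact ℝ) (nhds 0))
    (γ : ℝ → ℝ)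
    (hγdef : ∀ ξ : ℝ, γ ξ = ∑' s : ℤ, (U ((s : ℝ) - 1/2 + ξ) - U ((s : ℝ) - 1/2)))
    (α : ℝ)
    (hαdef : α = ∑' s : ℤ, if s = 0 then 0 else (1/2) * (s : ℝ) ^ 2 * iteratedDeriv 2 V (s : ℝ))
    (hα : 0 < α)
    (hγnn : ∀ ξ : ℝ, 0 ≤ γ ξ) (hγzero : ∀ ξ : ℝ, γ ξ = 0 ↔ ∃ n : ℤ, ξ = (n : ℝ))
    (hγ'' : 0 < iteratedDeriv 2 γ 0)
    (φ : ℝ → ℝ) (hφreg : ContDiff ℝ 2 φ) (hφmono : StrictMono φ)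
    (hφode : ∀ x : ℝ, -(α/2) * iteratedDeriv 2 φ x + deriv γ (φ x) = 0)
    (hφbot : Tendsto φ atBot (nhds 0)) (hφtop : Tendsto φ atTop (nhds 1))
    (hφ0 : φ 0 = 1/2)
    :
    ∃ C : ℝ, 0 < C ∧ ∃ ε₀ : ℝ, 0 < ε₀ ∧
      ∀ ε : ℝ, 0 < ε → ε < ε₀ →
        ∀ fp fm : ℤ → ℝ, XFin ε fp fm →
          |(d2Ea ε V U (fun i : ℤ => φ (ε * i) / 2) (fun i : ℤ => -(φ (ε * i)) / 2)
                fp fm fp fm -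
              QPN α γ φ (interp ε fp) (interp ε fm)) -
            (d2Ea ε V U (fun _ : ℤ => 0) (fun _ : ℤ => 0) fp fm fp fm -
              QPN α γ (fun _ : ℝ => 0) (interp ε fp) (interp ε fm))| ≤
            C * ε * Xsq ε fp fm := by
  obtain ⟨Cᵥ, hCᵥ, hW, hWL⟩ := exists_intraplane_bounds hθ hVeven hVreg hVdecay hVlim
  obtain ⟨C, hC, hU⟩ := exists_latticeBdd hθ hUeven hUreg hUdecay hUlim
  have h01 := profile_mem hφmono hφbot hφtop
  have hin : ∀ x, φ x ∈ Set.Ioo (-1 : ℝ) 2 := fun x =>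
    ⟨by linarith [(h01 x).1], by linarith [(h01 x).2]⟩
  have hin0 : (0 : ℝ) ∈ Set.Ioo (-1 : ℝ) 2 := by norm_num
  have hγ1 : ∀ x, deriv γ (φ x) = misfitSeries U 1 (φ x) := fun x =>
    (misfit_deriv hUreg hU hγdef (hin x)).1
  have hγ2 : ∀ x, iteratedDeriv 2 γ (φ x) = misfitSeries U 2 (φ x) := fun x =>
    (misfit_deriv hUreg hU hγdef (hin x)).2
  have hγ20 : iteratedDeriv 2 γ 0 = misfitSeries U 2 0 := (misfit_deriv hUreg hU hγdef hin0).2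
  obtain ⟨S, hS⟩ : ∃ S : ℕ → ℝ, ∀ k, S k = ∑' s : ℤ, C / (1 + |(s : ℝ)|) ^ (2 + k) :=
    ⟨_, fun _ => rfl⟩
  have hS0 : ∀ k, 0 ≤ S k := fun k => by
    rw [hS]; exact tsum_nonneg fun s => by positivity
  -- the profile equation bounds `φ''`, hence makes `φ` Lipschitz
  have hφ'' : ∀ x, |iteratedDeriv 2 φ x| ≤ 2 / α * S 1 := by
    intro x
    have h1 : iteratedDeriv 2 φ x = 2 / α * deriv γ (φ x) := by
      have := hφode x
      field_simp
      linarith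
    have h2 : |misfitSeries U 1 (φ x)| ≤ S 1 := by
      rw [hS]; exact misfitSeries_bdd hU (by norm_num) (hin x)
    rw [h1, hγ1, abs_mul, abs_of_pos (by positivity : 0 < 2 / α)]
    gcongr
  obtain ⟨Λ, hΛ⟩ : ∃ Λ : ℝ, Λ = 1 + 2 / α * S 1 := ⟨_, rfl⟩
  have hΛ0 : 0 ≤ Λ := by
    have := hS0 1
    rw [hΛ]; positivity
  have hLip : ∀ x y, |φ x - φ y| ≤ Λ * |x - y| := fun x y => by
    rw [hΛ]; exact lipschitz_of_bdd hφreg h01 hφ'' x y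
  have hM : ∀ x, |iteratedDeriv 2 γ (φ x)| ≤ S 2 := fun x => by
    rw [hγ2, hS]; exact misfitSeries_bdd hU (by norm_num) (hin x)
  have hM0 : |iteratedDeriv 2 γ 0| ≤ S 2 := by
    rw [hγ20, hS]; exact misfitSeries_bdd hU (by norm_num) hin0
  have hL : ∀ x y, |iteratedDeriv 2 γ (φ x) - iteratedDeriv 2 γ (φ y)| ≤
      S 3 * Λ * |x - y| := by
    intro x y
    rw [hγ2, hγ2, mul_assoc]
    refine (misfitSeries_lipschitz hUreg hU (hin x) (hin y)).trans ?_
    rw [← hS]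
    exact mul_le_mul_of_nonneg_left (hLip x y) (hS0 3)
  have hT := latticeConst_pos
  have hS2 := hS0 2
  have hS3 := hS0 3
  obtain ⟨A, hA⟩ : ∃ A : ℝ, A = Cᵥ * Λ * latticeConst := ⟨_, rfl⟩
  obtain ⟨B, hB⟩ : ∃ B : ℝ, B = C * (2 + Λ) * latticeConst := ⟨_, rfl⟩
  have hA0 : 0 ≤ A := by rw [hA]; positivity
  have hB0 : 0 ≤ B := by rw [hB]; positivity
  refine ⟨A + 2 * B + (S 3 * Λ + 8 * S 2) + 1, by positivity, 1, one_pos, ?_⟩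
  intro ε hε hε1 fp fm hf
  have hXP := hf.1
  have hXQ := hf.2.1
  have hVd := intraplane_diff (W := iteratedDeriv 2 V)
    (up := fun i : ℤ => φ (ε * i) / 2) (um := fun i : ℤ => -(φ (ε * i)) / 2)
    hCᵥ.le hΛ0 hε hW hWL
    (strain_bound (c := 1) hε (by norm_num) h01 hLip fun i => by ring)
    (strain_bound (c := -1) hε (by norm_num) h01 hLip fun i => by ring) hXP hXQ
  have hUd := interplane_diff hC.le hΛ0 hε hε1.le hU (latticeBdd_lipschitz hUreg hU) h01 hLip hf
  have hQd := QPN_diff (α := α) hε hε1.le hM hM0 (by positivity) hL hf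
  simp only [hγ2, hγ20] at hQd
  have hP0 : 0 ≤ ∑' i : ℤ, (Ds ε 1 fp i) ^ 2 := tsum_nonneg fun i => sq_nonneg _
  have hQ0 : 0 ≤ ∑' i : ℤ, (Ds ε 1 fm i) ^ 2 := tsum_nonneg fun i => sq_nonneg _
  have hN0 : 0 ≤ ∑' i : ℤ, (fp i - fm i) ^ 2 := tsum_nonneg fun i => sq_nonneg _
  have hX : Xsq ε fp fm = ε * (∑' i : ℤ, (Ds ε 1 fp i) ^ 2 + ∑' i : ℤ, (Ds ε 1 fm i) ^ 2 +
      ∑' i : ℤ, (fp i - fm i) ^ 2) := by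
    simp only [Xsq, nsq]; ring
  simp only [d2Ea]
  generalize QPN α γ φ (interp ε fp) (interp ε fm) = q₁ at hQd ⊢
  generalize QPN α γ (fun _ => 0) (interp ε fp) (interp ε fm) = q₀ at hQd ⊢
  generalize (∑' i : ℤ, ∑' s : ℤ, if s = 0 then 0 else
        (1/2) * (iteratedDeriv 2 V ((s : ℝ) + ε * Ds ε s (fun i : ℤ => φ (ε * i) / 2) i) *
          Ds ε s fp i * Ds ε s fp i +
          iteratedDeriv 2 V ((s : ℝ) + ε * Ds ε s (fun i : ℤ => -(φ (ε * i)) / 2) i) *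
          Ds ε s fm i * Ds ε s fm i)) = v₁ at hVd ⊢
  generalize (∑' i : ℤ, ∑' s : ℤ, if s = 0 then 0 else
        (1/2) * (iteratedDeriv 2 V ((s : ℝ) + ε * Ds ε s (fun _ => 0) i) *
          Ds ε s fp i * Ds ε s fp i +
          iteratedDeriv 2 V ((s : ℝ) + ε * Ds ε s (fun _ => 0) i) *
          Ds ε s fm i * Ds ε s fm i)) = v₀ at hVd ⊢
  generalize (∑' i : ℤ, ∑' s : ℤ,
        iteratedDeriv 2 U ((s : ℝ) - 1/2 + φ (ε * ((i + s : ℤ) : ℝ)) / 2 - -(φ (ε * i)) / 2) *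
          (fp (i + s) - fm i) * (fp (i + s) - fm i)) = w₁ at hUd ⊢
  generalize (∑' i : ℤ, ∑' s : ℤ, iteratedDeriv 2 U ((s : ℝ) - 1/2 + 0 - 0) *
          (fp (i + s) - fm i) * (fp (i + s) - fm i)) = w₀ at hUd ⊢
  generalize (∑' i : ℤ, (misfitSeries U 2 (φ (ε * i)) - misfitSeries U 2 0) *
    (fp i - fm i) ^ 2) = m at hUd hQd
  generalize (∑' i : ℤ, (Ds ε 1 fp i) ^ 2) = P at *
  generalize (∑' i : ℤ, (Ds ε 1 fm i) ^ 2) = Q at *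
  generalize (∑' i : ℤ, (fp i - fm i) ^ 2) = N at *
  have hVb : |ε * (v₁ - v₀)| ≤ A * ε * Xsq ε fp fm := by
    rw [abs_mul, abs_of_pos hε, hX]
    calc ε * |v₁ - v₀| ≤ ε * (Cᵥ * Λ * ε * latticeConst * (P + Q)) := by gcongr
      _ = A * ε * (ε * (P + Q)) := by rw [hA]; ring
      _ ≤ A * ε * (ε * (P + Q + N)) := by gcongr A * ε * (ε * ?_); linarith
  have hUb : |ε * (w₁ - w₀ - m)| ≤ 2 * B * ε * Xsq ε fp fm := by
    rw [abs_mul, abs_of_pos hε, hX]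
    calc ε * |w₁ - w₀ - m| ≤ ε * (ε * (C * (2 + Λ)) * latticeConst * (N + 2 * P)) := by gcongr
      _ = B * ε * (ε * (N + 2 * P)) := by rw [hB]; ring
      _ ≤ B * ε * (ε * (2 * (P + Q + N))) := by gcongr B * ε * (ε * ?_); linarith
      _ = _ := by ring
  have hX0 : 0 ≤ ε * Xsq ε fp fm := by rw [hX]; positivity
  have e : (ε * v₁ + ε * w₁ - q₁) - (ε * v₀ + ε * w₀ - q₀) =
      ε * (v₁ - v₀) + ε * (w₁ - w₀ - m) + (ε * m - (q₁ - q₀)) := by ring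
  rw [e]
  refine (abs_add_three _ _ _).trans ?_
  linarith
end
end

section
/- Δ ≥ 0. -/
/-!
The competitor `g` with `g (i+1) - g i = 1/√N` for `0 ≤ i < N` and `0` elsewhere brings
the quadratic form as close to `0` as desired. Writing `A s = ∑ i, (g (i+s) - g i)^2`, Cauchy–Schwarz gives
`A s ≤ s^2` (`sum_sq_incr`), while the indices `0 ≤ i < N - s`, at which `g (i+s) - g i = s/√N`,
give `A s ≥ s^2 (1 - s/N)` (`ramp_lower`). After exchanging the two sums (`quad_eq`), the value at
`g` is `∑ s ≥ 2, V''(s) (A s - s^2)`, whose terms tend to `0` as `N → ∞` and are dominated by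
`s^2 |V''(s)|`; so it tends to `0` by dominated convergence. If the set of values is unbounded
above, its real `sSup` is `0` by convention and the bound is trivial.
-/

noncomputable section

/-- The set over which the stability gap `Δ` is a supremum. -/
def DeltaSet (V : ℝ → ℝ) : Set ℝ :=
  {t | ∃ g : ℤ → ℝ, Summable (fun i : ℤ => (g (i + 1) - g i) ^ 2) ∧
    (∑' i : ℤ, (g (i + 1) - g i) ^ 2) = 1 ∧
    t = ∑' i : ℤ, ∑' s : ℕ,
      if 2 ≤ s then
        iteratedDeriv 2 V (s : ℝ) *
          ((g (i + (s : ℤ)) - g i) ^ 2 - (s : ℝ) ^ 2 * (g (i + 1) - g i) ^ 2)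
      else 0}

/-- The stability gap `Δ`. -/
def Delta (V : ℝ → ℝ) : ℝ := sSup (DeltaSet V)

/-- Cauchy–Schwarz on `g (i+s) - g i = ∑ k < s, (g (i+k+1) - g (i+k))`, summed over `i`. -/
lemma sum_sq_incr (g : ℤ → ℝ) (hs : Summable (fun i : ℤ => (g (i + 1) - g i) ^ 2)) (s : ℕ) :
    Summable (fun i : ℤ => (g (i + (s : ℤ)) - g i) ^ 2) ∧
    (∑' i : ℤ, (g (i + (s : ℤ)) - g i) ^ 2) ≤ (s : ℝ) ^ 2 * ∑' i : ℤ, (g (i + 1) - g i) ^ 2 := by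
  set u : ℤ → ℝ := fun i => (g (i + 1) - g i) ^ 2 with hu
  have htel : ∀ i : ℤ, g (i + (s : ℤ)) - g i
      = ∑ k ∈ Finset.range s, (g (i + (k : ℤ) + 1) - g (i + (k : ℤ))) := by
    intro i
    have := Finset.sum_range_sub (fun k : ℕ => g (i + (k : ℤ))) s
    simp only [Nat.cast_add, Nat.cast_one, Nat.cast_zero, add_zero, ← add_assoc] at this
    exact this.symm
  have hle : ∀ i : ℤ, (g (i + (s : ℤ)) - g i) ^ 2
      ≤ (s : ℝ) * ∑ k ∈ Finset.range s, u (i + (k : ℤ)) := by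
    intro i
    rw [htel i]
    simpa using sq_sum_le_card_mul_sum_sq (s := Finset.range s)
      (f := fun k : ℕ => g (i + (k : ℤ) + 1) - g (i + (k : ℤ)))
  have hshift : ∀ k : ℕ, Summable (fun i : ℤ => u (i + (k : ℤ))) := fun k =>
    (Equiv.addRight (k : ℤ)).summable_iff.mpr hs
  have hshift' : ∀ k : ℕ, ∑' i : ℤ, u (i + (k : ℤ)) = ∑' i, u i := fun k =>
    (Equiv.addRight (k : ℤ)).tsum_eq u
  have hR : Summable (fun i : ℤ => (s : ℝ) * ∑ k ∈ Finset.range s, u (i + (k : ℤ))) :=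
    (summable_sum fun k _ => hshift k).mul_left _
  have hL := Summable.of_nonneg_of_le (fun i => sq_nonneg _) hle hR
  refine ⟨hL, (hL.tsum_le_tsum hle hR).trans (le_of_eq ?_)⟩
  rw [tsum_mul_left, Summable.tsum_finsetSum fun k _ => hshift k]
  simp only [hshift', Finset.sum_const, Finset.card_range, nsmul_eq_mul]
  ring

/-- Exchange of the two sums in the quadratic form, for `g` with normalized increments. -/
lemma quad_eq (w : ℕ → ℝ) (hw : Summable (fun s : ℕ => (s : ℝ) ^ 2 * |w s|)) (g : ℤ → ℝ)
    (hs : Summable (fun i : ℤ => (g (i + 1) - g i) ^ 2))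
    (h1 : (∑' i : ℤ, (g (i + 1) - g i) ^ 2) = 1) :
    (∑' i : ℤ, ∑' s : ℕ, if 2 ≤ s then
        w s * ((g (i + (s : ℤ)) - g i) ^ 2 - (s : ℝ) ^ 2 * (g (i + 1) - g i) ^ 2) else 0)
      = ∑' s : ℕ, if 2 ≤ s then
          w s * ((∑' i : ℤ, (g (i + (s : ℤ)) - g i) ^ 2) - (s : ℝ) ^ 2) else 0 := by
  set f : ℕ → ℤ → ℝ := fun s i => if 2 ≤ s then
    w s * ((g (i + (s : ℤ)) - g i) ^ 2 - (s : ℝ) ^ 2 * (g (i + 1) - g i) ^ 2) else 0 with hf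
  have hA := sum_sq_incr g hs
  have hB : ∀ s : ℕ, Summable (fun i : ℤ => |w s| *
      ((g (i + (s : ℤ)) - g i) ^ 2 + (s : ℝ) ^ 2 * (g (i + 1) - g i) ^ 2)) := fun s =>
    ((hA s).1.add (hs.mul_left _)).mul_left _
  have hle : ∀ s i, ‖f s i‖ ≤ |w s| *
      ((g (i + (s : ℤ)) - g i) ^ 2 + (s : ℝ) ^ 2 * (g (i + 1) - g i) ^ 2) := by
    intro s i
    simp only [hf]
    split_ifs
    · rw [Real.norm_eq_abs, abs_mul]
      refine mul_le_mul_of_nonneg_left ?_ (abs_nonneg _)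
      have h2 : 0 ≤ (g (i + (s : ℤ)) - g i) ^ 2 := sq_nonneg _
      have h3 : 0 ≤ (s : ℝ) ^ 2 * (g (i + 1) - g i) ^ 2 := by positivity
      rw [abs_le]
      constructor <;> linarith
    · rw [norm_zero]; positivity
  have hn : ∀ s, Summable (fun i => ‖f s i‖) := fun s =>
    Summable.of_nonneg_of_le (fun i => norm_nonneg _) (hle s) (hB s)
  have hsum : Summable (Function.uncurry f) := by
    refine Summable.of_norm ?_
    rw [summable_prod_of_nonneg (fun _ => norm_nonneg _)]
    refine ⟨hn, Summable.of_nonneg_of_le (fun s => tsum_nonneg fun i => norm_nonneg _) ?_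
      (hw.mul_left 2)⟩
    intro s
    refine ((hn s).tsum_le_tsum (hle s) (hB s)).trans ?_
    rw [tsum_mul_left, (hA s).1.tsum_add (hs.mul_left _), tsum_mul_left, h1]
    have h4 := (hA s).2
    rw [h1] at h4
    nlinarith [abs_nonneg (w s)]
  have hcomm : ∑' i, ∑' s, f s i = ∑' s, ∑' i, f s i := hsum.tsum_comm
  refine hcomm.trans (tsum_congr fun s => ?_)
  simp only [hf]
  split_ifs
  · rw [tsum_mul_left, (hA s).1.tsum_sub (hs.mul_left _), tsum_mul_left, h1, mul_one]
  · simp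

/-- The linear ramp of slope `1/√N` on `[0, N]`, constant outside. -/
def ramp (N : ℕ) (i : ℤ) : ℝ := ((max 0 (min i (N : ℤ)) : ℤ) : ℝ) / √(N : ℝ)

lemma ramp_incr (N : ℕ) (i : ℤ) :
    (ramp N (i + 1) - ramp N i) ^ 2
      = if i ∈ Finset.Ico (0 : ℤ) N then (1 : ℝ) / N else 0 := by
  unfold ramp
  rw [← sub_div, div_pow, Real.sq_sqrt (Nat.cast_nonneg N), ← Int.cast_sub]
  split_ifs with h
  · rw [Finset.mem_Ico] at h
    rw [show max 0 (min (i + 1) (N : ℤ)) - max 0 (min i (N : ℤ)) = 1 by omega]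
    simp
  · rw [Finset.mem_Ico] at h
    rw [show max 0 (min (i + 1) (N : ℤ)) - max 0 (min i (N : ℤ)) = 0 by omega]
    simp

lemma ramp_hasSum (N : ℕ) (hN : 0 < N) :
    HasSum (fun i : ℤ => (ramp N (i + 1) - ramp N i) ^ 2) 1 := by
  have hN' : (N : ℝ) ≠ 0 := by positivity
  have h : HasSum (fun i : ℤ => (ramp N (i + 1) - ramp N i) ^ 2)
      (∑ i ∈ Finset.Ico (0 : ℤ) N, (ramp N (i + 1) - ramp N i) ^ 2) :=
    hasSum_sum_of_ne_finset_zero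
      fun i hi => by rw [ramp_incr, if_neg hi]
  have h2 : ∑ i ∈ Finset.Ico (0 : ℤ) N, (ramp N (i + 1) - ramp N i) ^ 2 = 1 := by
    rw [Finset.sum_congr rfl fun i hi => (ramp_incr N i).trans (if_pos hi)]
    simp [hN']
  rwa [h2] at h

/-- Only the indices `0 ≤ i < N - s`, where both endpoints lie on the slope, are kept. -/
lemma ramp_lower (N : ℕ) (hN : 0 < N) (s : ℕ) :
    (s : ℝ) ^ 2 * (1 - s / N) ≤ ∑' i : ℤ, (ramp N (i + (s : ℤ)) - ramp N i) ^ 2 := by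
  have hN' : (0 : ℝ) < N := by positivity
  have hS := (sum_sq_incr (ramp N) (ramp_hasSum N hN).summable s).1
  refine le_trans ?_ (hS.sum_le_tsum (Finset.Ico (0 : ℤ) (N - s)) fun i _ => sq_nonneg _)
  have hc : ∀ i ∈ Finset.Ico (0 : ℤ) (N - s),
      (ramp N (i + (s : ℤ)) - ramp N i) ^ 2 = (s : ℝ) ^ 2 / N := by
    intro i hi
    rw [Finset.mem_Ico] at hi
    unfold ramp
    rw [← sub_div, div_pow, Real.sq_sqrt (Nat.cast_nonneg N), ← Int.cast_sub,
      show max 0 (min (i + (s : ℤ)) (N : ℤ)) - max 0 (min i (N : ℤ)) = s by omega]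
    simp
  rw [Finset.sum_congr rfl hc, Finset.sum_const, Int.card_Ico, nsmul_eq_mul]
  have hcard : (N : ℝ) - s ≤ (((N : ℤ) - s - 0).toNat : ℝ) := by
    have := Int.self_le_toNat ((N : ℤ) - s - 0)
    have h2 : (((N : ℤ) - s - 0 : ℤ) : ℝ) ≤ ((((N : ℤ) - s - 0).toNat : ℤ) : ℝ) := by
      exact_mod_cast this
    push_cast at h2
    simpa using h2
  calc (s : ℝ) ^ 2 * (1 - s / N) = ((N : ℝ) - s) * ((s : ℝ) ^ 2 / N) := by field_simp
    _ ≤ _ := mul_le_mul_of_nonneg_right hcard (by positivity)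

theorem stmt13 (V : ℝ → ℝ)
    (hVdiff : ∀ s : ℤ, 2 ≤ |s| →
      DifferentiableAt ℝ V (s : ℝ) ∧ DifferentiableAt ℝ (deriv V) (s : ℝ))
    (hVsum : Summable (fun s : ℕ => (s : ℝ) ^ 2 * |iteratedDeriv 2 V (s : ℝ)|)) :
    0 ≤ Delta V := by
  unfold Delta
  by_cases hb : BddAbove (DeltaSet V)
  swap
  · rw [Real.sSup_of_not_bddAbove hb]
  set w : ℕ → ℝ := fun s => iteratedDeriv 2 V (s : ℝ) with hw
  set A : ℕ → ℕ → ℝ := fun N s => ∑' i : ℤ, (ramp N (i + (s : ℤ)) - ramp N i) ^ 2 with hA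
  have hup : ∀ N : ℕ, 0 < N → ∀ s, A N s ≤ (s : ℝ) ^ 2 := by
    intro N hN s
    have h := (sum_sq_incr (ramp N) (ramp_hasSum N hN).summable s).2
    rwa [(ramp_hasSum N hN).tsum_eq, mul_one] at h
  have hmem : ∀ᶠ N : ℕ in Filter.atTop,
      (∑' s : ℕ, if 2 ≤ s then w s * (A N s - (s : ℝ) ^ 2) else 0) ≤ sSup (DeltaSet V) := by
    filter_upwards [Filter.eventually_gt_atTop 0] with N hN
    have h := ramp_hasSum N hN
    exact le_csSup hb ⟨ramp N, h.summable, h.tsum_eq,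
      (quad_eq w hVsum (ramp N) h.summable h.tsum_eq).symm⟩
  have hlim : Filter.Tendsto
      (fun N : ℕ => ∑' s : ℕ, if 2 ≤ s then w s * (A N s - (s : ℝ) ^ 2) else 0)
      Filter.atTop (nhds (∑' _ : ℕ, (0 : ℝ))) := by
    refine tendsto_tsum_of_dominated_convergence hVsum ?_ ?_
    · intro s
      have hAs : Filter.Tendsto (fun N : ℕ => A N s) Filter.atTop (nhds ((s : ℝ) ^ 2)) := by
        have hlow : Filter.Tendsto (fun N : ℕ => (s : ℝ) ^ 2 * (1 - (s : ℝ) / N))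
            Filter.atTop (nhds ((s : ℝ) ^ 2)) := by
          simpa using ((tendsto_const_div_atTop_nhds_zero_nat (s : ℝ)).const_sub 1).const_mul
            ((s : ℝ) ^ 2)
        refine tendsto_of_tendsto_of_tendsto_of_le_of_le' hlow tendsto_const_nhds ?_ ?_
        · filter_upwards [Filter.eventually_gt_atTop 0] with N hN using ramp_lower N hN s
        · filter_upwards [Filter.eventually_gt_atTop 0] with N hN using hup N hN s
      split_ifs
      · have h := (hAs.sub_const ((s : ℝ) ^ 2)).const_mul (w s)
        rwa [sub_self, mul_zero] at h
      · exact tendsto_const_nhds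
    · filter_upwards [Filter.eventually_gt_atTop 0] with N hN s
      split_ifs
      · rw [Real.norm_eq_abs, abs_mul, mul_comm]
        refine mul_le_mul_of_nonneg_right ?_ (abs_nonneg _)
        have h0 : 0 ≤ A N s := tsum_nonneg fun i => sq_nonneg _
        have h1 := hup N hN s
        rw [abs_le]
        constructor <;> linarith [sq_nonneg (s : ℝ)]
      · rw [norm_zero]; positivity
  rw [tsum_zero] at hlim
  exact le_of_tendsto hlim hmem
end
end
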